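/- arXiv:1707.02269 — 2 statements merged into one kernel-verified Lean document; each statement's English description precedes it below -/
import Mathlib

section
/- Let d ≥ 3 and let Ω ⊂ ℝ^d be a nonempty smooth bounded open set with connected exterior Ω^ext. Then there exists c' > 0 such that for all φ ∈ C_0^∞(closure(Ω^ext)), ∫_{Ω^ext} |∇φ|² dx ≥ c' ∫_{∂Ω} |φ|² dσ. -/
open MeasureTheory Real Set

noncomputable section

def HasSmoothBoundary {d : ℕ} (Ω : Set (EuclideanSpace ℝ (Fin d))) : Prop :=
  ∀ x ∈ frontier Ω, ∃ (U : Set (EuclideanSpace ℝ (Fin d)))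
      (f : EuclideanSpace ℝ (Fin d) → ℝ),
    IsOpen U ∧ x ∈ U ∧ ContDiff ℝ (⊤ : ℕ∞) f ∧ (∀ y ∈ U, fderiv ℝ f y ≠ 0) ∧
    Ω ∩ U = {y | y ∈ U ∧ f y < 0}

/-!
In dimension at least three, Hardy's inequality, obtained by integrating along dilation rays,
controls `φ` in `L²` far away from `Ω` by its Dirichlet energy on the exterior. Comparing `φ` with
its translates along segments inside the exterior propagates this control to the whole exterior,
because the exterior is connected. Finally a small patch of `∂Ω` is pushed transversally into the
exterior: the one-dimensional fundamental theorem of calculus along the displacement segments bounds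
`φ` on the patch by its values on the swept region and by the energy there, since surface measure
times length on the swept region is at most a multiple of volume. Compactness of `∂Ω` concludes.
-/

open Filter Module Topology
open scoped ENNReal NNReal

section LineIntegrals

lemma sq_lintegral_mul_le {α : Type*} [MeasurableSpace α] {μ : Measure α} {f g : α → ℝ≥0∞}
    (hf : AEMeasurable f μ) (hg : AEMeasurable g μ) :
    (∫⁻ a, f a * g a ∂μ) ^ 2 ≤ (∫⁻ a, f a ^ 2 ∂μ) * ∫⁻ a, g a ^ 2 ∂μ := by
  have holder := ENNReal.lintegral_mul_le_Lp_mul_Lq μ Real.HolderConjugate.two_two hf hg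
  have sq_sqrt (c : ℝ≥0∞) : (c ^ (1 / 2 : ℝ)) ^ 2 = c := by
    rw [← ENNReal.rpow_natCast, ← ENNReal.rpow_mul]
    norm_num
  calc (∫⁻ a, f a * g a ∂μ) ^ 2
      ≤ ((∫⁻ a, f a ^ (2 : ℝ) ∂μ) ^ (1 / 2 : ℝ) * (∫⁻ a, g a ^ (2 : ℝ) ∂μ) ^ (1 / 2 : ℝ)) ^ 2 := by
        gcongr
        exact holder
    _ = _ := by simp only [mul_pow, sq_sqrt, ENNReal.rpow_two]

variable {F : Type*} [NormedAddCommGroup F] [NormedSpace ℝ F] {g : ℝ → F}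

lemma enorm_sub_sq_le_lintegral_mul_lintegral_deriv (hg : ContDiff ℝ 1 g) {a b : ℝ} (hab : a ≤ b)
    {w : ℝ → ℝ≥0∞} (hw : Measurable w) (hw₀ : ∀ t, w t ≠ 0) (hw_top : ∀ t, w t ≠ ⊤) :
    ‖g b - g a‖ₑ ^ 2 ≤
      (∫⁻ t in Icc a b, (w t)⁻¹ ^ 2) * ∫⁻ t in Icc a b, (w t * ‖deriv g t‖ₑ) ^ 2 := by
  have hderiv : Measurable fun t ↦ ‖deriv g t‖ₑ := (hg.continuous_deriv le_rfl).enorm.measurable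
  calc ‖g b - g a‖ₑ ^ 2 ≤ (∫⁻ t in Icc a b, ‖deriv g t‖ₑ) ^ 2 := by
        gcongr
        exact enorm_sub_le_lintegral_deriv_of_contDiffOn_Icc hg.contDiffOn hab
    _ = (∫⁻ t in Icc a b, (w t)⁻¹ * (w t * ‖deriv g t‖ₑ)) ^ 2 := by
        simp only [← mul_assoc, ENNReal.inv_mul_cancel (hw₀ _) (hw_top _), one_mul]
    _ ≤ _ := sq_lintegral_mul_le (by fun_prop) (hw.mul hderiv).aemeasurable

lemma enorm_sub_sq_le_mul_lintegral_deriv (hg : ContDiff ℝ 1 g) {a b : ℝ} (hab : a ≤ b) :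
    ‖g b - g a‖ₑ ^ 2 ≤ ENNReal.ofReal (b - a) * ∫⁻ t in Icc a b, ‖deriv g t‖ₑ ^ 2 := by
  simpa using enorm_sub_sq_le_lintegral_mul_lintegral_deriv hg hab (w := fun _ ↦ 1)
    measurable_const (by simp) (by simp)

lemma lintegral_exp_neg_mul_Ici {b : ℝ} (hb : 0 < b) :
    ∫⁻ t in Ici (0 : ℝ), ENNReal.ofReal (exp (-b * t)) = ENNReal.ofReal b⁻¹ := by
  have hint : IntegrableOn (fun t ↦ exp (-b * t)) (Ioi 0) :=
    integrableOn_exp_mul_Ioi (neg_lt_zero.2 hb) 0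
  rw [setLIntegral_congr Ioi_ae_eq_Ici.symm, ← ofReal_integral_eq_lintegral_ofReal hint
    (.of_forall fun _ ↦ (exp_pos _).le), integral_exp_mul_Ioi (neg_lt_zero.2 hb)]
  simp

lemma enorm_sq_le_lintegral_exp_mul_deriv (hg : ContDiff ℝ 1 g) (hg₀ : ∀ᶠ t in atTop, g t = 0)
    {b : ℝ} (hb : 0 < b) :
    ‖g 0‖ₑ ^ 2 ≤ ENNReal.ofReal b⁻¹ *
      ∫⁻ t in Ici (0 : ℝ), ENNReal.ofReal (exp (b * t)) * ‖deriv g t‖ₑ ^ 2 := by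
  obtain ⟨T, hgT, hT⟩ := (hg₀.and (eventually_ge_atTop 0)).exists
  have hexp_sq (c t : ℝ) :
      ENNReal.ofReal (exp (c / 2 * t)) ^ 2 = ENNReal.ofReal (exp (c * t)) := by
    rw [← ENNReal.ofReal_pow (exp_pos _).le, ← exp_nat_mul]
    congr 2
    push_cast
    ring
  have hexp_inv (t : ℝ) :
      (ENNReal.ofReal (exp (b / 2 * t)))⁻¹ ^ 2 = ENNReal.ofReal (exp (-b * t)) := by
    rw [← ENNReal.ofReal_inv_of_pos (exp_pos _), ← exp_neg, ← hexp_sq]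
    congr 3
    ring
  have key := enorm_sub_sq_le_lintegral_mul_lintegral_deriv hg hT
    (w := fun t ↦ ENNReal.ofReal (exp (b / 2 * t))) (by fun_prop) (by simp [exp_pos]) (by simp)
  simp only [hgT, zero_sub, enorm_neg, mul_pow, hexp_sq, hexp_inv] at key
  rw [← lintegral_exp_neg_mul_Ici hb]
  refine key.trans ?_
  gcongr <;> exact Icc_subset_Ici_self

end LineIntegrals

section Curves

variable {E F : Type*} [NormedAddCommGroup E] [NormedSpace ℝ E]
  [NormedAddCommGroup F] [NormedSpace ℝ F] {φ : E → F}

lemma enorm_sq_le_add_lintegral_fderiv_translate (hφ : ContDiff ℝ 1 φ) (x v : E) {t T : ℝ}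
    (ht : t ∈ Icc 0 T) :
    ‖φ x‖ₑ ^ 2 ≤ 2 * ‖φ (x + t • v)‖ₑ ^ 2 + 2 * (ENNReal.ofReal T * ‖v‖ₑ ^ 2) *
      ∫⁻ τ in Icc 0 T, ‖fderiv ℝ φ (x + τ • v)‖ₑ ^ 2 := by
  set g : ℝ → F := fun τ ↦ φ (x + τ • v)
  have hg : ContDiff ℝ 1 g := by fun_prop
  have hderiv (τ : ℝ) : ‖deriv g τ‖ₑ ≤ ‖v‖ₑ * ‖fderiv ℝ φ (x + τ • v)‖ₑ := by
    have hline : HasDerivAt (fun τ : ℝ ↦ x + τ • v) v τ := by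
      simpa using ((hasDerivAt_id τ).smul_const v).const_add x
    have hchain := ((hφ.differentiable one_ne_zero) (x + τ • v)).hasFDerivAt.comp_hasDerivAt τ hline
    rw [show deriv g τ = _ from hchain.deriv, mul_comm]
    exact ContinuousLinearMap.le_opENorm _ _
  have hincr : ‖g t - g 0‖ₑ ^ 2 ≤ ENNReal.ofReal T * ‖v‖ₑ ^ 2 *
      ∫⁻ τ in Icc 0 T, ‖fderiv ℝ φ (x + τ • v)‖ₑ ^ 2 :=
    calc ‖g t - g 0‖ₑ ^ 2
        ≤ ENNReal.ofReal t * ∫⁻ τ in Icc 0 t, ‖deriv g τ‖ₑ ^ 2 := by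
          simpa using enorm_sub_sq_le_mul_lintegral_deriv hg ht.1
      _ ≤ ENNReal.ofReal T *
            ∫⁻ τ in Icc 0 T, (‖v‖ₑ * ‖fderiv ℝ φ (x + τ • v)‖ₑ) ^ 2 := by
          gcongr
          exacts [ht.2, ht.2, hderiv _]
      _ = _ := by
          simp only [mul_pow]
          rw [lintegral_const_mul' _ _ (by finiteness), mul_assoc]
  have htriangle : ‖g 0‖ₑ ≤ ‖g t‖ₑ + ‖g t - g 0‖ₑ := by
    simpa using enorm_sub_le (a := g t) (b := g t - g 0)
  calc ‖φ x‖ₑ ^ 2 = ‖g 0‖ₑ ^ 2 := by simp [g]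
    _ ≤ (‖g t‖ₑ + ‖g t - g 0‖ₑ) ^ 2 := by gcongr
    _ ≤ 2 * (‖g t‖ₑ ^ 2 + ‖g t - g 0‖ₑ ^ 2) := by
        simpa [one_add_one_eq_two, show (2 : ℝ) - 1 = 1 by norm_num] using
          ENNReal.rpow_add_le_mul_rpow_add_rpow ‖g t‖ₑ ‖g t - g 0‖ₑ one_le_two
    _ ≤ 2 * (‖g t‖ₑ ^ 2 + ENNReal.ofReal T * ‖v‖ₑ ^ 2 *
          ∫⁻ τ in Icc 0 T, ‖fderiv ℝ φ (x + τ • v)‖ₑ ^ 2) := by gcongr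
    _ = _ := by ring

lemma enorm_sq_le_lintegral_fderiv_dilation (hφ : ContDiff ℝ 1 φ) (hsupp : HasCompactSupport φ)
    {x : E} (hx : x ≠ 0) {b : ℝ} (hb : 0 < b) :
    ‖φ x‖ₑ ^ 2 ≤ ENNReal.ofReal b⁻¹ * ((∫⁻ t in Ici (0 : ℝ),
      ENNReal.ofReal (exp ((b + 2) * t)) * ‖fderiv ℝ φ (exp t • x)‖ₑ ^ 2) * ‖x‖ₑ ^ 2) := by
  set g : ℝ → F := fun t ↦ φ (exp t • x)
  have hg : ContDiff ℝ 1 g := by fun_prop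
  have hderiv (t : ℝ) :
      ‖deriv g t‖ₑ ≤ ‖fderiv ℝ φ (exp t • x)‖ₑ * (ENNReal.ofReal (exp t) * ‖x‖ₑ) := by
    have hchain := ((hφ.differentiable one_ne_zero) (exp t • x)).hasFDerivAt.comp_hasDerivAt t
      ((Real.hasDerivAt_exp t).smul_const x)
    rw [show deriv g t = _ from hchain.deriv]
    refine (ContinuousLinearMap.le_opENorm _ _).trans_eq ?_
    rw [enorm_smul, Real.enorm_of_nonneg (exp_pos t).le]
  have hleave : Tendsto (fun t ↦ exp t • x) atTop (cocompact E) := by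
    refine tendsto_cocompact_of_tendsto_dist_comp_atTop 0 ?_
    simpa [norm_smul] using tendsto_exp_atTop.atTop_mul_const (norm_pos_iff.2 hx)
  have hvanish : ∀ᶠ t in atTop, g t = 0 := by
    filter_upwards [hleave.eventually hsupp.isCompact.compl_mem_cocompact] with t ht
    exact (image_eq_zero_of_notMem_tsupport ht : φ (exp t • x) = 0)
  have hweight (t : ℝ) : ENNReal.ofReal (exp ((b + 2) * t)) =
      ENNReal.ofReal (exp (b * t)) * ENNReal.ofReal (exp t) ^ 2 := by
    rw [← ENNReal.ofReal_pow (exp_pos _).le, ← ENNReal.ofReal_mul (exp_pos _).le, ← exp_nat_mul,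
      ← exp_add]
    congr 2
    push_cast
    ring
  calc ‖φ x‖ₑ ^ 2 = ‖g 0‖ₑ ^ 2 := by simp [g]
    _ ≤ ENNReal.ofReal b⁻¹ *
          ∫⁻ t in Ici (0 : ℝ), ENNReal.ofReal (exp (b * t)) * ‖deriv g t‖ₑ ^ 2 :=
        enorm_sq_le_lintegral_exp_mul_deriv hg hvanish hb
    _ ≤ ENNReal.ofReal b⁻¹ * ∫⁻ t in Ici (0 : ℝ), ENNReal.ofReal (exp (b * t)) *
          (‖fderiv ℝ φ (exp t • x)‖ₑ * (ENNReal.ofReal (exp t) * ‖x‖ₑ)) ^ 2 := by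
        gcongr
        exact hderiv _
    _ = _ := by
        rw [← lintegral_mul_const' _ _ (by finiteness)]
        simp only [hweight]
        congr! 3
        ring

end Curves

section TraceBound

variable {E F : Type*} [NormedAddCommGroup E] [NormedSpace ℝ E] [MeasurableSpace E]
  [NormedAddCommGroup F] [NormedSpace ℝ F] {κ ν ν' : Measure E}

variable (F) in
/-- A trace inequality with unspecified constant: the `L²(ν)` norm of compactly supported `C¹`
functions is controlled by their Dirichlet energy with respect to `κ`. The domain of integration of
either side is encoded by restricting the measure. -/
def HasTraceBound (κ ν : Measure E) : Prop :=
  ∃ C : ℝ≥0, ∀ φ : E → F, ContDiff ℝ 1 φ → HasCompactSupport φ →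
    ∫⁻ x, ‖φ x‖ₑ ^ 2 ∂ν ≤ C * ∫⁻ x, ‖fderiv ℝ φ x‖ₑ ^ 2 ∂κ

variable (F) in
/-- The trace inequality `HasTraceBound` for the restriction of `ν` to some set of the filter `l`,
in the spirit of `MeasureTheory.Measure.FiniteAtFilter`. -/
def HasTraceBoundAtFilter (κ ν : Measure E) (l : Filter E) : Prop :=
  ∃ s ∈ l, HasTraceBound F κ (ν.restrict s)

lemma HasTraceBound.zero : HasTraceBound F κ 0 :=
  ⟨0, fun φ _ _ ↦ by simp⟩

lemma HasTraceBound.of_le_smul (h : HasTraceBound F κ ν) {c : ℝ≥0} (hν : ν' ≤ c • ν) :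
    HasTraceBound F κ ν' := by
  obtain ⟨C, hC⟩ := h
  refine ⟨c * C, fun φ hφ hsupp ↦ ?_⟩
  calc ∫⁻ x, ‖φ x‖ₑ ^ 2 ∂ν' ≤ ∫⁻ x, ‖φ x‖ₑ ^ 2 ∂(c • ν) := lintegral_mono' hν le_rfl
    _ = c * ∫⁻ x, ‖φ x‖ₑ ^ 2 ∂ν := lintegral_smul_measure _ _
    _ ≤ c * (C * ∫⁻ x, ‖fderiv ℝ φ x‖ₑ ^ 2 ∂κ) := by gcongr; exact hC φ hφ hsupp
    _ = _ := by rw [ENNReal.coe_mul, mul_assoc]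

lemma HasTraceBound.mono (h : HasTraceBound F κ ν) (hν : ν' ≤ ν) : HasTraceBound F κ ν' :=
  h.of_le_smul (c := 1) (by rwa [one_smul])

lemma HasTraceBound.add (h : HasTraceBound F κ ν) (h' : HasTraceBound F κ ν') :
    HasTraceBound F κ (ν + ν') := by
  obtain ⟨C, hC⟩ := h
  obtain ⟨C', hC'⟩ := h'
  refine ⟨C + C', fun φ hφ hsupp ↦ ?_⟩
  rw [lintegral_add_measure, ENNReal.coe_add, add_mul]
  exact add_le_add (hC φ hφ hsupp) (hC' φ hφ hsupp)

lemma HasTraceBound.restrict_of_isCompact {s : Set E} (hs : IsCompact s)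
    (h : ∀ x ∈ s, HasTraceBoundAtFilter F κ ν (𝓝[s] x)) : HasTraceBound F κ (ν.restrict s) :=
  hs.induction_on (p := fun t ↦ HasTraceBound F κ (ν.restrict t)) (by simpa using .zero)
    (fun _ _ hst ht ↦ ht.mono (Measure.restrict_mono_set ν hst))
    (fun _ _ hs ht ↦ (hs.add ht).mono (Measure.restrict_union_le _ _)) h

lemma integral_norm_sq_eq_toReal_lintegral {α G : Type*} [MeasurableSpace α]
    [NormedAddCommGroup G] {μ : Measure α} {f : α → G} (hf : AEStronglyMeasurable f μ) :
    ∫ x, ‖f x‖ ^ 2 ∂μ = (∫⁻ x, ‖f x‖ₑ ^ 2 ∂μ).toReal := by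
  rw [← integral_toReal (hf.enorm.pow_const 2) (.of_forall fun _ ↦ by finiteness)]
  simp only [ENNReal.toReal_pow, toReal_enorm]

lemma HasTraceBound.exists_integral_le [FiniteDimensional ℝ E] [BorelSpace E]
    [IsFiniteMeasureOnCompacts κ] (h : HasTraceBound F κ ν) :
    ∃ C > (0 : ℝ), ∀ φ : E → F, ContDiff ℝ 1 φ → HasCompactSupport φ →
      ∫ x, ‖φ x‖ ^ 2 ∂ν ≤ C * ∫ x, ‖fderiv ℝ φ x‖ ^ 2 ∂κ := by
  obtain ⟨C, hC⟩ := h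
  refine ⟨C + 1, add_pos_of_nonneg_of_pos C.2 one_pos, fun φ hφ hsupp ↦ ?_⟩
  have hfderiv : Continuous (fderiv ℝ φ) := hφ.continuous_fderiv one_ne_zero
  have hsq_supp : HasCompactSupport fun x ↦ ‖fderiv ℝ φ x‖ ^ 2 :=
    (hsupp.fderiv ℝ).norm.comp_left (g := fun a : ℝ ↦ a ^ 2) (zero_pow two_ne_zero)
  have hfinite : ∫⁻ x, ‖fderiv ℝ φ x‖ₑ ^ 2 ∂κ ≠ ⊤ := by
    have hint : Integrable (fun x ↦ ‖fderiv ℝ φ x‖ ^ 2) κ :=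
      (hfderiv.norm.pow 2).integrable_of_hasCompactSupport hsq_supp
    simpa only [HasFiniteIntegral, enorm_pow, enorm_norm] using hint.2.ne
  rw [integral_norm_sq_eq_toReal_lintegral hφ.continuous.aestronglyMeasurable,
    integral_norm_sq_eq_toReal_lintegral hfderiv.aestronglyMeasurable]
  calc _ ≤ (C * ∫⁻ x, ‖fderiv ℝ φ x‖ₑ ^ 2 ∂κ).toReal :=
        ENNReal.toReal_mono (by finiteness) (hC φ hφ hsupp)
    _ = C * (∫⁻ x, ‖fderiv ℝ φ x‖ₑ ^ 2 ∂κ).toReal := by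
        rw [ENNReal.toReal_mul, ENNReal.coe_toReal]
    _ ≤ _ := by
      gcongr
      exact le_add_of_nonneg_right zero_le_one

end TraceBound

section Sweep

variable {E F : Type*} [NormedAddCommGroup E] [NormedSpace ℝ E] [MeasurableSpace E]

/-- The measure swept out by translating `ν` along `v` for a time distributed according to `θ`:
the image of `ν.prod θ` under `(y, t) ↦ y + t • v`. -/
def sweep (ν : Measure E) (v : E) (θ : Measure ℝ) : Measure E :=
  (ν.prod θ).map fun p ↦ p.1 + p.2 • v

variable [FiniteDimensional ℝ E] [BorelSpace E] [NormedAddCommGroup F] [NormedSpace ℝ F]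
  {κ μ ν : Measure E} {v : E} {θ : Measure ℝ}

lemma measurable_add_smul (v : E) : Measurable fun p : E × ℝ ↦ p.1 + p.2 • v :=
  measurable_fst.add (measurable_snd.smul_const v)

lemma lintegral_sweep [SFinite θ] {f : E → ℝ≥0∞} (hf : Measurable f) :
    ∫⁻ x, f x ∂(sweep ν v θ) = ∫⁻ y, ∫⁻ t, f (y + t • v) ∂θ ∂ν := by
  rw [sweep, lintegral_map hf (measurable_add_smul v),
    lintegral_prod (fun p : E × ℝ ↦ f (p.1 + p.2 • v))
      (hf.comp (measurable_add_smul v)).aemeasurable]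

lemma sweep_mono {ν' : Measure E} {θ' : Measure ℝ} [SFinite θ'] (hν : ν ≤ ν') (hθ : θ ≤ θ') :
    sweep ν v θ ≤ sweep ν' v θ' :=
  Measure.map_mono (Measure.prod_mono hν hθ) (measurable_add_smul v)

lemma sweep_eq_smul [μ.IsAddHaarMeasure] [SFinite θ] : sweep μ v θ = θ univ • μ := by
  refine Measure.ext fun s hs ↦ ?_
  rw [sweep, Measure.map_apply (measurable_add_smul v) hs,
    Measure.prod_apply_symm (measurable_add_smul v hs)]
  simp only [preimage_preimage, measure_preimage_add_right]
  simp [mul_comm]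

lemma sweep_le_restrict [SFinite θ] {A : Set E} (hA : MeasurableSet A) {c : ℝ≥0}
    (hle : sweep ν v θ ≤ c • μ) (h : ∀ᵐ y ∂ν, ∀ᵐ t ∂θ, y + t • v ∈ A) :
    sweep ν v θ ≤ c • μ.restrict A := by
  have hA_compl : sweep ν v θ Aᶜ = 0 := by
    rw [sweep, Measure.map_apply (measurable_add_smul v) hA.compl,
      Measure.measure_prod_null (measurable_add_smul v hA.compl)]
    exact h
  calc sweep ν v θ = (sweep ν v θ).restrict A := (Measure.restrict_eq_self_of_ae_mem hA_compl).symm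
    _ ≤ (c • μ).restrict A := Measure.restrict_mono_measure hle A
    _ = c • μ.restrict A := Measure.restrict_smul _ _ _

lemma sweep_restrict_le_restrict [μ.IsAddHaarMeasure] [IsProbabilityMeasure θ] {A B : Set E}
    (hA : MeasurableSet A) (h : ∀ᵐ y ∂(μ.restrict B), ∀ᵐ t ∂θ, y + t • v ∈ A) :
    sweep (μ.restrict B) v θ ≤ μ.restrict A := by
  have hle : sweep (μ.restrict B) v θ ≤ (1 : ℝ≥0) • μ := by
    refine (sweep_mono Measure.restrict_le_self le_rfl).trans_eq ?_
    rw [sweep_eq_smul, measure_univ, one_smul, one_smul]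
  simpa using sweep_le_restrict hA hle h

lemma HasTraceBound.of_sweep [IsProbabilityMeasure θ] {T : ℝ} {c : ℝ≥0}
    (h : HasTraceBound F κ (sweep ν v θ)) (hθ : ∀ᵐ t ∂θ, t ∈ Icc 0 T)
    (hsweep : sweep ν v (volume.restrict (Icc 0 T)) ≤ c • κ) : HasTraceBound F κ ν := by
  obtain ⟨C, hC⟩ := h
  refine ⟨2 * C + 2 * (T.toNNReal * ‖v‖₊ ^ 2) * c, fun φ hφ hsupp ↦ ?_⟩
  have hφ_meas : Measurable fun x ↦ ‖φ x‖ₑ ^ 2 := (hφ.continuous.enorm.measurable).pow_const 2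
  have hfderiv_meas : Measurable fun x ↦ ‖fderiv ℝ φ x‖ₑ ^ 2 :=
    (hφ.continuous_fderiv one_ne_zero).enorm.measurable.pow_const 2
  set D : ℝ≥0∞ := ENNReal.ofReal T * ‖v‖ₑ ^ 2 with hD
  have hpoint (y : E) : ‖φ y‖ₑ ^ 2 ≤ 2 * ∫⁻ t, ‖φ (y + t • v)‖ₑ ^ 2 ∂θ +
      2 * D * ∫⁻ τ in Icc 0 T, ‖fderiv ℝ φ (y + τ • v)‖ₑ ^ 2 :=
    calc ‖φ y‖ₑ ^ 2 = ∫⁻ _, ‖φ y‖ₑ ^ 2 ∂θ := by simp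
      _ ≤ ∫⁻ t, (2 * ‖φ (y + t • v)‖ₑ ^ 2 +
            2 * D * ∫⁻ τ in Icc 0 T, ‖fderiv ℝ φ (y + τ • v)‖ₑ ^ 2) ∂θ :=
          lintegral_mono_ae <| hθ.mono fun t ht ↦
            enorm_sq_le_add_lintegral_fderiv_translate hφ y v ht
      _ = _ := by
          rw [lintegral_add_right _ measurable_const, lintegral_const_mul' _ _ (by finiteness)]
          simp
  calc ∫⁻ y, ‖φ y‖ₑ ^ 2 ∂ν
      ≤ ∫⁻ y, (2 * ∫⁻ t, ‖φ (y + t • v)‖ₑ ^ 2 ∂θ +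
          2 * D * ∫⁻ τ in Icc 0 T, ‖fderiv ℝ φ (y + τ • v)‖ₑ ^ 2) ∂ν := lintegral_mono hpoint
    _ = 2 * ∫⁻ x, ‖φ x‖ₑ ^ 2 ∂(sweep ν v θ) +
          2 * D * ∫⁻ x, ‖fderiv ℝ φ x‖ₑ ^ 2 ∂(sweep ν v (volume.restrict (Icc 0 T))) := by
        rw [lintegral_sweep hφ_meas, lintegral_sweep hfderiv_meas, lintegral_add_left,
          lintegral_const_mul' _ _ (by finiteness), lintegral_const_mul' _ _ (by finiteness)]
        exact ((hφ_meas.comp (measurable_add_smul v)).lintegral_prod_right').const_mul 2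
    _ ≤ 2 * (C * ∫⁻ x, ‖fderiv ℝ φ x‖ₑ ^ 2 ∂κ) +
          2 * D * ∫⁻ x, ‖fderiv ℝ φ x‖ₑ ^ 2 ∂(c • κ) := by
        gcongr
        exact hC φ hφ hsupp
    _ = _ := by
        rw [lintegral_smul_measure, hD, ENNReal.ofReal, enorm_eq_nnnorm]
        push_cast
        rw [ENNReal.smul_def, smul_eq_mul]
        ring

variable [μ.IsAddHaarMeasure]

lemma HasTraceBound.of_add_mem {A B t : Set E} (hA : MeasurableSet A) (hB : MeasurableSet B)
    (ht : MeasurableSet t) (h : HasTraceBound F (μ.restrict A) (μ.restrict t))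
    (hBt : ∀ y ∈ B, y + v ∈ t) (hBA : ∀ y ∈ B, ∀ τ ∈ Icc (0 : ℝ) 1, y + τ • v ∈ A) :
    HasTraceBound F (μ.restrict A) (μ.restrict B) := by
  have : IsProbabilityMeasure (volume.restrict (Icc (0 : ℝ) 1)) := ⟨by simp⟩
  refine .of_sweep (v := v) (θ := .dirac 1) (T := 1) (c := 1) (h.mono ?_) (by simp) ?_
  · refine sweep_restrict_le_restrict ht (ae_restrict_of_forall_mem hB fun y hy ↦ ?_)
    simpa using hBt y hy
  · rw [one_smul]
    exact sweep_restrict_le_restrict hA <| ae_restrict_of_forall_mem hB fun y hy ↦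
      ae_restrict_of_forall_mem measurableSet_Icc (hBA y hy)

lemma HasTraceBoundAtFilter.of_isPreconnected {A : Set E} (hA : IsOpen A)
    (hconn : IsPreconnected A) {x₀ : E} (hx₀ : x₀ ∈ A)
    (h : HasTraceBoundAtFilter F (μ.restrict A) μ (𝓝 x₀)) {x : E} (hx : x ∈ A) :
    HasTraceBoundAtFilter F (μ.restrict A) μ (𝓝 x) := by
  set u : Set E := {x | HasTraceBoundAtFilter F (μ.restrict A) μ (𝓝 x)}
  have hu : IsOpen u := isOpen_iff_mem_nhds.2 fun y ⟨t, ht, hbound⟩ ↦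
    (eventually_mem_nhds_iff.2 ht).mono fun z hz ↦ ⟨t, hz, hbound⟩
  refine hconn.subset_of_closure_inter_subset hu ⟨x₀, hx₀, h⟩ ?_ hx
  rintro x ⟨hx_closure, hxA⟩
  obtain ⟨ρ, hρ, hball⟩ := Metric.isOpen_iff.1 hA x hxA
  obtain ⟨y, ⟨t, ht, hbound⟩, hyx⟩ := Metric.mem_closure_iff.1 hx_closure (ρ / 2) (half_pos hρ)
  obtain ⟨t', ht't, ht'_open, hyt'⟩ := mem_nhds_iff.1 ht
  have hB_open : IsOpen (Metric.ball x (ρ / 2) ∩ (· + (y - x)) ⁻¹' t') :=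
    Metric.isOpen_ball.inter (ht'_open.preimage (continuous_add_const _))
  refine ⟨_, hB_open.mem_nhds ⟨Metric.mem_ball_self (half_pos hρ), by simpa using hyt'⟩, ?_⟩
  refine .of_add_mem (v := y - x) hA.measurableSet hB_open.measurableSet ht'_open.measurableSet
    (hbound.mono (Measure.restrict_mono_set μ ht't)) (fun z hz ↦ hz.2)
    fun z ⟨hz, _⟩ τ hτ ↦ hball ?_
  rw [Metric.mem_ball, dist_eq_norm] at hz ⊢
  have hv : ‖τ • (y - x)‖ ≤ ‖y - x‖ := by
    rw [norm_smul, Real.norm_of_nonneg hτ.1]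
    exact mul_le_of_le_one_left (norm_nonneg _) hτ.2
  rw [dist_comm, dist_eq_norm] at hyx
  calc ‖z + τ • (y - x) - x‖ = ‖(z - x) + τ • (y - x)‖ := by rw [add_sub_right_comm]
    _ ≤ ‖z - x‖ + ‖τ • (y - x)‖ := norm_add_le _ _
    _ < ρ := by linarith

end Sweep

section Hardy

variable {E F : Type*} [NormedAddCommGroup E] [NormedSpace ℝ E] [FiniteDimensional ℝ E]
  [MeasurableSpace E] [BorelSpace E] [NormedAddCommGroup F] [NormedSpace ℝ F]
  {μ : Measure E} [μ.IsAddHaarMeasure] {A : Set E}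

lemma setLIntegral_comp_smul_le (hA : MeasurableSet A) {c : ℝ} (hc : 0 < c)
    (hcA : ∀ x ∈ A, c • x ∈ A) {f : E → ℝ≥0∞} (hf : Measurable f) :
    ∫⁻ x in A, f (c • x) ∂μ ≤ ENNReal.ofReal (c ^ finrank ℝ E)⁻¹ * ∫⁻ x in A, f x ∂μ :=
  calc ∫⁻ x in A, f (c • x) ∂μ ≤ ∫⁻ x in (c • ·) ⁻¹' A, f (c • x) ∂μ := lintegral_mono_set hcA
    _ = ∫⁻ x in A, f x ∂(μ.map (c • ·)) := (setLIntegral_map hA hf (measurable_const_smul c)).symm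
    _ = _ := by
        rw [Measure.map_addHaar_smul μ hc.ne', abs_of_pos (by positivity), Measure.restrict_smul,
          lintegral_smul_measure, smul_eq_mul]

lemma setLIntegral_lintegral_exp_mul_comp_smul_le (hA : MeasurableSet A)
    (hA_smul : ∀ c : ℝ, 1 ≤ c → ∀ x ∈ A, c • x ∈ A) {a : ℝ} (ha : a < finrank ℝ E) {f : E → ℝ≥0∞}
    (hf : Measurable f) :
    ∫⁻ x in A, (∫⁻ t in Ici (0 : ℝ), ENNReal.ofReal (exp (a * t)) * f (exp t • x)) ∂μ ≤
      ENNReal.ofReal (finrank ℝ E - a)⁻¹ * ∫⁻ x in A, f x ∂μ := by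
  have hslice : ∀ t ∈ Ici (0 : ℝ), ∫⁻ x in A, ENNReal.ofReal (exp (a * t)) * f (exp t • x) ∂μ ≤
      ENNReal.ofReal (exp (-(finrank ℝ E - a) * t)) * ∫⁻ x in A, f x ∂μ := fun t ht ↦ by
    rw [lintegral_const_mul' _ _ (by finiteness)]
    refine (mul_le_mul_right (setLIntegral_comp_smul_le hA (exp_pos t)
      (hA_smul _ (one_le_exp ht)) hf) _).trans_eq ?_
    rw [← mul_assoc, ← ENNReal.ofReal_mul (exp_pos _).le, ← exp_nat_mul, ← exp_neg, ← exp_add]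
    congr 3
    ring
  calc _ = ∫⁻ t in Ici (0 : ℝ), (∫⁻ x in A, ENNReal.ofReal (exp (a * t)) * f (exp t • x) ∂μ) :=
        lintegral_lintegral_swap (Measurable.aemeasurable (by fun_prop))
    _ ≤ ∫⁻ t in Ici (0 : ℝ),
          ENNReal.ofReal (exp (-(finrank ℝ E - a) * t)) * ∫⁻ x in A, f x ∂μ :=
        setLIntegral_mono' measurableSet_Ici hslice
    _ = _ := by
        rw [lintegral_mul_const _ (by fun_prop), lintegral_exp_neg_mul_Ici (sub_pos.2 ha)]

lemma setLIntegral_enorm_sq_div_enorm_sq_le (hdim : 3 ≤ finrank ℝ E) (hA : MeasurableSet A)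
    (hA_smul : ∀ c : ℝ, 1 ≤ c → ∀ x ∈ A, c • x ∈ A) {φ : E → F} (hφ : ContDiff ℝ 1 φ)
    (hsupp : HasCompactSupport φ) :
    ∫⁻ x in A, ‖φ x‖ₑ ^ 2 / ‖x‖ₑ ^ 2 ∂μ ≤
      ENNReal.ofReal (4 / (finrank ℝ E - 2) ^ 2) * ∫⁻ x in A, ‖fderiv ℝ φ x‖ₑ ^ 2 ∂μ := by
  have hdim' : (3 : ℝ) ≤ finrank ℝ E := by exact_mod_cast hdim
  have : Nontrivial E := Module.nontrivial_of_finrank_pos (R := ℝ) (by lia)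
  -- This `b` minimises the resulting constant `1 / (b * (d - 2 - b))`, where `d` is the dimension.
  set b : ℝ := (finrank ℝ E - 2) / 2 with hb_def
  have hb : 0 < b := by linarith
  have hpoint : ∀ᵐ x ∂(μ.restrict A), ‖φ x‖ₑ ^ 2 / ‖x‖ₑ ^ 2 ≤ ENNReal.ofReal b⁻¹ *
      ∫⁻ t in Ici (0 : ℝ), ENNReal.ofReal (exp ((b + 2) * t)) * ‖fderiv ℝ φ (exp t • x)‖ₑ ^ 2 := by
    filter_upwards [Measure.ae_ne (μ.restrict A) 0] with x hx
    refine ENNReal.div_le_of_le_mul ?_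
    rw [mul_assoc]
    exact enorm_sq_le_lintegral_fderiv_dilation hφ hsupp hx hb
  calc ∫⁻ x in A, ‖φ x‖ₑ ^ 2 / ‖x‖ₑ ^ 2 ∂μ
      ≤ ENNReal.ofReal b⁻¹ * ∫⁻ x in A, (∫⁻ t in Ici (0 : ℝ),
          ENNReal.ofReal (exp ((b + 2) * t)) * ‖fderiv ℝ φ (exp t • x)‖ₑ ^ 2) ∂μ := by
        rw [← lintegral_const_mul' _ _ (by finiteness)]
        exact lintegral_mono_ae hpoint
    _ ≤ ENNReal.ofReal b⁻¹ * (ENNReal.ofReal (finrank ℝ E - (b + 2))⁻¹ *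
          ∫⁻ x in A, ‖fderiv ℝ φ x‖ₑ ^ 2 ∂μ) := by
        gcongr
        exact setLIntegral_lintegral_exp_mul_comp_smul_le hA hA_smul (by linarith)
          ((hφ.continuous_fderiv one_ne_zero).enorm.measurable.pow_const 2)
    _ = _ := by
        rw [← mul_assoc, ← ENNReal.ofReal_mul (inv_pos.2 hb).le,
          show (finrank ℝ E : ℝ) - (b + 2) = b by rw [hb_def]; ring, hb_def]
        congr 2
        field_simp
        norm_num

lemma HasTraceBoundAtFilter.of_lt_norm (hdim : 3 ≤ finrank ℝ E) {R : ℝ}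
    (hRA : {y | R < ‖y‖} ⊆ A) {x : E} (hx : R < ‖x‖) :
    HasTraceBoundAtFilter F (μ.restrict A) μ (𝓝 x) := by
  have hfar : IsOpen {y : E | R < ‖y‖} := isOpen_lt continuous_const continuous_norm
  set M : ℝ≥0 := ‖x‖₊ + 1
  have hM : (M : ℝ≥0∞) ^ 2 ≠ 0 := by positivity
  have hs : IsOpen ({y : E | R < ‖y‖} ∩ Metric.ball 0 M) := hfar.inter Metric.isOpen_ball
  refine ⟨_, hs.mem_nhds ⟨hx, by simp [M]⟩,
    M ^ 2 * (4 / (finrank ℝ E - 2) ^ 2 : ℝ).toNNReal, fun φ hφ hsupp ↦ ?_⟩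
  have hpoint : ∀ y ∈ {y : E | R < ‖y‖} ∩ Metric.ball 0 M,
      ‖φ y‖ₑ ^ 2 ≤ M ^ 2 * (‖φ y‖ₑ ^ 2 / ‖y‖ₑ ^ 2) := fun y ⟨_, hy⟩ ↦
    calc ‖φ y‖ₑ ^ 2 = M ^ 2 * (‖φ y‖ₑ ^ 2 / M ^ 2) :=
          (ENNReal.mul_div_cancel hM (by finiteness)).symm
      _ ≤ _ := by
          gcongr
          exact enorm_le_coe.2 (mem_ball_zero_iff.1 hy).le
  calc ∫⁻ y in {y : E | R < ‖y‖} ∩ Metric.ball 0 M, ‖φ y‖ₑ ^ 2 ∂μ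
      ≤ ∫⁻ y in {y : E | R < ‖y‖} ∩ Metric.ball 0 M, M ^ 2 * (‖φ y‖ₑ ^ 2 / ‖y‖ₑ ^ 2) ∂μ :=
        setLIntegral_mono' hs.measurableSet hpoint
    _ ≤ M ^ 2 * ∫⁻ y in {y : E | R < ‖y‖}, ‖φ y‖ₑ ^ 2 / ‖y‖ₑ ^ 2 ∂μ := by
        rw [lintegral_const_mul' _ _ (by finiteness)]
        gcongr
        exact inter_subset_left
    _ ≤ M ^ 2 * (ENNReal.ofReal (4 / (finrank ℝ E - 2) ^ 2) *
          ∫⁻ y in {y : E | R < ‖y‖}, ‖fderiv ℝ φ y‖ₑ ^ 2 ∂μ) := by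
        gcongr
        refine setLIntegral_enorm_sq_div_enorm_sq_le hdim hfar.measurableSet
          (fun c hc y hy ↦ ?_) hφ hsupp
        rw [mem_ofPred_eq, norm_smul, Real.norm_of_nonneg (by positivity)]
        exact hy.trans_le (le_mul_of_one_le_left (norm_nonneg y) hc)
    _ ≤ _ := by
        rw [ENNReal.coe_mul, ENNReal.coe_pow, mul_assoc]
        gcongr
        rfl

lemma HasTraceBound.restrict_of_isCompact_of_subset (hdim : 3 ≤ finrank ℝ E) (hA : IsOpen A)
    (hconn : IsPreconnected A) (hbdd : Bornology.IsBounded Aᶜ) {K : Set E} (hK : IsCompact K)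
    (hKA : K ⊆ A) : HasTraceBound F (μ.restrict A) (μ.restrict K) := by
  have : Nontrivial E := Module.nontrivial_of_finrank_pos (R := ℝ) (by lia)
  obtain ⟨R, hR⟩ := hbdd.exists_norm_le
  have hRA : {y | R < ‖y‖} ⊆ A := fun y hy ↦ by_contra fun hyA ↦ (hR y hyA).not_gt hy
  obtain ⟨x₀, hx₀⟩ := NormedSpace.exists_lt_norm ℝ E R
  refine .restrict_of_isCompact hK fun x hx ↦ ?_
  obtain ⟨s, hs, hbound⟩ := HasTraceBoundAtFilter.of_isPreconnected hA hconn (hRA hx₀)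
    (.of_lt_norm (F := F) (μ := μ) hdim hRA hx₀) (hKA hx)
  exact ⟨s, mem_nhdsWithin_of_mem_nhds hs, hbound⟩

end Hardy

section SurfaceMeasure

lemma map_hausdorffMeasure_restrict_le {X Y : Type*} [EMetricSpace X] [MeasurableSpace X]
    [BorelSpace X] [EMetricSpace Y] [MeasurableSpace Y] [BorelSpace Y] {f : X → Y} {K : ℝ≥0}
    {s : Set X} (hf : Measurable f) (hfs : AntilipschitzWith K (s.domRestrict f)) {d : ℝ}
    (hd : 0 ≤ d) : (μH[d].restrict s).map f ≤ K ^ d • μH[d] := by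
  refine Measure.le_iff.2 fun t ht ↦ ?_
  calc (μH[d].restrict s).map f t = μH[d] (Subtype.val '' (s.domRestrict f ⁻¹' t)) := by
        rw [Measure.map_apply hf ht, Measure.restrict_apply (hf ht), inter_comm,
          ← Subtype.image_preimage_val]
        rfl
    _ = μH[d] (s.domRestrict f ⁻¹' t) := isometry_subtype_coe.hausdorffMeasure_image (.inl hd) _
    _ ≤ K ^ d * μH[d] t := hfs.hausdorffMeasure_preimage_le hd t
    _ = (K ^ d • μH[d]) t := by
        rw [Measure.smul_apply, ENNReal.smul_def, ENNReal.coe_rpow_of_nonneg K hd, smul_eq_mul]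

variable {E H : Type*} [NormedAddCommGroup E] [NormedSpace ℝ E] {f : E → ℝ} {f' : E →L[ℝ] ℝ}
  {x v : E}

lemma exists_equiv_antilipschitzWith_snd_levelSet (hf : HasStrictFDerivAt f f' x) (hv : f' v = 1) :
    ∃ L : E ≃L[ℝ] ℝ × f'.ker, L.symm (1, 0) = v ∧ ∃ s ∈ 𝓝 x, ∃ K,
      AntilipschitzWith K ((s ∩ {y | f y = f x}).domRestrict fun y ↦ (L y).2) := by
  have hright : Function.RightInverse (ContinuousLinearMap.toSpanSingleton ℝ v) f' :=
    fun t ↦ by simp [hv]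
  let L : E ≃L[ℝ] ℝ × f'.ker := .equivOfRightInverse f' (.toSpanSingleton ℝ v) hright
  have hΦ : HasStrictFDerivAt (fun y ↦ (f y, (L y).2)) (L : E →L[ℝ] ℝ × f'.ker) x :=
    hf.prodMk (f'.projKerOfRightInverse _ hright).hasStrictFDerivAt
  obtain ⟨s, hxs, hs, hΦs⟩ := hΦ.approximates_deriv_on_open_nhds
  obtain ⟨K, hK⟩ : ∃ K, AntilipschitzWith K (s.domRestrict fun y ↦ (f y, (L y).2)) :=
    ⟨_, hΦs.antilipschitz <| L.subsingleton_or_nnnorm_symm_pos.imp_right fun hL ↦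
      NNReal.half_lt_self (inv_pos.2 hL).ne'⟩
  refine ⟨L, by simp [L], s, hs.mem_nhds hxs, K, ?_⟩
  rintro ⟨y, hys, hy⟩ ⟨z, hzs, hz⟩
  have hfyz : f y = f z := hy.trans hz.symm
  simpa [Prod.edist_eq, hfyz, Subtype.edist_eq] using hK ⟨y, hys⟩ ⟨z, hzs⟩

variable [FiniteDimensional ℝ E] [MeasurableSpace E] [BorelSpace E] (μ : Measure E)
  [μ.IsAddHaarMeasure] [NormedAddCommGroup H] [NormedSpace ℝ H] [MeasurableSpace H] [BorelSpace H]

lemma exists_sweep_hausdorffMeasure_le_of_antilipschitzWith (L : E ≃L[ℝ] ℝ × H) {s : Set E}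
    {K : ℝ≥0} (hs : AntilipschitzWith K (s.domRestrict fun y ↦ (L y).2)) :
    ∃ C : ℝ≥0, sweep (μH[finrank ℝ H].restrict s) (L.symm (1, 0)) volume ≤ C • μ := by
  have : FiniteDimensional ℝ (ℝ × H) := L.toLinearEquiv.finiteDimensional
  have : FiniteDimensional ℝ H := .of_surjective (LinearMap.snd ℝ ℝ H) Prod.snd_surjective
  set τ : Measure H := μH[finrank ℝ H]
  have hsnd : Measurable fun y ↦ (L y).2 := L.continuous.snd.measurable
  have := L.symm.isAddHaarMeasure_map ((volume : Measure ℝ).prod τ)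
  obtain ⟨c, hc⟩ : ∃ c : ℝ≥0, (volume.prod τ).map L.symm = c • μ :=
    ⟨_, Measure.isAddLeftInvariant_eq_smul _ _⟩
  refine ⟨K ^ (finrank ℝ H : ℝ) * c, Measure.le_iff.2 fun t ht ↦ ?_⟩
  have ht' : MeasurableSet (L.symm ⁻¹' t) := L.symm.continuous.measurable ht
  have hline (y : E) : volume {r : ℝ | y + r • L.symm (1, 0) ∈ t} =
      volume ((fun r : ℝ ↦ (r, (L y).2)) ⁻¹' (L.symm ⁻¹' t)) := by
    rw [← measure_preimage_add volume (L y).1 (_ ⁻¹' (L.symm ⁻¹' t))]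
    congr! 1
    ext r
    have hy : y + r • L.symm (1, 0) = L.symm ((L y).1 + r, (L y).2) :=
      L.injective (Prod.ext (by simp) (by simp))
    simp [hy]
  calc sweep (μH[finrank ℝ H].restrict s) (L.symm (1, 0)) volume t
      = ∫⁻ y in s, volume ((fun r : ℝ ↦ (r, (L y).2)) ⁻¹' (L.symm ⁻¹' t)) ∂μH[finrank ℝ H] := by
        rw [sweep, Measure.map_apply (measurable_add_smul _) ht,
          Measure.prod_apply (measurable_add_smul _ ht)]
        exact lintegral_congr hline
    _ = ∫⁻ h, volume ((fun r : ℝ ↦ (r, h)) ⁻¹' (L.symm ⁻¹' t))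
          ∂((μH[finrank ℝ H].restrict s).map fun y ↦ (L y).2) :=
        (lintegral_map (measurable_measure_prodMk_right ht') hsnd).symm
    _ ≤ ∫⁻ h, volume ((fun r : ℝ ↦ (r, h)) ⁻¹' (L.symm ⁻¹' t)) ∂(K ^ (finrank ℝ H : ℝ) • τ) :=
        lintegral_mono' (map_hausdorffMeasure_restrict_le hsnd hs (Nat.cast_nonneg _)) le_rfl
    _ = K ^ (finrank ℝ H : ℝ) • (volume.prod τ).map L.symm t := by
        rw [lintegral_smul_measure, Measure.map_apply L.symm.continuous.measurable ht,
          Measure.prod_apply_symm ht']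
    _ = _ := by rw [hc, mul_smul]; rfl

lemma exists_sweep_hausdorffMeasure_levelSet_le (hf : HasStrictFDerivAt f f' x) (hv : f' v ≠ 0) :
    ∃ s ∈ 𝓝 x, ∃ C : ℝ≥0,
      sweep (μH[(finrank ℝ E : ℝ) - 1].restrict (s ∩ {y | f y = f x})) v volume ≤ C • μ := by
  obtain ⟨L, hL, s, hs, K, hK⟩ := exists_equiv_antilipschitzWith_snd_levelSet
    (hf.const_smul (f' v)⁻¹) (v := v) (by simp [hv])
  have hdim : (finrank ℝ E : ℝ) - 1 = finrank ℝ ((f' v)⁻¹ • f').ker := by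
    rw [L.toLinearEquiv.finrank_eq, finrank_prod, finrank_self]
    simp
  rw [hdim]
  refine ⟨s, hs, ?_⟩
  simpa [hv, hL] using exists_sweep_hausdorffMeasure_le_of_antilipschitzWith μ L hK

end SurfaceMeasure

section Boundary

lemma nonpos_of_mem_closure_of_eventually {X : Type*} [TopologicalSpace X] {f : X → ℝ} {s : Set X}
    {x : X} (hf : ContinuousAt f x) (hs : ∀ᶠ y in 𝓝 x, y ∈ s ↔ f y < 0) (hx : x ∈ closure s) :
    f x ≤ 0 := by
  by_contra! hpos
  obtain ⟨y, hys, hy, hfy⟩ := ((mem_closure_iff_frequently.1 hx).and_eventually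
    (hs.and (hf.eventually_const_lt hpos))).exists
  exact hfy.not_gt (hy.1 hys)

lemma eq_zero_of_mem_frontier_of_eventually {X : Type*} [TopologicalSpace X] {f : X → ℝ}
    {s : Set X} {x : X} (hf : ContinuousAt f x) (hs : ∀ᶠ y in 𝓝 x, y ∈ s ↔ f y < 0)
    (hx : x ∈ frontier s) : f x = 0 := by
  refine (nonpos_of_mem_closure_of_eventually hf hs hx.1).antisymm ?_
  by_contra! hneg
  refine hx.2 (mem_interior_iff_mem_nhds.2 ?_)
  filter_upwards [hs, hf.eventually_lt_const hneg] with y hy hfy using hy.2 hfy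

variable {E F : Type*} [NormedAddCommGroup E] [NormedSpace ℝ E]

lemma eventually_lt_add_smul {f : E → ℝ} {f' : E →L[ℝ] ℝ} {x v : E} (hf : HasStrictFDerivAt f f' x)
    (hv : 0 < f' v) :
    ∀ᶠ p in 𝓝 (x, (0 : ℝ)), 0 < p.2 → f p.1 < f (p.1 + p.2 • v) := by
  have hpair : Tendsto (fun p : E × ℝ ↦ (p.1 + p.2 • v, p.1)) (𝓝 (x, 0)) (𝓝 (x, x)) :=
    Continuous.tendsto' (by fun_prop) _ _ (by simp)
  have hlinear : (fun p : E × ℝ ↦ p.1 + p.2 • v - p.1) =O[𝓝 (x, 0)] fun p ↦ p.2 :=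
    .of_bound ‖v‖ (.of_forall fun p ↦ by simp [norm_smul, mul_comm])
  filter_upwards [((hf.isLittleO.comp_tendsto hpair).trans_isBigO hlinear).bound (half_pos hv)]
    with ⟨y, t⟩ hbound (ht : 0 < t)
  have hbound' : |f (y + t • v) - f y - t * f' v| ≤ f' v / 2 * t := by
    simpa [abs_of_pos ht] using hbound
  linarith [(abs_le.1 hbound').1, mul_pos hv ht]

lemma eventually_add_smul_mem_compl_closure {f : E → ℝ} {f' : E →L[ℝ] ℝ} {s : Set E} {x v : E}
    (hf : HasStrictFDerivAt f f' x) (hv : 0 < f' v)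
    (hs : ∀ᶠ y in 𝓝 x, ContinuousAt f y ∧ ∀ᶠ z in 𝓝 y, z ∈ s ↔ f z < 0) :
    ∀ᶠ p in 𝓝 (x, (0 : ℝ)), 0 < p.2 → p.1 ∈ frontier s → p.1 + p.2 • v ∈ (closure s)ᶜ := by
  have hpush : Tendsto (fun p : E × ℝ ↦ p.1 + p.2 • v) (𝓝 (x, 0)) (𝓝 x) :=
    Continuous.tendsto' (by fun_prop) _ _ (by simp)
  filter_upwards [eventually_lt_add_smul hf hv, hpush.eventually hs,
    (continuous_fst.tendsto' (x, (0 : ℝ)) x rfl).eventually hs]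
    with p hlt hp hp₁ hpos hfrontier hmem
  have hzero := eq_zero_of_mem_frontier_of_eventually hp₁.1 hp₁.2 hfrontier
  have hnonpos := nonpos_of_mem_closure_of_eventually hp.1 hp.2 hmem
  linarith [hlt hpos]

/-- The set `Ω` is, near each point of its frontier, the negativity set of a `C¹` function whose
derivative does not vanish at that point. -/
def HasC1Boundary (Ω : Set E) : Prop :=
  ∀ x ∈ frontier Ω, ∃ f : E → ℝ, ContDiffAt ℝ 1 f x ∧ fderiv ℝ f x ≠ 0 ∧
    ∀ᶠ y in 𝓝 x, y ∈ Ω ↔ f y < 0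

lemma HasSmoothBoundary.hasC1Boundary {d : ℕ} {Ω : Set (EuclideanSpace ℝ (Fin d))}
    (h : HasSmoothBoundary Ω) : HasC1Boundary Ω := by
  intro x hx
  obtain ⟨U, f, hU, hxU, hf, hf', hΩ⟩ := h x hx
  refine ⟨f, hf.contDiffAt.of_le (by exact_mod_cast le_top), hf' x hxU, ?_⟩
  filter_upwards [hU.mem_nhds hxU] with y hy
  simpa [hy] using Set.ext_iff.1 hΩ y

variable {Ω : Set E}

lemma HasC1Boundary.exists_transversal (h : HasC1Boundary Ω) {x : E} (hx : x ∈ frontier Ω) :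
    ∃ (f : E → ℝ) (f' : E →L[ℝ] ℝ) (v : E), HasStrictFDerivAt f f' x ∧ f' v ≠ 0 ∧
      ∀ᶠ y in 𝓝[frontier Ω] x, f y = f x ∧ ∀ t ∈ Ioc (0 : ℝ) 2, y + t • v ∈ (closure Ω)ᶜ := by
  obtain ⟨f, hf, hf', hΩ⟩ := h x hx
  obtain ⟨w, hw⟩ : ∃ w, fderiv ℝ f x w ≠ 0 := by
    by_contra! hzero
    exact hf' (ContinuousLinearMap.ext hzero)
  set n : E := (fderiv ℝ f x w)⁻¹ • w
  have hn : fderiv ℝ f x n = 1 := by simp [n, hw]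
  have hstrict : HasStrictFDerivAt f (fderiv ℝ f x) x := hf.hasStrictFDerivAt one_ne_zero
  have hchart : ∀ᶠ y in 𝓝 x, ContinuousAt f y ∧ ∀ᶠ z in 𝓝 y, z ∈ Ω ↔ f z < 0 :=
    ((hf.eventually (by simp)).mono fun y hy ↦ hy.continuousAt).and hΩ.eventually_nhds
  have hexit : ∀ᶠ p in 𝓝 x ×ˢ 𝓝 (0 : ℝ), 0 < p.2 → p.1 ∈ frontier Ω →
      p.1 + p.2 • n ∈ (closure Ω)ᶜ := by
    rw [← nhds_prod_eq]
    exact eventually_add_smul_mem_compl_closure hstrict (hn ▸ one_pos) hchart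
  obtain ⟨p, hp, q, hq, hpq⟩ := eventually_prod_iff.1 hexit
  obtain ⟨ε, hε, hball⟩ := Metric.eventually_nhds_iff.1 hq
  refine ⟨f, fderiv ℝ f x, (ε / 3) • n, hstrict, by simp [hn, hε.ne'], ?_⟩
  have hfx := eq_zero_of_mem_frontier_of_eventually hchart.self_of_nhds.1 hΩ hx
  filter_upwards [self_mem_nhdsWithin, hp.filter_mono nhdsWithin_le_nhds,
    hchart.filter_mono nhdsWithin_le_nhds] with y hy hpy hchart_y
  refine ⟨(eq_zero_of_mem_frontier_of_eventually hchart_y.1 hchart_y.2 hy).trans hfx.symm,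
    fun t ht ↦ ?_⟩
  have hpos : 0 < t * (ε / 3) := mul_pos ht.1 (by linarith)
  rw [smul_smul]
  refine hpq hpy (hball ?_) hpos hy
  rw [dist_zero_right, Real.norm_of_nonneg hpos.le]
  nlinarith [ht.2]

variable [FiniteDimensional ℝ E] [MeasurableSpace E] [BorelSpace E] [NormedAddCommGroup F]
  [NormedSpace ℝ F] {μ : Measure E} [μ.IsAddHaarMeasure]

lemma HasC1Boundary.hasTraceBoundAtFilter (h : HasC1Boundary Ω) (hdim : 3 ≤ finrank ℝ E)
    (hbdd : Bornology.IsBounded Ω) (hconn : IsPreconnected (closure Ω)ᶜ) {x : E}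
    (hx : x ∈ frontier Ω) :
    HasTraceBoundAtFilter F (μ.restrict (closure Ω)ᶜ) μH[(finrank ℝ E : ℝ) - 1]
      (𝓝[frontier Ω] x) := by
  obtain ⟨f, f', v, hf, hv, hexit⟩ := h.exists_transversal hx
  obtain ⟨s, hs, C, hsweep⟩ := exists_sweep_hausdorffMeasure_levelSet_le μ hf hv
  obtain ⟨U, hU, hUs⟩ := mem_nhdsWithin_iff_exists_mem_nhds_inter.1
    (hexit.and (mem_nhdsWithin_of_mem_nhds hs))
  obtain ⟨N, hN, hNU, hN_compact⟩ := local_compact_nhds hU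
  set S : Set E := N ∩ frontier Ω
  have hS : IsCompact S := hN_compact.inter_right isClosed_frontier
  have hS_exit : ∀ y ∈ S, ∀ t ∈ Ioc (0 : ℝ) 2, y + t • v ∈ (closure Ω)ᶜ :=
    fun y hy ↦ (hUs ⟨hNU hy.1, hy.2⟩).1.2
  have hS_level : S ⊆ s ∩ {y | f y = f x} := fun y hy ↦
    have hyU := hUs ⟨hNU hy.1, hy.2⟩
    ⟨hyU.2, hyU.1.1⟩
  set ν : Measure E := μH[(finrank ℝ E : ℝ) - 1].restrict S
  have hswept {I : Set ℝ} {A : Set E} (hI : MeasurableSet I) (hA : MeasurableSet A)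
      (hIA : ∀ y ∈ S, ∀ t ∈ I, y + t • v ∈ A) :
      sweep ν v (volume.restrict I) ≤ C • μ.restrict A :=
    sweep_le_restrict hA ((sweep_mono (Measure.restrict_mono_set _ hS_level)
        Measure.restrict_le_self).trans hsweep) <|
      ae_restrict_of_forall_mem hS.measurableSet fun y hy ↦ ae_restrict_of_forall_mem hI (hIA y hy)
  set K : Set E := (fun p : E × ℝ ↦ p.1 + p.2 • v) '' (S ×ˢ Icc 1 2)
  have hK : IsCompact K := (hS.prod isCompact_Icc).image (by fun_prop)
  have hK_exterior : K ⊆ (closure Ω)ᶜ := by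
    rintro _ ⟨⟨y, t⟩, ⟨hy, ht⟩, rfl⟩
    exact hS_exit y hy t ⟨one_pos.trans_le ht.1, ht.2⟩
  have hbound : HasTraceBound F (μ.restrict (closure Ω)ᶜ) (μ.restrict K) :=
    .restrict_of_isCompact_of_subset hdim isClosed_closure.isOpen_compl hconn
      (by simpa using hbdd.closure) hK hK_exterior
  have : IsProbabilityMeasure (volume.restrict (Icc (1 : ℝ) 2)) := ⟨by norm_num⟩
  refine ⟨S, inter_mem (mem_nhdsWithin_of_mem_nhds hN) self_mem_nhdsWithin,
    .of_sweep (v := v) (θ := volume.restrict (Icc 1 2)) (T := 2) (c := C)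
      (hbound.of_le_smul (hswept measurableSet_Icc hK.measurableSet ?_)) ?_ ?_⟩
  · exact fun y hy t ht ↦ ⟨(y, t), ⟨hy, ht⟩, rfl⟩
  · exact ae_restrict_of_forall_mem measurableSet_Icc fun t ht ↦ ⟨zero_le_one.trans ht.1, ht.2⟩
  · rw [← Measure.restrict_congr_set Ioc_ae_eq_Icc]
    exact hswept measurableSet_Ioc isClosed_closure.isOpen_compl.measurableSet hS_exit

theorem statement1_general (μ : Measure E) [μ.IsAddHaarMeasure] (hdim : 3 ≤ finrank ℝ E)
    (hbdd : Bornology.IsBounded Ω) (hΩ : HasC1Boundary Ω) (hconn : IsPreconnected (closure Ω)ᶜ) :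
    ∃ c' > (0 : ℝ), ∀ φ : E → F, ContDiff ℝ 1 φ → HasCompactSupport φ →
      (∫ x in (closure Ω)ᶜ, ‖fderiv ℝ φ x‖ ^ 2 ∂μ) ≥
        c' * ∫ x in frontier Ω, ‖φ x‖ ^ 2 ∂μH[(finrank ℝ E : ℝ) - 1] := by
  have hfrontier : IsCompact (frontier Ω) :=
    hbdd.isCompact_closure.of_isClosed_subset isClosed_frontier frontier_subset_closure
  obtain ⟨C, hC, hbound⟩ := (HasTraceBound.restrict_of_isCompact (F := F) hfrontier fun x hx ↦
    hΩ.hasTraceBoundAtFilter (μ := μ) hdim hbdd hconn hx).exists_integral_le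
  exact ⟨C⁻¹, inv_pos.2 hC, fun φ hφ hsupp ↦ (inv_mul_le_iff₀ hC).2 (hbound φ hφ hsupp)⟩

end Boundary

/-- Let `d ≥ 3` and `Ω ⊂ ℝ^d` be a nonempty smooth bounded open set with connected exterior.
Then there is `c' > 0` such that every smooth compactly supported function `φ` on the closure
of the exterior satisfies `∫_{Ω^ext} |∇φ|² ≥ c' ∫_{∂Ω} |φ|² dσ`, the boundary integral being
with respect to the surface (`(d-1)`-dimensional Hausdorff) measure. -/
theorem statement1 (d : ℕ) (hd : 3 ≤ d) (Ω : Set (EuclideanSpace ℝ (Fin d)))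
    (hne : Ω.Nonempty) (hop : IsOpen Ω) (hbd : Bornology.IsBounded Ω)
    (hsm : HasSmoothBoundary Ω) (hconn : IsConnected ((closure Ω)ᶜ)) :
    ∃ c' > (0 : ℝ), ∀ φ : EuclideanSpace ℝ (Fin d) → ℝ,
      ContDiff ℝ (⊤ : ℕ∞) φ → HasCompactSupport φ →
      (∫ x in (closure Ω)ᶜ, ‖fderiv ℝ φ x‖ ^ 2) ≥
        c' * ∫ x in frontier Ω, (φ x) ^ 2 ∂(μH[(d : ℝ) - 1]) := by
  obtain ⟨c', hc', hbound⟩ := statement1_general (F := ℝ) volume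
    (by simpa using hd) hbd hsm.hasC1Boundary hconn.isPreconnected
  exact ⟨c', hc', fun φ hφ hsupp ↦ by
    simpa using hbound φ (hφ.of_le (by exact_mod_cast le_top)) hsupp⟩
end
end

section
/- Let Ω ⊂ ℝ² be a smooth bounded open set consisting of N disjoint simply connected components, and let A(r) = |{x ∈ Ω^ext : dist(x,∂Ω) < r}|. Then for almost every r > 0, A'(r) = |{x ∈ Ω^ext : dist(x,∂Ω) = r}| ≤ |∂Ω| + 2πN r. -/
open MeasureTheory Real Set

noncomputable section

/-!
Let `K = closure Ω`, a union of `N` continua, and let `V t` be the area of its closed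
`t`-neighbourhood.

The inequality rests on `V (t + 2 * h) + V t ≤ 2 * V (t + h) + N * (2 * π * h ^ 2)`, which replaces
Gauss–Bonnet and does not see the cut locus. Up to a factor close to `1`, a disc of radius `h` is a
sum of segments, so it suffices to bound mixed second differences of the area of `K` under adding
two segments. Slicing the plane by translates of the lattice spanned by the segments turns this
into a statement on finite subsets of `ℤ²`: an Euler characteristic never exceeds the number of
connected components. Summing the inequality over `t = 0, h, 2 * h, …` bounds the increment of `V`
near `r` by its first increment plus `2 * π * N * r * h`, and the first increment is at most
`h * (|∂Ω| + O(h))`.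

The derivative comes from normal coordinates `(s, t) ↦ γ s + t • ν s` along `∂Ω`. Every exterior
point is the image of a nearest boundary point, and this map is injective on points which the
normal ray reaches strictly before its cut time, the other nearest points forming a null set.
The change of variables formula then gives `V` as the integral of the lengths of the level sets,
and Lebesgue differentiation applies.
-/

section ParallelSets

open scoped Pointwise ENNReal NNReal Topology

/-! ### Euler characteristic on the square lattice -/

/-- The linear operator sending `c : C → ℝ` to a function on `ℤ × ℤ` whose forward difference in
the first coordinate is `c` on `C`. -/
def rowPrimitive (C : Finset (ℤ × ℤ)) : (C → ℝ) →ₗ[ℝ] (ℤ × ℤ → ℝ) :=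
  Fintype.linearCombination ℝ fun w : C =>
    indicator {z : ℤ × ℤ | (w : ℤ × ℤ).2 = z.2 ∧ (w : ℤ × ℤ).1 < z.1} 1

lemma rowPrimitive_add_sub_self {C : Finset (ℤ × ℤ)} (c : C → ℝ) (z : C) :
    rowPrimitive C c ((z : ℤ × ℤ) + (1, 0)) - rowPrimitive C c z = c z := by
  classical
  simp only [rowPrimitive, Fintype.linearCombination_apply, Finset.sum_apply, Pi.smul_apply,
    ← Finset.sum_sub_distrib, smul_eq_mul, ← mul_sub, indicator_apply, mem_ofPred_eq,
    Pi.one_apply, Prod.fst_add, Prod.snd_add, add_zero, Int.lt_add_one_iff]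
  rw [Finset.sum_eq_single z (fun w _ hw => ?_) (by simp)]
  · simp
  · have hne : ¬((w : ℤ × ℤ).2 = (z : ℤ × ℤ).2 ∧ (w : ℤ × ℤ).1 = (z : ℤ × ℤ).1) :=
      fun h => hw (Subtype.ext (Prod.ext h.2 h.1))
    have hiff : ((w : ℤ × ℤ).2 = (z : ℤ × ℤ).2 ∧ (w : ℤ × ℤ).1 ≤ (z : ℤ × ℤ).1) ↔
        ((w : ℤ × ℤ).2 = (z : ℤ × ℤ).2 ∧ (w : ℤ × ℤ).1 < (z : ℤ × ℤ).1) := by omega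
    simp only [hiff, sub_self, mul_zero]

/-- The Euler characteristic of a planar square complex is at most its number of components.
Cells are indexed by their upper right corners: `z` is the horizontal edge between the faces `z`
and `z + (0, 1)`, the vertical edge between `z` and `z + (1, 0)`, and the vertex common to the
edges `z`, `z + (1, 0)` and `z`, `z + (0, 1)`. Having at most `card ι` components is expressed by
`hZ`: a function that does not jump across an edge and vanishes at the points `Z i` is zero. -/
lemma card_faces_add_card_vertices_le {ι : Type*} [Fintype ι]
    (faces hEdges vEdges vertices : Finset (ℤ × ℤ)) (Z : ι → ℤ × ℤ)
    (hh : ∀ z ∈ vertices, z ∈ hEdges ∧ z + (1, 0) ∈ hEdges)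
    (hv : ∀ z ∈ vertices, z ∈ vEdges ∧ z + (0, 1) ∈ vEdges)
    (hZ : ∀ φ : ℤ × ℤ → ℝ, (∀ z ∈ hEdges, φ (z + (0, 1)) = φ z) →
      (∀ z ∈ vEdges, φ (z + (1, 0)) = φ z) → (∀ i, φ (Z i) = 0) → ∀ z ∈ faces, φ z = 0) :
    faces.card + vertices.card ≤ hEdges.card + vEdges.card + Fintype.card ι := by
  let extend := Function.ExtendByZero.linearMap ℝ (Subtype.val : faces → ℤ × ℤ)
  let diff (e : ℤ × ℤ) : (ℤ × ℤ → ℝ) →ₗ[ℝ] (ℤ × ℤ → ℝ) :=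
    LinearMap.funLeft ℝ ℝ (· + e) - LinearMap.id
  let jumps : (faces → ℝ) × (vertices → ℝ) →ₗ[ℝ] (hEdges → ℝ) × (vEdges → ℝ) × (ι → ℝ) :=
    (LinearMap.funLeft ℝ ℝ Subtype.val ∘ₗ
      (diff (0, 1) ∘ₗ extend).coprod (rowPrimitive vertices)).prod
    ((LinearMap.funLeft ℝ ℝ Subtype.val ∘ₗ diff (1, 0) ∘ₗ extend ∘ₗ LinearMap.fst ℝ _ _).prod
      (LinearMap.funLeft ℝ ℝ Z ∘ₗ extend ∘ₗ LinearMap.fst ℝ _ _))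
  have hinj : Function.Injective jumps := by
    rw [← LinearMap.ker_eq_bot, LinearMap.ker_eq_bot']
    rintro ⟨φ, c⟩ h
    have hjump_h : ∀ z ∈ hEdges,
        extend φ (z + (0, 1)) - extend φ z + rowPrimitive vertices c z = 0 := fun z hz =>
      congrFun (congrArg Prod.fst h) ⟨z, hz⟩
    have hjump_v : ∀ z ∈ vEdges, extend φ (z + (1, 0)) - extend φ z = 0 := fun z hz =>
      congrFun (congrArg (fun q => q.2.1) h) ⟨z, hz⟩
    have hbase : ∀ i, extend φ (Z i) = 0 := congrFun (congrArg (fun q => q.2.2) h)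
    -- Summing the four jumps around a vertex `z` leaves only the difference of the primitive.
    have hc : c = 0 := by
      ext z
      have hl := hjump_h _ (hh z z.2).1
      have hr := hjump_h _ (hh z z.2).2
      have hb := hjump_v _ (hv z z.2).1
      have ht := hjump_v _ (hv z z.2).2
      rw [add_right_comm] at ht
      have hz := rowPrimitive_add_sub_self c z
      simp only [Pi.zero_apply]
      linarith
    have hφ : ∀ z ∈ faces, extend φ z = 0 := by
      refine hZ (extend φ) (fun z hz => ?_) (fun z hz => sub_eq_zero.1 (hjump_v z hz)) hbase
      have := hjump_h z hz
      rw [hc, map_zero, Pi.zero_apply, add_zero] at this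
      exact sub_eq_zero.1 this
    exact Prod.ext (funext fun z =>
      (Subtype.val_injective.extend_apply φ 0 z).symm.trans (hφ z z.2)) hc
  have hrank := LinearMap.finrank_le_finrank_of_injective hinj
  simp only [Module.finrank_prod, Module.finrank_fintype_fun_eq_card, Fintype.card_coe] at hrank
  omega

lemma eq_ceil_or_of_sub_mem_Icc {y : ℝ} {z : ℤ} (h : (z : ℝ) - y ∈ Icc (0 : ℝ) 1) :
    z = ⌈y⌉ ∨ z = ⌈y⌉ + 1 ∧ (⌈y⌉ : ℝ) = y := by
  have hlb : ⌈y⌉ ≤ z := Int.ceil_le.2 (sub_nonneg.1 h.1)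
  have hub : z < ⌈y⌉ + 2 := by
    have : (z : ℝ) < (⌈y⌉ : ℝ) + 2 := by linarith [h.2, Int.le_ceil y, Int.ceil_lt_add_one y]
    exact_mod_cast this
  rcases (by omega : z = ⌈y⌉ ∨ z = ⌈y⌉ + 1) with rfl | rfl
  · exact Or.inl rfl
  · refine Or.inr ⟨rfl, le_antisymm ?_ (Int.le_ceil y)⟩
    have := h.2
    push_cast at this
    linarith

lemma eventually_ceil_sub_mem_Icc (y₀ : ℝ) : ∀ᶠ y in 𝓝 y₀, (⌈y⌉ : ℝ) - y₀ ∈ Icc (0 : ℝ) 1 := by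
  have hlt : ((⌈y₀⌉ - 1 : ℤ) : ℝ) < y₀ := Int.lt_ceil.1 (by omega)
  have hgt : y₀ < ((⌊y₀⌋ + 1 : ℤ) : ℝ) := Int.floor_lt.1 (by omega)
  filter_upwards [Ioo_mem_nhds hlt hgt] with y hy
  have hle : (⌈y₀⌉ : ℝ) ≤ ⌈y⌉ := by exact_mod_cast Int.sub_one_lt_iff.1 (Int.lt_ceil.2 hy.1)
  have hge : (⌈y⌉ : ℝ) ≤ ⌊y₀⌋ + 1 := by exact_mod_cast Int.ceil_le.2 hy.2.le
  exact ⟨by linarith [Int.le_ceil y₀], by linarith [Int.floor_le y₀]⟩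

/-- The inclusion `ℤ² → ℝ²`. -/
def intVec (z : ℤ × ℤ) : ℝ × ℝ := (z.1, z.2)

lemma mem_add_prod {G H : Type*} [AddCommGroup G] [AddCommGroup H] {K : Set (G × H)} {A : Set G}
    {B : Set H} {x : G × H} : x ∈ K + A ×ˢ B ↔ ∃ y ∈ K, x.1 - y.1 ∈ A ∧ x.2 - y.2 ∈ B := by
  constructor
  · rintro ⟨y, hy, w, hw, rfl⟩
    exact ⟨y, hy, by simpa using hw.1, by simpa using hw.2⟩
  · rintro ⟨y, hy, hA, hB⟩
    exact ⟨y, hy, x - y, ⟨hA, hB⟩, by simp⟩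

section GridFunction

variable {α : Type*} {K : Set (ℝ × ℝ)} {φ : ℤ × ℤ → α}

lemma eq_apply_ceil_of_mem_cell
    (hh : ∀ z, intVec z ∈ K + Icc (0 : ℝ) 1 ×ˢ {(0 : ℝ)} → φ (z + (0, 1)) = φ z)
    (hv : ∀ z, intVec z ∈ K + {(0 : ℝ)} ×ˢ Icc (0 : ℝ) 1 → φ (z + (1, 0)) = φ z)
    {y : ℝ × ℝ} (hy : y ∈ K) {z : ℤ × ℤ} (h₁ : (z.1 : ℝ) - y.1 ∈ Icc (0 : ℝ) 1)
    (h₂ : (z.2 : ℝ) - y.2 ∈ Icc (0 : ℝ) 1) : φ z = φ (⌈y.1⌉, ⌈y.2⌉) := by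
  have hceil : ∀ t : ℝ, (⌈t⌉ : ℝ) - t ∈ Icc (0 : ℝ) 1 := fun t =>
    ⟨by linarith [Int.le_ceil t], by linarith [Int.ceil_lt_add_one t]⟩
  obtain ⟨z₁, z₂⟩ := z
  trans φ (z₁, ⌈y.2⌉)
  · rcases eq_ceil_or_of_sub_mem_Icc h₂ with rfl | ⟨rfl, hy₂⟩
    · rfl
    · simpa using hh (z₁, ⌈y.2⌉) (mem_add_prod.2 ⟨y, hy, h₁, sub_eq_zero.2 hy₂⟩)
  · rcases eq_ceil_or_of_sub_mem_Icc h₁ with rfl | ⟨rfl, hy₁⟩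
    · rfl
    · simpa using hv (⌈y.1⌉, ⌈y.2⌉) (mem_add_prod.2 ⟨y, hy, sub_eq_zero.2 hy₁, hceil _⟩)

lemma apply_ceil_eq_of_isPreconnected {S : Set (ℝ × ℝ)} (hS : IsPreconnected S) (hSK : S ⊆ K)
    (hh : ∀ z, intVec z ∈ K + Icc (0 : ℝ) 1 ×ˢ {(0 : ℝ)} → φ (z + (0, 1)) = φ z)
    (hv : ∀ z, intVec z ∈ K + {(0 : ℝ)} ×ˢ Icc (0 : ℝ) 1 → φ (z + (1, 0)) = φ z)
    {y y' : ℝ × ℝ} (hy : y ∈ S) (hy' : y' ∈ S) :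
    φ (⌈y.1⌉, ⌈y.2⌉) = φ (⌈y'.1⌉, ⌈y'.2⌉) := by
  let _ : TopologicalSpace α := ⊥
  have : DiscreteTopology α := ⟨rfl⟩
  refine hS.constant (f := fun p : ℝ × ℝ => φ (⌈p.1⌉, ⌈p.2⌉)) (fun p hp => ?_) hy hy'
  refine tendsto_nhds_of_eventually_eq (nhdsWithin_le_nhds ?_)
  filter_upwards [continuous_fst.continuousAt.eventually (eventually_ceil_sub_mem_Icc p.1),
    continuous_snd.continuousAt.eventually (eventually_ceil_sub_mem_Icc p.2)] with q h₁ h₂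
  exact eq_apply_ceil_of_mem_cell hh hv (hSK hp) h₁ h₂

end GridFunction

lemma card_grid_faces_add_card_vertices_le {ι : Type*} [Fintype ι] (K : ι → Set (ℝ × ℝ))
    (hK : ∀ i, IsPreconnected (K i)) {faces hEdges vEdges vertices : Finset (ℤ × ℤ)}
    (hF : ∀ z, z ∈ faces ↔ intVec z ∈ (⋃ i, K i) + Icc (0 : ℝ) 1 ×ˢ Icc (0 : ℝ) 1)
    (hH : ∀ z, z ∈ hEdges ↔ intVec z ∈ (⋃ i, K i) + Icc (0 : ℝ) 1 ×ˢ {(0 : ℝ)})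
    (hV : ∀ z, z ∈ vEdges ↔ intVec z ∈ (⋃ i, K i) + {(0 : ℝ)} ×ˢ Icc (0 : ℝ) 1)
    (hC : ∀ z, z ∈ vertices ↔ intVec z ∈ ⋃ i, K i) :
    faces.card + vertices.card ≤ hEdges.card + vEdges.card + Fintype.card ι := by
  classical
  let ceil : ℝ × ℝ → ℤ × ℤ := fun y => (⌈y.1⌉, ⌈y.2⌉)
  refine card_faces_add_card_vertices_le faces hEdges vEdges vertices
    (fun i => if h : (K i).Nonempty then ceil h.some else 0) (fun z hz => ?_) (fun z hz => ?_)
    fun φ hφH hφV hφ z hz => ?_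
  · have hz := (hC z).1 hz
    constructor <;> exact (hH _).2 (mem_add_prod.2 ⟨_, hz, by simp [intVec], by simp [intVec]⟩)
  · have hz := (hC z).1 hz
    constructor <;> exact (hV _).2 (mem_add_prod.2 ⟨_, hz, by simp [intVec], by simp [intVec]⟩)
  · have hh := fun z hz => hφH z ((hH z).2 hz)
    have hv := fun z hz => hφV z ((hV z).2 hz)
    obtain ⟨y, hy, h₁, h₂⟩ := mem_add_prod.1 ((hF z).1 hz)
    obtain ⟨i, hi⟩ := mem_iUnion.1 hy
    have hne : (K i).Nonempty := ⟨y, hi⟩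
    calc φ z = φ (ceil y) := eq_apply_ceil_of_mem_cell hh hv hy h₁ h₂
      _ = φ (ceil hne.some) :=
        apply_ceil_eq_of_isPreconnected (hK i) (subset_iUnion K i) hh hv hi hne.some_mem
      _ = 0 := by simpa [hne] using hφ i

/-- The number of points of `ℤ²` in the translate `M - x`. -/
def latticeCount (M : Set (ℝ × ℝ)) (x : ℝ × ℝ) : ℝ≥0∞ :=
  ∑' z : ℤ × ℤ, M.indicator 1 (x + intVec z)

lemma measurable_latticeCount {M : Set (ℝ × ℝ)} (hM : MeasurableSet M) :
    Measurable (latticeCount M) :=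
  Measurable.tsum fun _ => (measurable_one.indicator hM).comp (measurable_id.add_const _)

lemma latticeCount_eq_card {M : Set (ℝ × ℝ)} {x : ℝ × ℝ} {F : Finset (ℤ × ℤ)}
    (hF : ∀ z, z ∈ F ↔ x + intVec z ∈ M) : latticeCount M x = F.card := by
  rw [latticeCount, tsum_eq_sum (s := F) fun z hz => indicator_of_notMem (mt (hF z).2 hz) _,
    Finset.sum_congr rfl fun z hz => indicator_of_mem ((hF z).1 hz) _]
  simp

lemma lintegral_latticeCount {M : Set (ℝ × ℝ)} (hM : MeasurableSet M) :
    ∫⁻ x in Ico (0 : ℝ) 1 ×ˢ Ico (0 : ℝ) 1, latticeCount M x = volume M := by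
  set Q : Set (ℝ × ℝ) := Ico (0 : ℝ) 1 ×ˢ Ico (0 : ℝ) 1
  let floor : ℝ × ℝ → ℤ × ℤ := fun x => (⌊x.1⌋, ⌊x.2⌋)
  have hfloor : Measurable floor :=
    (Int.measurable_floor.comp measurable_fst).prodMk (Int.measurable_floor.comp measurable_snd)
  have hshift : ∀ z, Measurable fun x : ℝ × ℝ => x + intVec z := fun z => by fun_prop
  have hfiber : ∀ z, (fun x => x + intVec z) ⁻¹' (floor ⁻¹' {z}) = Q := fun z => by
    ext x
    simp [Q, floor, intVec, Prod.ext_iff, Int.floor_eq_iff, mem_prod]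
  have htile : ∀ z, ∫⁻ x in Q, M.indicator 1 (x + intVec z) =
      volume.restrict M (floor ⁻¹' {z}) := fun z => by
    rw [Measure.restrict_apply (hfloor (measurableSet_singleton z)),
      ← measure_preimage_add_right volume (intVec z), preimage_inter, hfiber, inter_comm,
      ← Measure.restrict_apply (hshift z hM), ← lintegral_indicator_one (hshift z hM)]
    rfl
  simp only [latticeCount]
  rw [lintegral_tsum (f := fun z x => M.indicator 1 (x + intVec z)) fun z =>
    ((measurable_one.indicator hM).comp (hshift z)).aemeasurable, tsum_congr htile,
    ← tsum_univ fun z => volume.restrict M (floor ⁻¹' {z}),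
    tsum_measure_preimage_singleton countable_univ fun z _ => hfloor (measurableSet_singleton z),
    preimage_univ, Measure.restrict_apply_univ]

lemma finite_lattice_preimage {M : Set (ℝ × ℝ)} (hM : Bornology.IsBounded M) (x : ℝ × ℝ) :
    {z : ℤ × ℤ | x + intVec z ∈ M}.Finite := by
  obtain ⟨B, hB⟩ := hM.exists_norm_le
  have hcoord : ∀ (t : ℝ) (n : ℤ), |t + n| ≤ B → n ∈ Icc ⌊-B - t⌋ ⌈B - t⌉ := fun t n h => by
    rw [abs_le] at h
    exact ⟨Int.cast_le.1 ((Int.floor_le _).trans (by linarith : -B - t ≤ (n : ℝ))),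
      Int.cast_le.1 ((by linarith : (n : ℝ) ≤ B - t).trans (Int.le_ceil _))⟩
  refine ((finite_Icc ⌊-B - x.1⌋ ⌈B - x.1⌉).prod (finite_Icc ⌊-B - x.2⌋ ⌈B - x.2⌉)).subset ?_
  exact fun z hz => ⟨hcoord _ _ ((norm_fst_le _).trans (hB _ hz)),
    hcoord _ _ ((norm_snd_le _).trans (hB _ hz))⟩

lemma latticeCount_square_add_le {ι : Type*} [Fintype ι] {K : ι → Set (ℝ × ℝ)}
    (hc : ∀ i, IsCompact (K i)) (hp : ∀ i, IsPreconnected (K i)) (x : ℝ × ℝ) :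
    latticeCount ((⋃ i, K i) + Icc (0 : ℝ) 1 ×ˢ Icc (0 : ℝ) 1) x + latticeCount (⋃ i, K i) x ≤
      latticeCount ((⋃ i, K i) + Icc (0 : ℝ) 1 ×ˢ {(0 : ℝ)}) x +
        latticeCount ((⋃ i, K i) + {(0 : ℝ)} ×ˢ Icc (0 : ℝ) 1) x + Fintype.card ι := by
  have hK : IsCompact (⋃ i, K i) := isCompact_iUnion hc
  have hcount : ∀ B : Set (ℝ × ℝ), IsCompact B → ∃ F : Finset (ℤ × ℤ),
      (∀ z, z ∈ F ↔ intVec z ∈ (⋃ i, -x +ᵥ K i) + B) ∧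
        latticeCount ((⋃ i, K i) + B) x = F.card := fun B hB => by
    have hF := fun z => (finite_lattice_preimage (hK.add hB).isBounded x).mem_toFinset (a := z)
    refine ⟨_, fun z => ?_, latticeCount_eq_card hF⟩
    rw [hF, ← vadd_set_iUnion, vadd_add_assoc, mem_neg_vadd_set_iff]
    rfl
  obtain ⟨faces, hF, eF⟩ := hcount _ (isCompact_Icc.prod isCompact_Icc)
  obtain ⟨hEdges, hH, eH⟩ := hcount _ (isCompact_Icc.prod isCompact_singleton)
  obtain ⟨vEdges, hV, eV⟩ := hcount _ (isCompact_singleton.prod isCompact_Icc)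
  obtain ⟨vertices, hC, eC⟩ := hcount 0 isCompact_singleton
  rw [add_zero] at eC
  simp only [add_zero] at hC
  rw [eF, eH, eV, eC]
  exact_mod_cast card_grid_faces_add_card_vertices_le (fun i => -x +ᵥ K i)
    (fun i => (hp i).image _ (by fun_prop)) hF hH hV hC

lemma volume_add_square_add_volume_le {ι : Type*} [Fintype ι] {K : ι → Set (ℝ × ℝ)}
    (hc : ∀ i, IsCompact (K i)) (hp : ∀ i, IsPreconnected (K i)) :
    volume ((⋃ i, K i) + Icc (0 : ℝ) 1 ×ˢ Icc (0 : ℝ) 1) + volume (⋃ i, K i) ≤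
      volume ((⋃ i, K i) + Icc (0 : ℝ) 1 ×ˢ {(0 : ℝ)}) +
        volume ((⋃ i, K i) + {(0 : ℝ)} ×ˢ Icc (0 : ℝ) 1) + Fintype.card ι := by
  have hK : IsCompact (⋃ i, K i) := isCompact_iUnion hc
  have hI : IsCompact (Icc (0 : ℝ) 1) := isCompact_Icc
  have h0 : IsCompact {(0 : ℝ)} := isCompact_singleton
  have hcard : ∫⁻ _ in Ico (0 : ℝ) 1 ×ˢ Ico (0 : ℝ) 1, (Fintype.card ι : ℝ≥0∞) =
      Fintype.card ι := by
    rw [setLIntegral_const, Measure.volume_eq_prod, Measure.prod_prod]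
    simp
  rw [← lintegral_latticeCount (hK.add (hI.prod hI)).measurableSet,
    ← lintegral_latticeCount hK.measurableSet,
    ← lintegral_latticeCount (hK.add (hI.prod h0)).measurableSet,
    ← lintegral_latticeCount (hK.add (h0.prod hI)).measurableSet, ← hcard,
    ← lintegral_add_right _ (measurable_latticeCount hK.measurableSet),
    ← lintegral_add_right _ (measurable_latticeCount (hK.add (h0.prod hI)).measurableSet),
    ← lintegral_add_right _ measurable_const]
  exact lintegral_mono (latticeCount_square_add_le hc hp)

section MixedDifference

variable {N : ℕ}

/-- `S` is a union of `N` (possibly empty) compact preconnected sets. -/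
def IsUnionOfContinua {X : Type*} [TopologicalSpace X] (N : ℕ) (S : Set X) : Prop :=
  ∃ K : Fin N → Set X, (∀ i, IsCompact (K i)) ∧ (∀ i, IsPreconnected (K i)) ∧ S = ⋃ i, K i

namespace IsUnionOfContinua

lemma isCompact {X : Type*} [TopologicalSpace X] {S : Set X} (h : IsUnionOfContinua N S) :
    IsCompact S := by
  obtain ⟨K, hc, -, rfl⟩ := h
  exact isCompact_iUnion hc

lemma add {G : Type*} [TopologicalSpace G] [Add G] [ContinuousAdd G] {S T : Set G}
    (h : IsUnionOfContinua N S) (hT : IsCompact T) (hT' : IsPreconnected T) :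
    IsUnionOfContinua N (S + T) := by
  obtain ⟨K, hc, hp, rfl⟩ := h
  refine ⟨fun i => K i + T, fun i => (hc i).add hT, fun i => ?_, iUnion_add _ _⟩
  have himage : K i + T = (fun p : G × G => p.1 + p.2) '' K i ×ˢ T := add_image_prod.symm
  simp only [himage]
  exact ((hp i).prod hT').image _ continuous_add.continuousOn

end IsUnionOfContinua

lemma isCompact_segment {E : Type*} [AddCommGroup E] [Module ℝ E] [TopologicalSpace E]
    [ContinuousAdd E] [ContinuousSMul ℝ E] (a b : E) : IsCompact (segment ℝ a b) := by
  rw [segment_eq_image]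
  exact isCompact_Icc.image (by fun_prop)

lemma mem_segment_or_sub_mem_segment {E : Type*} [AddCommGroup E] [Module ℝ E] {a z : E}
    (hz : z ∈ segment ℝ 0 a + segment ℝ 0 a) : z ∈ segment ℝ 0 a ∨ z - a ∈ segment ℝ 0 a := by
  simp only [segment_eq_image, smul_zero, zero_add] at hz ⊢
  obtain ⟨_, ⟨s, hs, rfl⟩, _, ⟨t, ht, rfl⟩, rfl⟩ := hz
  rcases le_total (s + t) 1 with hst | hst
  · exact Or.inl ⟨s + t, ⟨add_nonneg hs.1 ht.1, hst⟩, add_smul s t a⟩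
  · exact Or.inr ⟨s + t - 1, ⟨by linarith, by linarith [hs.2, ht.2]⟩, by module⟩

lemma measureReal_add_segment_add_segment_self_le {E : Type*} [NormedAddCommGroup E]
    [NormedSpace ℝ E] [MeasurableSpace E] [BorelSpace E] {μ : Measure E}
    [μ.IsAddRightInvariant] [IsFiniteMeasureOnCompacts μ] {S : Set E} (hS : IsCompact S) (a : E) :
    μ.real (S + segment ℝ 0 a + segment ℝ 0 a) + μ.real S ≤
      μ.real (S + segment ℝ 0 a) + μ.real (S + segment ℝ 0 a) := by
  set T := S + segment ℝ 0 a
  have hT : IsCompact T := hS.add (isCompact_segment 0 a)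
  have hU : IsCompact (T + segment ℝ 0 a) := hT.add (isCompact_segment 0 a)
  have h0 : (0 : E) ∈ segment ℝ 0 a := left_mem_segment ℝ 0 a
  -- What the second segment adds is contained in the translate by `a` of what the first one added.
  have hsub : (T + segment ℝ 0 a) \ T ⊆ (fun x => x - a) ⁻¹' (T \ S) := by
    rintro x ⟨hx, hxT⟩
    rw [add_assoc] at hx
    obtain ⟨s, hs, z, hz, rfl⟩ := hx
    have hz' := (mem_segment_or_sub_mem_segment hz).resolve_left
      fun h => hxT (add_mem_add hs h)
    refine ⟨?_, fun h => hxT ?_⟩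
    · simpa only [add_sub_assoc] using add_mem_add hs hz'
    · simpa using add_mem_add h (right_mem_segment ℝ 0 a)
  have hle : μ.real ((T + segment ℝ 0 a) \ T) ≤ μ.real (T \ S) := by
    refine ENNReal.toReal_mono ((measure_mono sdiff_subset).trans_lt hT.measure_lt_top).ne ?_
    simpa only [sub_eq_add_neg, measure_preimage_add_right] using measure_mono (μ := μ) hsub
  rw [measureReal_sdiff (subset_add_left T h0) hT.measurableSet hU.measure_lt_top.ne,
    measureReal_sdiff (subset_add_left S h0) hS.measurableSet hT.measure_lt_top.ne] at hle
  linarith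

lemma IsUnionOfContinua.measure_add_segment_add_segment_le {E : Type*} [NormedAddCommGroup E]
    [NormedSpace ℝ E] [MeasurableSpace E] {μ : Measure E} {S : Set E}
    (h : IsUnionOfContinua N S) (L : (ℝ × ℝ) ≃L[ℝ] E) {c : ℝ≥0∞}
    (hL : ∀ s, μ (L '' s) = c * volume s) :
    μ (S + segment ℝ 0 (L (1, 0)) + segment ℝ 0 (L (0, 1))) + μ S ≤
      μ (S + segment ℝ 0 (L (1, 0))) + μ (S + segment ℝ 0 (L (0, 1))) + N * c := by
  obtain ⟨K, hc, hp, rfl⟩ := h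
  have hK : ⋃ i, K i = L '' ⋃ i, L ⁻¹' K i := by
    rw [← preimage_iUnion, image_preimage_eq _ L.surjective]
  have hseg : ∀ v, segment ℝ 0 (L v) = L '' segment ℝ 0 v := fun v => by
    simpa using (image_segment ℝ (L : ℝ × ℝ →ₗ[ℝ] E).toAffineMap 0 v).symm
  have h₁ : segment ℝ 0 ((1, 0) : ℝ × ℝ) = Icc (0 : ℝ) 1 ×ˢ {0} := by
    rw [segment_eq_image]; ext; simp [Prod.ext_iff, eq_comm]
  have h₂ : segment ℝ 0 ((0, 1) : ℝ × ℝ) = {0} ×ˢ Icc (0 : ℝ) 1 := by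
    rw [segment_eq_image]; ext; simp [Prod.ext_iff, eq_comm, and_comm]
  have hsq : Icc (0 : ℝ) 1 ×ˢ Icc (0 : ℝ) 1 = Icc (0 : ℝ) 1 ×ˢ {0} + {0} ×ˢ Icc (0 : ℝ) 1 := by
    rw [prod_add_prod_comm]; simp
  have hmain := volume_add_square_add_volume_le
    (fun i => L.toHomeomorph.isCompact_preimage.2 (hc i))
    fun i => L.toHomeomorph.isPreconnected_preimage.2 (hp i)
  rw [Fintype.card_fin] at hmain
  simp only [hseg, h₁, h₂]
  rw [hK, add_assoc, ← image_add L, ← hsq, ← image_add L, ← image_add L, ← image_add L]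
  simp only [hL, mul_comm (N : ℝ≥0∞), ← mul_add]
  exact mul_le_mul_right hmain c

end MixedDifference

/-- The Euclidean plane. -/
abbrev E2 := EuclideanSpace ℝ (Fin 2)

/-- The identification of the Euclidean plane with `ℝ × ℝ` (which carries the sup norm). -/
def coordE : E2 ≃L[ℝ] ℝ × ℝ :=
  (EuclideanSpace.equiv (Fin 2) ℝ).trans (ContinuousLinearEquiv.finTwoArrow ℝ ℝ)

lemma coordE_apply (x : E2) : coordE x = (x 0, x 1) := rfl

lemma measurePreserving_coordE : MeasurePreserving coordE :=
  (volume_preserving_finTwoArrow ℝ).comp (PiLp.volume_preserving_ofLp (Fin 2))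

lemma volume_coordE_image (s : Set E2) : volume (coordE '' s) = volume s := by
  rw [← measurePreserving_coordE.measure_preimage_emb coordE.toHomeomorph.measurableEmbedding,
    preimage_image_eq _ coordE.injective]

/-- The signed area of the parallelogram spanned by `a` and `b`. -/
def det2 (a b : E2) : ℝ := a 0 * b 1 - a 1 * b 0

/-- The linear map of `ℝ × ℝ` sending the standard basis to the coordinates of `a` and `b`. -/
def frameMap (a b : E2) : (ℝ × ℝ) →L[ℝ] (ℝ × ℝ) :=
  (ContinuousLinearMap.toSpanSingleton ℝ (coordE a)).coprod
    (ContinuousLinearMap.toSpanSingleton ℝ (coordE b))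

lemma frameMap_apply (a b : E2) (p : ℝ × ℝ) :
    frameMap a b p = coordE (p.1 • a + p.2 • b) := by
  simp [frameMap]

lemma det_frameMap (a b : E2) : (frameMap a b).det = det2 a b := by
  have hmatrix : (frameMap a b : (ℝ × ℝ) →ₗ[ℝ] (ℝ × ℝ)) =
      Matrix.toLin (Module.Basis.finTwoProd ℝ) (Module.Basis.finTwoProd ℝ)
        !![a 0, b 0; a 1, b 1] := by
    refine LinearMap.ext fun p => ?_
    rw [Matrix.toLin_finTwoProd_apply]
    simp [frameMap_apply, coordE_apply, mul_comm]
  rw [ContinuousLinearMap.det, hmatrix, LinearMap.det_toLin, Matrix.det_fin_two_of, det2]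
  ring

lemma exists_equiv_volume_image_of_det2_ne_zero {a b : E2} (hab : det2 a b ≠ 0) :
    ∃ L : (ℝ × ℝ) ≃L[ℝ] E2, L (1, 0) = a ∧ L (0, 1) = b ∧
      ∀ s, volume (L '' s) = ENNReal.ofReal |det2 a b| * volume s := by
  rw [← det_frameMap] at hab ⊢
  refine ⟨((frameMap a b).toContinuousLinearEquivOfDetNeZero hab).trans coordE.symm, ?_, ?_,
    fun s => ?_⟩
  · simp [frameMap_apply]
  · simp [frameMap_apply]
  · rw [← Measure.addHaar_image_continuousLinearMap, ← volume_coordE_image, image_image]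
    simp

lemma IsUnionOfContinua.volumeReal_add_segment_add_segment_le {N : ℕ} {S : Set E2}
    (h : IsUnionOfContinua N S) {a b : E2} (hab : a = b ∨ det2 a b ≠ 0) :
    volume.real (S + segment ℝ 0 a + segment ℝ 0 b) + volume.real S ≤
      volume.real (S + segment ℝ 0 a) + volume.real (S + segment ℝ 0 b) + N * |det2 a b| := by
  rcases hab with rfl | hab
  · simpa [det2, mul_comm] using measureReal_add_segment_add_segment_self_le h.isCompact a
  obtain ⟨L, rfl, rfl, hvol⟩ := exists_equiv_volume_image_of_det2_ne_zero hab
  have hfin : ∀ {T : Set E2}, IsCompact T → volume T ≠ ⊤ := fun hT => hT.measure_lt_top.ne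
  set a := L (1, 0)
  set b := L (0, 1)
  have hcompact : ∀ c, IsCompact (S + segment ℝ 0 c) := fun c =>
    h.isCompact.add (isCompact_segment 0 c)
  have hsum : volume (S + segment ℝ 0 a) + volume (S + segment ℝ 0 b) ≠ ⊤ :=
    ENNReal.add_ne_top.2 ⟨hfin (hcompact a), hfin (hcompact b)⟩
  have hN : (N : ℝ≥0∞) * ENNReal.ofReal |det2 a b| ≠ ⊤ :=
    ENNReal.mul_ne_top (ENNReal.natCast_ne_top N) ENNReal.ofReal_ne_top
  have hle := ENNReal.toReal_mono (ENNReal.add_ne_top.2 ⟨hsum, hN⟩)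
    (h.measure_add_segment_add_segment_le L hvol)
  rw [ENNReal.toReal_add (hfin ((hcompact a).add (isCompact_segment 0 b))) (hfin h.isCompact),
    ENNReal.toReal_add hsum hN, ENNReal.toReal_add (hfin (hcompact a)) (hfin (hcompact b))] at hle
  simpa [Measure.real] using hle

/-! ### Zonotopes -/

section Zonotope

variable {ι E : Type*} [AddCommGroup E] [Module ℝ E]

/-- The zonotope with generators `a k`, `k ∈ s`: the Minkowski sum of the segments from `0` to
`a k`. Its centre of symmetry is half the sum of its generators. -/
def zonotope (s : Finset ι) (a : ι → E) : Set E := ∑ k ∈ s, segment ℝ 0 (a k)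

lemma zonotope_empty (a : ι → E) : zonotope ∅ a = 0 := Finset.sum_empty

lemma zonotope_cons {s : Finset ι} {i : ι} (hi : i ∉ s) (a : ι → E) :
    zonotope (s.cons i hi) a = segment ℝ 0 (a i) + zonotope s a := Finset.sum_cons hi

lemma mem_zonotope {s : Finset ι} {a : ι → E} {z : E} :
    z ∈ zonotope s a ↔ ∃ t : ι → ℝ, (∀ k ∈ s, t k ∈ Icc 0 1) ∧ ∑ k ∈ s, t k • a k = z := by
  simp only [zonotope, mem_finsetSum, segment_eq_image, smul_zero, zero_add]
  constructor
  · rintro ⟨g, hg, rfl⟩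
    choose! t ht htg using fun k (hk : k ∈ s) => hg hk
    exact ⟨t, ht, Finset.sum_congr rfl htg⟩
  · rintro ⟨t, ht, rfl⟩
    exact ⟨fun k => t k • a k, fun hk => ⟨t _, ht _ hk, rfl⟩, rfl⟩

lemma convex_zonotope (s : Finset ι) (a : ι → E) : Convex ℝ (zonotope s a) :=
  convex_sum _ fun k _ => convex_segment 0 (a k)

lemma isCompact_zonotope [TopologicalSpace E] [ContinuousAdd E] [ContinuousSMul ℝ E]
    (s : Finset ι) (a : ι → E) : IsCompact (zonotope s a) := by
  induction s using Finset.cons_induction with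
  | empty => simp [zonotope_empty, ← singleton_zero]
  | cons i s hi ih => exact zonotope_cons hi a ▸ (isCompact_segment 0 (a i)).add ih

lemma sub_half_sum_eq (s : Finset ι) (a : ι → E) (t : ι → ℝ) :
    ∑ k ∈ s, t k • a k - (1 / 2 : ℝ) • ∑ k ∈ s, a k = ∑ k ∈ s, (t k - 1 / 2) • a k := by
  simp only [sub_smul, Finset.sum_sub_distrib, Finset.smul_sum]

end Zonotope

section ZonotopeBall

variable {ι E : Type*} [NormedAddCommGroup E] [InnerProductSpace ℝ E] {s : Finset ι} {a : ι → E}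

lemma inner_sub_half_sum_le_of_mem_zonotope {z : E} (hz : z ∈ zonotope s a) (u : E) :
    inner ℝ u (z - (1 / 2 : ℝ) • ∑ k ∈ s, a k) ≤ 1 / 2 * ∑ k ∈ s, |inner ℝ u (a k)| := by
  obtain ⟨t, ht, rfl⟩ := mem_zonotope.1 hz
  rw [sub_half_sum_eq, inner_sum, Finset.mul_sum]
  refine Finset.sum_le_sum fun k hk => ?_
  rw [inner_smul_right]
  have htk : |t k - 1 / 2| ≤ 1 / 2 := by
    rw [abs_le]; constructor <;> linarith [(ht k hk).1, (ht k hk).2]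
  calc (t k - 1 / 2) * inner ℝ u (a k) ≤ |t k - 1 / 2| * |inner ℝ u (a k)| := by
        rw [← abs_mul]; exact le_abs_self _
    _ ≤ 1 / 2 * |inner ℝ u (a k)| := by gcongr

lemma exists_mem_zonotope_inner_sub_half_sum_eq (s : Finset ι) (a : ι → E) (u : E) :
    ∃ z ∈ zonotope s a,
      inner ℝ u (z - (1 / 2 : ℝ) • ∑ k ∈ s, a k) = 1 / 2 * ∑ k ∈ s, |inner ℝ u (a k)| := by
  classical
  refine ⟨∑ k ∈ s, (if 0 ≤ inner ℝ u (a k) then (1 : ℝ) else 0) • a k,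
    mem_zonotope.2 ⟨_, fun k _ => ?_, rfl⟩, ?_⟩
  · split_ifs <;> simp
  · rw [sub_half_sum_eq, inner_sum, Finset.mul_sum]
    refine Finset.sum_congr rfl fun k _ => ?_
    rw [inner_smul_right]
    split_ifs with h
    · rw [abs_of_nonneg h]; ring
    · rw [abs_of_neg (not_le.1 h)]; ring

lemma zonotope_subset_closedBall {R : ℝ} (hR : 0 ≤ R)
    (h : ∀ u, ∑ k ∈ s, |inner ℝ u (a k)| ≤ 2 * R * ‖u‖) :
    zonotope s a ⊆ Metric.closedBall ((1 / 2 : ℝ) • ∑ k ∈ s, a k) R := by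
  intro z hz
  rw [mem_closedBall_iff_norm]
  set w := z - (1 / 2 : ℝ) • ∑ k ∈ s, a k with hw
  have hww := inner_sub_half_sum_le_of_mem_zonotope hz w
  rw [← hw, real_inner_self_eq_norm_sq] at hww
  rcases (norm_nonneg w).eq_or_lt with h0 | hpos
  · rwa [← h0]
  · refine le_of_mul_le_mul_right ?_ hpos
    linarith [h w]

lemma closedBall_subset_zonotope [CompleteSpace E] {r : ℝ}
    (h : ∀ u, 2 * r * ‖u‖ ≤ ∑ k ∈ s, |inner ℝ u (a k)|) :
    Metric.closedBall ((1 / 2 : ℝ) • ∑ k ∈ s, a k) r ⊆ zonotope s a := by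
  intro x hx
  by_contra hxz
  obtain ⟨f, c, hfz, hfx⟩ := geometric_hahn_banach_closed_point (convex_zonotope s a)
    (isCompact_zonotope s a).isClosed hxz
  obtain ⟨u, rfl⟩ := (InnerProductSpace.toDual ℝ E).surjective f
  simp only [InnerProductSpace.toDual_apply_apply] at hfz hfx
  obtain ⟨z, hz, hzu⟩ := exists_mem_zonotope_inner_sub_half_sum_eq s a u
  rw [mem_closedBall_iff_norm] at hx
  have hxu : inner ℝ u (x - (1 / 2 : ℝ) • ∑ k ∈ s, a k) ≤ ‖u‖ * r :=
    (real_inner_le_norm _ _).trans (by gcongr)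
  rw [inner_sub_right] at hzu hxu
  linarith [hfz z hz, h u]

end ZonotopeBall

section Doubling

variable {N : ℕ} {S : Set E2} {ι : Type*} {s t : Finset ι} {a : ι → E2}

lemma IsUnionOfContinua.add_zonotope (h : IsUnionOfContinua N S) (s : Finset ι) (a : ι → E2) :
    IsUnionOfContinua N (S + zonotope s a) :=
  h.add (isCompact_zonotope s a) (convex_zonotope s a).isPreconnected

lemma IsUnionOfContinua.volumeReal_add_zonotope_add_segment_le (h : IsUnionOfContinua N S) {b : E2}
    (hab : ∀ k ∈ s, a k = b ∨ det2 (a k) b ≠ 0) :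
    volume.real (S + zonotope s a + segment ℝ 0 b) + volume.real S ≤
      volume.real (S + zonotope s a) + volume.real (S + segment ℝ 0 b) +
        ∑ k ∈ s, N * |det2 (a k) b| := by
  induction s using Finset.cons_induction with
  | empty => simp [zonotope_empty, add_comm]
  | cons i s hi ih =>
    rw [Finset.forall_mem_cons] at hab
    have hstep := (h.add_zonotope s a).volumeReal_add_segment_add_segment_le hab.1
    rw [zonotope_cons, Finset.sum_cons, add_comm (segment ℝ 0 (a i)), ← add_assoc S]
    linarith [ih hab.2]

lemma IsUnionOfContinua.volumeReal_add_zonotope_add_zonotope_le (h : IsUnionOfContinua N S)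
    (hab : ∀ j ∈ t, ∀ k ∈ s, a k = a j ∨ det2 (a k) (a j) ≠ 0) :
    volume.real (S + zonotope s a + zonotope t a) + volume.real S ≤
      volume.real (S + zonotope s a) + volume.real (S + zonotope t a) +
        ∑ j ∈ t, ∑ k ∈ s, N * |det2 (a k) (a j)| := by
  induction t using Finset.cons_induction with
  | empty => simp [zonotope_empty]
  | cons i t hi ih =>
    rw [Finset.forall_mem_cons] at hab
    have hstep := (h.add_zonotope t a).volumeReal_add_zonotope_add_segment_le hab.1
    rw [add_right_comm S] at hstep
    rw [zonotope_cons, Finset.sum_cons, add_comm (segment ℝ 0 (a i)), ← add_assoc S,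
      ← add_assoc (S + zonotope s a)]
    linarith [ih hab.2]

end Doubling

section RiemannSum

variable {f : ℝ → ℝ} {C : ℝ≥0}

lemma abs_mul_sub_integral_le_of_lipschitzWith (hf : LipschitzWith C f) (x : ℝ) {d : ℝ}
    (hd : 0 ≤ d) : |d * f x - ∫ y in x..x + d, f y| ≤ C * d ^ 2 := by
  have hconst : d * f x = ∫ _ in x..x + d, f x := by simp
  rw [hconst, ← intervalIntegral.integral_sub intervalIntegrable_const
    (hf.continuous.intervalIntegrable _ _)]
  have hbound : ∀ y ∈ uIoc x (x + d), ‖f x - f y‖ ≤ C * d := fun y hy => by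
    rw [uIoc_of_le (by linarith)] at hy
    refine (hf.norm_sub_le x y).trans ?_
    gcongr
    rw [norm_eq_abs, abs_le]
    constructor <;> linarith [hy.1, hy.2]
  have hint := intervalIntegral.norm_integral_le_of_norm_le_const hbound
  rwa [norm_eq_abs, add_sub_cancel_left, abs_of_nonneg hd, mul_assoc, ← sq] at hint

lemma abs_riemannSum_sub_integral_le_of_lipschitzWith (hf : LipschitzWith C f) {d : ℝ}
    (hd : 0 ≤ d) (m : ℕ) :
    |d * ∑ k ∈ Finset.range m, f (k * d) - ∫ x in 0..m * d, f x| ≤ m * (C * d ^ 2) := by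
  have hsum := intervalIntegral.sum_integral_adjacent_intervals (f := f) (μ := volume)
    (a := fun k : ℕ => k * d) (n := m) fun _ _ => hf.continuous.intervalIntegrable _ _
  simp only [Nat.cast_zero, zero_mul] at hsum
  rw [← hsum, Finset.mul_sum, ← Finset.sum_sub_distrib]
  calc |∑ k ∈ Finset.range m, (d * f (k * d) - ∫ x in k * d..(k + 1 : ℕ) * d, f x)|
      ≤ ∑ k ∈ Finset.range m, |d * f (k * d) - ∫ x in k * d..(k + 1 : ℕ) * d, f x| :=
        Finset.abs_sum_le_sum_abs _ _
    _ ≤ ∑ _k ∈ Finset.range m, C * d ^ 2 := Finset.sum_le_sum fun k _ => by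
        rw [Nat.cast_succ, add_one_mul]
        exact abs_mul_sub_integral_le_of_lipschitzWith hf (k * d) hd
    _ = m * (C * d ^ 2) := by simp

end RiemannSum

lemma integral_abs_cos_sub (φ : ℝ) : ∫ x in 0..π, |cos (φ - x)| = 2 := by
  have hperiodic : Function.Periodic (fun x => |cos x|) π := fun x => by simp [cos_add_pi]
  calc ∫ x in 0..π, |cos (φ - x)| = ∫ x in (φ - π)..(φ - π) + π, |cos x| := by
        simp [intervalIntegral.integral_comp_sub_left (fun x => |cos x|)]
    _ = ∫ x in -(π / 2)..-(π / 2) + π, |cos x| := hperiodic.intervalIntegral_add_eq _ _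
    _ = ∫ x in -(π / 2)..π / 2, cos x := by
        rw [show -(π / 2) + π = π / 2 by ring]
        refine intervalIntegral.integral_congr fun x hx => abs_of_nonneg ?_
        rw [uIcc_of_le (by linarith [pi_pos])] at hx
        exact cos_nonneg_of_mem_Icc hx
    _ = 2 := by rw [integral_cos, sin_neg, sin_pi_div_two]; norm_num

lemma abs_riemannSum_abs_cos_sub_two_le (φ : ℝ) {m : ℕ} (hm : 0 < m) :
    |π / m * ∑ k ∈ Finset.range m, |cos (φ - k * (π / m))| - 2| ≤ π ^ 2 / m := by
  have hlip : LipschitzWith 1 fun x => |cos (φ - x)| := LipschitzWith.of_dist_le_mul fun x y => by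
    have hcos := lipschitzWith_cos.dist_le_mul (φ - x) (φ - y)
    rw [dist_sub_left] at hcos
    exact (abs_abs_sub_abs_le_abs_sub _ _).trans hcos
  have hriemann := abs_riemannSum_sub_integral_le_of_lipschitzWith hlip
    (d := π / m) (by positivity) m
  have hm' : (m : ℝ) ≠ 0 := by positivity
  rw [mul_div_cancel₀ _ hm', integral_abs_cos_sub, NNReal.coe_one, one_mul] at hriemann
  exact hriemann.trans_eq (by field_simp)

section DiscApproximation

/-- The unit vector of the plane at angle `θ`. -/
def direction (θ : ℝ) : E2 := !₂[cos θ, sin θ]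

lemma inner_E2 (u v : E2) : inner ℝ u v = u 0 * v 0 + u 1 * v 1 := by
  simp [PiLp.inner_apply, Fin.sum_univ_two, mul_comm]

lemma norm_E2 (u : E2) : ‖u‖ = √(u 0 ^ 2 + u 1 ^ 2) := by
  simp [EuclideanSpace.norm_eq, Fin.sum_univ_two]

lemma norm_direction (θ : ℝ) : ‖direction θ‖ = 1 := by simp [norm_E2, direction]

lemma exists_inner_direction_eq (u : E2) :
    ∃ φ : ℝ, ∀ θ, inner ℝ u (direction θ) = ‖u‖ * cos (φ - θ) := by
  have hnorm : ‖u‖ = ‖(⟨u 0, u 1⟩ : ℂ)‖ := by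
    rw [norm_E2, Complex.norm_def, Complex.normSq_mk, sq, sq]
  refine ⟨Complex.arg ⟨u 0, u 1⟩, fun θ => ?_⟩
  rw [cos_sub, mul_add, ← mul_assoc, ← mul_assoc, hnorm, Complex.norm_mul_cos_arg,
    Complex.norm_mul_sin_arg, inner_E2]
  simp [direction]

lemma exists_norm_eq_det2_eq_inner (b : E2) :
    ∃ u : E2, ‖u‖ = ‖b‖ ∧ ∀ a, det2 a b = inner ℝ u a := by
  refine ⟨!₂[b 1, -b 0], ?_, fun a => ?_⟩
  · simp [norm_E2, add_comm]
  · simp [inner_E2, det2]; ring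

lemma det2_smul_direction (c α β : ℝ) :
    det2 (c • direction α) (c • direction β) = c ^ 2 * sin (β - α) := by
  simp [det2, direction, sin_sub]; ring

/-- The generators, indexed by `k < m`, of a zonotope that approximates a disc of radius `c`. -/
def discGenerator (c : ℝ) (m k : ℕ) : E2 := (c * (π / m)) • direction (k * (π / m))

variable {c : ℝ} {m : ℕ}

lemma norm_discGenerator (hc : 0 ≤ c) (k : ℕ) : ‖discGenerator c m k‖ = c * (π / m) := by
  rw [discGenerator, norm_smul, norm_direction, mul_one, norm_of_nonneg (by positivity)]

lemma abs_sum_abs_inner_discGenerator_sub_le (hc : 0 ≤ c) (hm : 0 < m) (u : E2) :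
    |∑ k ∈ Finset.range m, |inner ℝ u (discGenerator c m k)| - 2 * c * ‖u‖| ≤
      c * ‖u‖ * (π ^ 2 / m) := by
  obtain ⟨φ, hφ⟩ := exists_inner_direction_eq u
  have hfactor : ∑ k ∈ Finset.range m, |inner ℝ u (discGenerator c m k)| - 2 * c * ‖u‖ =
      c * ‖u‖ * (π / m * ∑ k ∈ Finset.range m, |cos (φ - k * (π / m))| - 2) := by
    simp only [discGenerator, inner_smul_right, hφ, abs_mul, abs_of_nonneg hc, abs_norm,
      abs_of_nonneg (show 0 ≤ π / m by positivity), ← Finset.mul_sum]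
    ring
  rw [hfactor, abs_mul, abs_of_nonneg (by positivity)]
  gcongr
  exact abs_riemannSum_abs_cos_sub_two_le φ hm

lemma discGenerator_eq_or_det2_ne_zero (hc : c ≠ 0) {j k : ℕ} (hj : j < m) (hk : k < m) :
    discGenerator c m k = discGenerator c m j ∨
      det2 (discGenerator c m k) (discGenerator c m j) ≠ 0 := by
  rcases eq_or_ne k j with rfl | hne
  · exact Or.inl rfl
  right
  have hd : 0 < π / m := by have := Nat.zero_lt_of_lt hj; positivity
  have hangle : ∀ {i : ℕ}, i < m → 0 ≤ i * (π / m) ∧ i * (π / m) < π := fun {i} hi => by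
    have hm : (0 : ℝ) < m := by exact_mod_cast Nat.zero_lt_of_lt hi
    refine ⟨by positivity, ?_⟩
    calc i * (π / m) < m * (π / m) := by gcongr
      _ = π := by field_simp
  rw [discGenerator, discGenerator, det2_smul_direction]
  refine mul_ne_zero (pow_ne_zero 2 (mul_ne_zero hc hd.ne')) ?_
  rw [Ne, sin_eq_zero_iff_of_lt_of_lt (by linarith [hangle hj, hangle hk])
    (by linarith [hangle hj, hangle hk]), ← sub_mul]
  exact mul_ne_zero (sub_ne_zero.2 (by exact_mod_cast hne.symm)) hd.ne'

lemma sum_abs_det2_discGenerator_le (hc : 0 ≤ c) (hm : 0 < m) :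
    ∑ j ∈ Finset.range m, ∑ k ∈ Finset.range m,
      |det2 (discGenerator c m k) (discGenerator c m j)| ≤ c ^ 2 * π * (2 + π ^ 2 / m) := by
  have hinner : ∀ j ∈ Finset.range m,
      ∑ k ∈ Finset.range m, |det2 (discGenerator c m k) (discGenerator c m j)| ≤
        c * (π / m) * (c * (2 + π ^ 2 / m)) := fun j _ => by
    obtain ⟨u, hu, hdet⟩ := exists_norm_eq_det2_eq_inner (discGenerator c m j)
    have hsum := (abs_le.1 (abs_sum_abs_inner_discGenerator_sub_le hc hm u)).2
    rw [hu, norm_discGenerator hc] at hsum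
    simp only [hdet]
    linarith
  refine (Finset.sum_le_sum hinner).trans_eq ?_
  rw [Finset.sum_const, Finset.card_range, nsmul_eq_mul]
  field_simp

lemma exists_disc_scale {h R D : ℝ} (hh : 0 < h) (hR : h < R) (hD : 2 * π * h ^ 2 < D) :
    ∃ (m : ℕ) (c : ℝ), 0 < m ∧ 0 < c ∧ c * (1 - π ^ 2 / m / 2) = h ∧
      c * (1 + π ^ 2 / m / 2) < R ∧ c ^ 2 * π * (2 + π ^ 2 / m) < D := by
  let η : ℕ → ℝ := fun m => π ^ 2 / m
  let c : ℕ → ℝ := fun m => h / (1 - η m / 2)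
  have hη : Filter.Tendsto η Filter.atTop (𝓝 0) := tendsto_const_div_atTop_nhds_zero_nat _
  have hc : Filter.Tendsto c Filter.atTop (𝓝 h) := by
    have hden := (hη.div_const 2).const_sub 1
    rw [zero_div, sub_zero] at hden
    exact (div_one h) ▸ tendsto_const_nhds.div hden one_ne_zero
  have hRlim : Filter.Tendsto (fun m => c m * (1 + η m / 2)) Filter.atTop (𝓝 h) := by
    simpa using hc.mul ((hη.div_const 2).const_add 1)
  have hDlim : Filter.Tendsto (fun m => c m ^ 2 * π * (2 + η m)) Filter.atTop
      (𝓝 (2 * π * h ^ 2)) := by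
    have hlim := ((hc.pow 2).mul_const π).mul (hη.const_add 2)
    rwa [add_zero, show h ^ 2 * π * 2 = 2 * π * h ^ 2 by ring] at hlim
  obtain ⟨m, hm, hηm, hRm, hDm⟩ := ((Filter.eventually_gt_atTop 0).and
    ((hη.eventually_lt_const two_pos).and
      ((hRlim.eventually_lt_const hR).and (hDlim.eventually_lt_const hD)))).exists
  have hden : 0 < 1 - η m / 2 := by linarith
  exact ⟨m, c m, hm, div_pos hh hden, div_mul_cancel₀ h hden.ne', hRm, hDm⟩

lemma exists_zonotope_approx_disc {h R D : ℝ} (hh : 0 < h) (hR : h < R) (hD : 2 * π * h ^ 2 < D) :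
    ∃ (m : ℕ) (a : ℕ → E2) (p : E2),
      (∀ j ∈ Finset.range m, ∀ k ∈ Finset.range m, a k = a j ∨ det2 (a k) (a j) ≠ 0) ∧
      ∑ j ∈ Finset.range m, ∑ k ∈ Finset.range m, |det2 (a k) (a j)| ≤ D ∧
      Metric.closedBall p h ⊆ zonotope (Finset.range m) a ∧
      zonotope (Finset.range m) a ⊆ Metric.closedBall p R := by
  obtain ⟨m, c, hm, hc, rfl, hcR, hcD⟩ := exists_disc_scale hh hR hD
  have hsupport := fun u => abs_le.1 (abs_sum_abs_inner_discGenerator_sub_le hc.le hm u)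
  refine ⟨m, discGenerator c m, _, fun j hj k hk => discGenerator_eq_or_det2_ne_zero hc.ne'
    (Finset.mem_range.1 hj) (Finset.mem_range.1 hk),
    (sum_abs_det2_discGenerator_le hc.le hm).trans hcD.le,
    closedBall_subset_zonotope fun u => ?_,
    (zonotope_subset_closedBall (R := c * (1 + π ^ 2 / m / 2)) (by positivity) fun u => ?_).trans
      (Metric.closedBall_subset_closedBall hcR.le)⟩
  · linarith [(hsupport u).1]
  · linarith [(hsupport u).2]

end DiscApproximation

/-! ### Areas of parallel sets -/

section ParallelArea

variable {N : ℕ} {K : Set E2} {t h : ℝ}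

/-- The area of the parallel set `{x | dist(x, K) ≤ t}`. -/
def parallelArea (K : Set E2) (t : ℝ) : ℝ := volume.real (Metric.cthickening t K)

lemma volumeReal_add_closedBall (hK : IsCompact K) (p : E2) (ht : 0 ≤ t) :
    volume.real (K + Metric.closedBall p t) = parallelArea K t := by
  rw [hK.add_closedBall ht, parallelArea, measureReal_def, measure_vadd, measureReal_def]

lemma parallelArea_cthickening (ht : 0 ≤ t) (hh : 0 ≤ h) :
    parallelArea (Metric.cthickening t K) h = parallelArea K (t + h) := by
  rw [parallelArea, cthickening_cthickening hh ht, add_comm, parallelArea]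

lemma IsUnionOfContinua.cthickening (hK : IsUnionOfContinua N K) (ht : 0 ≤ t) :
    IsUnionOfContinua N (Metric.cthickening t K) := by
  rw [← hK.isCompact.add_closedBall_zero ht]
  exact hK.add (isCompact_closedBall 0 t) (convex_closedBall 0 t).isPreconnected

lemma IsUnionOfContinua.parallelArea_two_mul_add_le_of_lt (hK : IsUnionOfContinua N K)
    (hh : 0 < h) {R D : ℝ} (hR : h < R) (hD : 2 * π * h ^ 2 < D) :
    parallelArea K (2 * h) + parallelArea K 0 ≤ 2 * parallelArea K R + N * D := by
  obtain ⟨m, a, p, hpairs, hdet, hin, hout⟩ := exists_zonotope_approx_disc hh hR hD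
  set Z := zonotope (Finset.range m) a
  have hZ : IsCompact Z := isCompact_zonotope _ a
  have hKc := hK.isCompact
  have hdouble := hK.volumeReal_add_zonotope_add_zonotope_le hpairs
  simp only [← Finset.mul_sum] at hdouble
  have hupper : volume.real (K + Z) ≤ parallelArea K R := by
    rw [← volumeReal_add_closedBall hKc p (hh.trans hR).le]
    exact measureReal_mono (add_subset_add_left hout)
      (hKc.add (isCompact_closedBall p R)).measure_lt_top.ne
  have hlower : parallelArea K (2 * h) ≤ volume.real (K + Z + Z) := by
    rw [← volumeReal_add_closedBall hKc (p + p) (by positivity), two_mul,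
      ← closedBall_add_closedBall hh.le hh.le, add_assoc]
    exact measureReal_mono (add_subset_add_left (add_subset_add hin hin))
      (hKc.add (hZ.add hZ)).measure_lt_top.ne
  have hzero : parallelArea K 0 = volume.real K := by
    rw [parallelArea, Metric.cthickening_zero, hKc.isClosed.closure_eq]
  have hND : N * ∑ j ∈ Finset.range m, ∑ k ∈ Finset.range m, |det2 (a k) (a j)| ≤ N * D := by
    gcongr
  linarith

lemma tendsto_parallelArea_nhdsGT (hK : IsCompact K) (ht : 0 ≤ t) :
    Filter.Tendsto (parallelArea K) (𝓝[>] t) (𝓝 (parallelArea K t)) := by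
  have hK' : IsCompact (Metric.cthickening t K) := hK.cthickening
  have hshift : Filter.Tendsto (fun s => s - t) (𝓝[>] t) (𝓝 0) :=
    tendsto_nhdsWithin_of_tendsto_nhds (by simpa using (continuous_sub_right t).tendsto t)
  have hlim := (ENNReal.tendsto_toReal hK'.measure_lt_top.ne).comp
    ((tendsto_measure_cthickening_of_isCompact (μ := volume) hK').comp hshift)
  refine hlim.congr' ?_
  filter_upwards [self_mem_nhdsWithin] with s hs
  have hst : 0 ≤ s - t := sub_nonneg.2 (mem_Ioi.1 hs).le
  exact (parallelArea_cthickening ht hst).trans (by rw [add_sub_cancel])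

lemma IsUnionOfContinua.parallelArea_two_mul_add_le (hK : IsUnionOfContinua N K) (hh : 0 < h) :
    parallelArea K (2 * h) + parallelArea K 0 ≤
      2 * parallelArea K h + N * (2 * π * h ^ 2) := by
  have hlimD : Filter.Tendsto (fun D : ℝ => D) (𝓝[>] (2 * π * h ^ 2)) (𝓝 (2 * π * h ^ 2)) :=
    nhdsWithin_le_nhds
  refine ge_of_tendsto (((tendsto_parallelArea_nhdsGT hK.isCompact hh.le).const_mul 2).add_const _)
    ?_
  filter_upwards [self_mem_nhdsWithin] with R hR
  refine ge_of_tendsto ((hlimD.const_mul (N : ℝ)).const_add _) ?_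
  filter_upwards [self_mem_nhdsWithin] with D hD
  exact hK.parallelArea_two_mul_add_le_of_lt hh hR hD

lemma IsUnionOfContinua.parallelArea_add_two_mul_add_le (hK : IsUnionOfContinua N K) (ht : 0 ≤ t)
    (hh : 0 < h) :
    parallelArea K (t + 2 * h) + parallelArea K t ≤
      2 * parallelArea K (t + h) + N * (2 * π * h ^ 2) := by
  have hstep := (hK.cthickening ht).parallelArea_two_mul_add_le hh
  rwa [parallelArea_cthickening ht (by positivity), parallelArea_cthickening ht le_rfl,
    parallelArea_cthickening ht hh.le, add_zero] at hstep

lemma IsUnionOfContinua.parallelArea_succ_sub_le (hK : IsUnionOfContinua N K) (hh : 0 < h)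
    (n : ℕ) :
    parallelArea K ((n + 1) * h) - parallelArea K (n * h) ≤
      parallelArea K h - parallelArea K 0 + 2 * π * N * (n * h) * h := by
  induction n with
  | zero => simp
  | succ n ih =>
    have hstep := hK.parallelArea_add_two_mul_add_le (t := n * h) (by positivity) hh
    rw [show n * h + 2 * h = ((n + 1 : ℕ) + 1) * h by push_cast; ring,
      show n * h + h = (n + 1 : ℕ) * h by push_cast; ring] at hstep
    push_cast at hstep ⊢
    linarith

end ParallelArea

/-! ### Lengths of curves -/

section LengthFormula

variable {E : Type*} [NormedAddCommGroup E] [NormedSpace ℝ E] [MeasurableSpace E] [BorelSpace E]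
  {f f' : ℝ → E} {s : Set ℝ} {v : E} {ε : ℝ≥0}

lemma hausdorffMeasure_image_le_of_approximatesLinearOn
    (hf : ApproximatesLinearOn f (.toSpanSingleton ℝ v) s ε) :
    μH[1] (f '' s) ≤ (‖v‖ₑ + ε) * volume s := by
  have hlip := hf.lipschitz.hausdorffMeasure_image_le (d := 1) zero_le_one univ
  rw [image_univ, range_domRestrict] at hlip
  have hsubtype : μH[1] (univ : Set s) = volume s := by
    rw [← (isometry_subtype_coe (s := s)).hausdorffMeasure_image (.inl zero_le_one), image_univ,
      Subtype.range_coe, hausdorffMeasure_real]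
  simpa [hsubtype, enorm] using hlip

lemma hausdorffMeasure_image_eq_zero_of_hasDerivWithinAt [SecondCountableTopology E]
    (hs : volume s = 0) (hf : ∀ x ∈ s, HasDerivWithinAt f (f' x) s x) : μH[1] (f '' s) = 0 := by
  obtain ⟨t, A, -, -, hst, hA, -⟩ := exists_partition_approximatesLinearOn_of_hasFDerivWithinAt f s
    (fun x => .toSpanSingleton ℝ (f' x)) (fun x hx => (hf x hx).hasFDerivWithinAt)
    (fun _ => 1) (fun _ => one_ne_zero)
  rw [← inter_eq_left.2 hst, inter_iUnion, image_iUnion]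
  refine measure_iUnion_null fun n => nonpos_iff_eq_zero.1 ?_
  have hAn := hA n
  rw [← (A n).toSpanSingleton_apply_map_one] at hAn
  simpa [measure_mono_null inter_subset_left hs] using
    hausdorffMeasure_image_le_of_approximatesLinearOn hAn

lemma mul_volume_le_hausdorffMeasure_image_of_approximatesLinearOn
    (hf : ApproximatesLinearOn f (.toSpanSingleton ℝ v) s ε) :
    (‖v‖ₑ - ε) * volume s ≤ μH[1] (f '' s) := by
  rcases le_or_gt ‖v‖₊ ε with hle | hlt
  · rw [tsub_eq_zero_of_le (by exact_mod_cast hle), zero_mul]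
    exact zero_le
  have hv : 0 < ‖v‖₊ := hlt.bot_lt
  have hlinear : AntilipschitzWith ‖v‖₊⁻¹ fun x : s => (x : ℝ) • v :=
    AntilipschitzWith.of_le_mul_dist fun x y => by
      rw [dist_eq_norm, ← sub_smul, norm_smul, NNReal.coe_inv, coe_nnnorm, mul_comm,
        mul_inv_cancel_right₀ (show ‖v‖ ≠ 0 from NNReal.coe_ne_zero.2 hv.ne')]
      rfl
  have hanti : AntilipschitzWith (‖v‖₊ - ε)⁻¹ (s.domRestrict f) := by
    simpa using! hlinear.add_lipschitzWith hf.lipschitz_sub (by rwa [inv_inv])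
  have hle := hanti.le_hausdorffMeasure_image (d := 1) zero_le_one univ
  rw [image_univ, range_domRestrict, ← (isometry_subtype_coe (s := s)).hausdorffMeasure_image
    (.inl zero_le_one), image_univ, Subtype.range_coe, hausdorffMeasure_real, ENNReal.rpow_one,
    ENNReal.coe_inv (tsub_pos_of_lt hlt).ne', ENNReal.coe_sub, mul_comm, ← div_eq_mul_inv] at hle
  rw [mul_comm]
  exact ENNReal.mul_le_of_le_div hle

lemma hausdorffMeasure_image_le_setLIntegral_enorm_add
    (hf : ApproximatesLinearOn f (.toSpanSingleton ℝ v) s ε)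
    (hf' : ∀ x ∈ s, ‖f' x - v‖ₑ ≤ ε) (hs : MeasurableSet s) :
    μH[1] (f '' s) ≤ (∫⁻ x in s, ‖f' x‖ₑ) + 2 * ε * volume s := by
  refine (hausdorffMeasure_image_le_of_approximatesLinearOn hf).trans ?_
  rw [← setLIntegral_const, ← setLIntegral_const, ← lintegral_add_right _ measurable_const]
  refine setLIntegral_mono' hs fun x hx => ?_
  calc ‖v‖ₑ + ε = ‖f' x - (f' x - v)‖ₑ + ε := by rw [sub_sub_cancel]
    _ ≤ ‖f' x‖ₑ + ε + ε := by gcongr; exact enorm_sub_le.trans (by gcongr; exact hf' x hx)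
    _ = ‖f' x‖ₑ + 2 * ε := by ring

lemma setLIntegral_enorm_le_hausdorffMeasure_image_add
    (hf : ApproximatesLinearOn f (.toSpanSingleton ℝ v) s ε)
    (hf' : ∀ x ∈ s, ‖f' x - v‖ₑ ≤ ε) :
    ∫⁻ x in s, ‖f' x‖ₑ ≤ μH[1] (f '' s) + 2 * ε * volume s := by
  have hle : ∀ x ∈ s, ‖f' x‖ₑ ≤ (‖v‖ₑ - ε) + 2 * ε := fun x hx => by
    calc ‖f' x‖ₑ = ‖v + (f' x - v)‖ₑ := by rw [add_sub_cancel]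
      _ ≤ ‖v‖ₑ + ε := (enorm_add_le _ _).trans (by gcongr; exact hf' x hx)
      _ ≤ (‖v‖ₑ - ε + ε) + ε := by gcongr; exact le_tsub_add
      _ = (‖v‖ₑ - ε) + 2 * ε := by ring
  calc ∫⁻ x in s, ‖f' x‖ₑ ≤ ∫⁻ _ in s, ((‖v‖ₑ - ε) + 2 * ε) :=
        setLIntegral_mono measurable_const hle
    _ = (‖v‖ₑ - ε) * volume s + 2 * ε * volume s := by rw [setLIntegral_const, add_mul]
    _ ≤ μH[1] (f '' s) + 2 * ε * volume s := by
        gcongr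
        exact mul_volume_le_hausdorffMeasure_image_of_approximatesLinearOn hf

lemma exists_partition_approximatesLinearOn_of_hasDerivWithinAt [SecondCountableTopology E]
    (hs : MeasurableSet s) (hf' : Measurable f') (hf : ∀ x ∈ s, HasDerivWithinAt f (f' x) s x)
    (hε : 0 < ε) :
    ∃ (t : ℕ × ℕ → Set ℝ) (v : ℕ × ℕ → E), Pairwise (Function.onFun Disjoint t) ∧
      (∀ n, MeasurableSet (t n)) ∧ s = ⋃ n, t n ∧
      (∀ n, ApproximatesLinearOn f (.toSpanSingleton ℝ (v n)) (t n) ε) ∧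
      ∀ n, ∀ x ∈ t n, ‖f' x - v n‖ₑ ≤ ε := by
  obtain ⟨B, hBm, hBb, hBdiam, hBu, hBd⟩ := SeparableSpace.exists_measurable_partition_diam_le E
    (ε := ε) hε
  choose t A htd htm htu htA hAt using fun j =>
    exists_partition_approximatesLinearOn_of_hasFDerivWithinAt f (s ∩ f' ⁻¹' B j)
      (fun x => .toSpanSingleton ℝ (f' x))
      (fun x hx => ((hf x hx.1).mono inter_subset_left).hasFDerivWithinAt) (fun _ => ε)
      (fun _ => hε.ne')
  have hA : ∀ n : ℕ × ℕ, A n.1 n.2 = .toSpanSingleton ℝ (A n.1 n.2 1) := fun n =>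
    ((A n.1 n.2).toSpanSingleton_apply_map_one).symm
  refine ⟨fun n => s ∩ f' ⁻¹' B n.1 ∩ t n.1 n.2, fun n => A n.1 n.2 1, ?_,
    fun n => (hs.inter (hf' (hBm _))).inter (htm _ _), ?_, fun n => hA n ▸ htA n.1 n.2, ?_⟩
  · rintro ⟨j, n⟩ ⟨k, m⟩ hne
    refine disjoint_left.2 fun x hx hx' => hne ?_
    obtain rfl : j = k := by_contra fun hjk => disjoint_left.1 (hBd hjk) hx.1.2 hx'.1.2
    obtain rfl : n = m := by_contra fun hnm => disjoint_left.1 (htd j hnm) hx.2 hx'.2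
    rfl
  · refine Subset.antisymm (fun x hx => ?_) (iUnion_subset fun n x hx => hx.1.1)
    obtain ⟨j, hj⟩ := mem_iUnion.1 (hBu.ge (mem_univ (f' x)))
    obtain ⟨n, hn⟩ := mem_iUnion.1 (htu j ⟨hx, hj⟩)
    exact mem_iUnion.2 ⟨(j, n), ⟨hx, hj⟩, hn⟩
  · rintro ⟨j, n⟩ x ⟨hx, -⟩
    obtain ⟨y, hy, hAy⟩ := hAt j ⟨x, hx⟩ n
    simp only [hAy, ContinuousLinearMap.toSpanSingleton_apply, one_smul]
    rw [← edist_eq_enorm_sub, edist_dist]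
    exact ENNReal.ofReal_le_of_le_toReal
      ((Metric.dist_le_diam_of_mem (hBb j) hx.2 hy.2).trans (hBdiam j))

lemma hausdorffMeasure_image_le_and_setLIntegral_enorm_le [SecondCountableTopology E]
    (hs : MeasurableSet s) (hinj : InjOn f s) (hf' : Measurable f')
    (hf : ∀ x ∈ s, HasDerivWithinAt f (f' x) s x) (hε : 0 < ε) :
    μH[1] (f '' s) ≤ (∫⁻ x in s, ‖f' x‖ₑ) + 2 * ε * volume s ∧
      ∫⁻ x in s, ‖f' x‖ₑ ≤ μH[1] (f '' s) + 2 * ε * volume s := by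
  obtain ⟨t, v, htd, htm, hst, hft, hf't⟩ :=
    exists_partition_approximatesLinearOn_of_hasDerivWithinAt hs hf' hf hε
  have hsub : ∀ n, t n ⊆ s := fun n => hst ▸ subset_iUnion t n
  have hcont : ContinuousOn f s := fun x hx => (hf x hx).continuousWithinAt
  have himage : μH[1] (f '' s) = ∑' n, μH[1] (f '' t n) := by
    rw [hst, image_iUnion]
    refine measure_iUnion (fun n m hnm => ?_) fun n => (htm n).image_of_continuousOn_injOn
      (hcont.mono (hsub n)) (hinj.mono (hsub n))
    exact (htd hnm).image hinj (hsub n) (hsub m)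
  have hint : ∫⁻ x in s, ‖f' x‖ₑ = ∑' n, ∫⁻ x in t n, ‖f' x‖ₑ := by
    rw [hst, lintegral_iUnion htm htd]
  have hvol : 2 * ε * volume s = ∑' n, 2 * ε * volume (t n) := by
    rw [hst, measure_iUnion htd htm, ENNReal.tsum_mul_left]
  rw [himage, hint, hvol, ← ENNReal.tsum_add, ← ENNReal.tsum_add]
  exact ⟨ENNReal.tsum_le_tsum fun n =>
      hausdorffMeasure_image_le_setLIntegral_enorm_add (hft n) (hf't n) (htm n),
    ENNReal.tsum_le_tsum fun n =>
      setLIntegral_enorm_le_hausdorffMeasure_image_add (hft n) (hf't n)⟩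

lemma hausdorffMeasure_image_eq_setLIntegral_enorm [SecondCountableTopology E]
    (hs : MeasurableSet s) (hs' : volume s ≠ ⊤) (hinj : InjOn f s) (hf' : Measurable f')
    (hf : ∀ x ∈ s, HasDerivWithinAt f (f' x) s x) :
    μH[1] (f '' s) = ∫⁻ x in s, ‖f' x‖ₑ := by
  have hlim : ∀ a : ℝ≥0∞,
      Filter.Tendsto (fun ε : ℝ≥0 => a + 2 * ε * volume s) (𝓝[>] 0) (𝓝 a) := fun a => by
    have hε : Filter.Tendsto (fun ε : ℝ≥0 => (ε : ℝ≥0∞)) (𝓝[>] 0) (𝓝 (0 : ℝ≥0)) :=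
      ENNReal.tendsto_coe.2 nhdsWithin_le_nhds
    simpa using (ENNReal.Tendsto.mul_const (ENNReal.Tendsto.const_mul hε
      (.inr ENNReal.ofNat_ne_top)) (.inr hs')).const_add a
  refine le_antisymm (ge_of_tendsto (hlim _) ?_) (ge_of_tendsto (hlim _) ?_)
  · filter_upwards [self_mem_nhdsWithin] with ε hε using
      (hausdorffMeasure_image_le_and_setLIntegral_enorm_le hs hinj hf' hf hε).1
  · filter_upwards [self_mem_nhdsWithin] with ε hε using
      (hausdorffMeasure_image_le_and_setLIntegral_enorm_le hs hinj hf' hf hε).2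

end LengthFormula

lemma eq_of_dist_add_dist_eq_of_dist_eq {V : Type*} [NormedAddCommGroup V] [NormedSpace ℝ V]
    [StrictConvexSpace ℝ V] {p m y z : V} (hpm : p ≠ m) (hy : dist p m + dist m y = dist p y)
    (hz : dist p m + dist m z = dist p z) (hyz : dist m y = dist m z) : y = z := by
  have hsmul : ∀ w, dist p m + dist m w = dist p w → ‖m - p‖ • (w - m) = dist m w • (m - p) :=
    fun w hw => by
      rw [dist_comm m w, dist_eq_norm w m]
      exact (dist_add_dist_eq_iff.1 hw).sameRay_vsub.norm_smul_eq
  refine sub_left_inj.1 (smul_right_injective V (norm_ne_zero_iff.2 (sub_ne_zero.2 hpm.symm))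
    ((hsmul y hy).trans (hyz ▸ (hsmul z hz).symm)))

/-! ### Normal coordinates -/

/-- A piece of arc on `K`, parametrised over a bounded set of parameters, with a unit normal field
along it which points to every point of the plane whose nearest point of `K` lies on the arc. -/
structure BoundaryPatch (K : Set E2) where
  domain : Set ℝ
  curve : ℝ → E2
  normal : ℝ → E2
  measurableSet_domain : MeasurableSet domain
  isBounded_domain : Bornology.IsBounded domain
  contDiff_curve : ContDiff ℝ 1 curve
  contDiff_normal : ContDiff ℝ 1 normal
  mapsTo_curve : MapsTo curve domain K
  injOn_curve : InjOn curve domain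
  norm_normal : ∀ s ∈ domain, ‖normal s‖ = 1
  inner_deriv_curve_normal : ∀ s ∈ domain, inner ℝ (deriv curve s) (normal s) = 0
  inner_deriv_normal_normal : ∀ s ∈ domain, inner ℝ (deriv normal s) (normal s) = 0
  eq_curve_add_smul_normal : ∀ s ∈ domain, ∀ x, dist x (curve s) = Metric.infDist x K →
    x = curve s + Metric.infDist x K • normal s

namespace BoundaryPatch

variable {K : Set E2} (P : BoundaryPatch K) {p q : ℝ × ℝ} {s t : ℝ} {T : Set ℝ}

/-- The arc covered by a patch. -/
def arc : Set E2 := P.curve '' P.domain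

/-- The part of a patch lying in a measurable set. -/
def restrict {A : Set E2} (hA : MeasurableSet A) : BoundaryPatch K where
  domain := P.domain ∩ P.curve ⁻¹' A
  curve := P.curve
  normal := P.normal
  measurableSet_domain :=
    P.measurableSet_domain.inter (P.contDiff_curve.continuous.measurable hA)
  isBounded_domain := P.isBounded_domain.subset inter_subset_left
  contDiff_curve := P.contDiff_curve
  contDiff_normal := P.contDiff_normal
  mapsTo_curve := P.mapsTo_curve.mono_left inter_subset_left
  injOn_curve := P.injOn_curve.mono inter_subset_left
  norm_normal s hs := P.norm_normal s hs.1
  inner_deriv_curve_normal s hs := P.inner_deriv_curve_normal s hs.1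
  inner_deriv_normal_normal s hs := P.inner_deriv_normal_normal s hs.1
  eq_curve_add_smul_normal s hs := P.eq_curve_add_smul_normal s hs.1

lemma arc_restrict {A : Set E2} (hA : MeasurableSet A) : (P.restrict hA).arc = P.arc ∩ A :=
  image_inter_preimage _ _ _

/-- The normal coordinates `(s, t) ↦ γ s + t ν s` of a patch. -/
def normalMap (p : ℝ × ℝ) : E2 := P.curve p.1 + p.2 • P.normal p.1

/-- The pairs `(s, t)` for which `γ s` is a point of `K` nearest to `γ s + t ν s`. -/
def nearestSet : Set (ℝ × ℝ) :=
  {p | p.1 ∈ P.domain ∧ 0 < p.2 ∧ Metric.infDist (P.normalMap p) K = p.2}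

/-- The pairs `(s, t)` for which `γ s` remains a nearest point a little beyond `γ s + t ν s`; it is
then the only point of `K` nearest to `γ s + t ν s`. The parameter beyond is taken rational to make
this set visibly measurable. -/
def reachSet : Set (ℝ × ℝ) :=
  {p | p.1 ∈ P.domain ∧ 0 < p.2 ∧
    ∃ q : ℚ, p.2 < q ∧ Metric.infDist (P.normalMap (p.1, q)) K = q}

lemma contDiff_normalMap : ContDiff ℝ 1 P.normalMap :=
  (P.contDiff_curve.comp contDiff_fst).add (contDiff_snd.smul (P.contDiff_normal.comp contDiff_fst))

lemma continuous_normalMap : Continuous P.normalMap :=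
  P.contDiff_normalMap.continuous

lemma measurableSet_nearestSet : MeasurableSet P.nearestSet :=
  (measurable_fst P.measurableSet_domain).inter
    ((measurableSet_lt measurable_const measurable_snd).inter
      (measurableSet_eq_fun P.continuous_normalMap.measurable.infDist measurable_snd))

lemma measurableSet_reachSet : MeasurableSet P.reachSet := by
  refine (measurable_fst P.measurableSet_domain).inter
    ((measurableSet_lt measurable_const measurable_snd).inter ?_)
  change MeasurableSet {p : ℝ × ℝ | ∃ q : ℚ, _}
  simp only [ofPred_exists]
  refine MeasurableSet.iUnion fun q => (measurableSet_lt measurable_snd measurable_const).inter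
    (measurableSet_eq_fun ?_ measurable_const)
  exact (P.continuous_normalMap.measurable.comp
    (measurable_fst.prodMk measurable_const)).infDist

lemma dist_normalMap_curve (hs : s ∈ P.domain) (ht : 0 ≤ t) :
    dist (P.normalMap (s, t)) (P.curve s) = t := by
  simp [normalMap, dist_eq_norm, norm_smul, P.norm_normal s hs, abs_of_nonneg ht]

lemma dist_normalMap_normalMap (hs : s ∈ P.domain) (t t' : ℝ) :
    dist (P.normalMap (s, t)) (P.normalMap (s, t')) = |t - t'| := by
  simp [normalMap, dist_eq_norm, ← sub_smul, norm_smul, P.norm_normal s hs]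

lemma mem_nearestSet_of_le {t' : ℝ} (ht : 0 < t) (htt' : t ≤ t') (h : (s, t') ∈ P.nearestSet) :
    (s, t) ∈ P.nearestSet := by
  obtain ⟨hs, -, hdist⟩ := h
  refine ⟨hs, ht, le_antisymm ?_ ?_⟩
  · exact (Metric.infDist_le_dist_of_mem (P.mapsTo_curve hs)).trans_eq
      (P.dist_normalMap_curve hs ht.le)
  · have hle := Metric.infDist_le_infDist_add_dist (s := K) (x := P.normalMap (s, t'))
      (y := P.normalMap (s, t))
    rw [P.dist_normalMap_normalMap hs, abs_of_nonneg (sub_nonneg.2 htt'), hdist] at hle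
    change t ≤ _
    linarith

lemma reachSet_subset_nearestSet : P.reachSet ⊆ P.nearestSet := fun _ ⟨hs, ht, _, hlt, hq⟩ =>
  P.mem_nearestSet_of_le ht hlt.le ⟨hs, ht.trans hlt, hq⟩

lemma eq_curve_of_dist_normalMap_le (h : p ∈ P.reachSet) {z : E2} (hz : z ∈ K)
    (hzdist : dist (P.normalMap p) z ≤ p.2) : z = P.curve p.1 := by
  obtain ⟨s, t⟩ := p
  obtain ⟨hs, ht, q, hlt, hq⟩ := h
  dsimp only at hs ht hlt hq hzdist
  have hqt : dist (P.normalMap (s, q)) (P.normalMap (s, t)) = q - t := by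
    rw [P.dist_normalMap_normalMap hs, abs_of_pos (sub_pos.2 hlt)]
  have hqz : (q : ℝ) ≤ dist (P.normalMap (s, q)) z := hq.ge.trans (Metric.infDist_le_dist_of_mem hz)
  have htriangle := dist_triangle (P.normalMap (s, q)) (P.normalMap (s, t)) z
  have htcurve := P.dist_normalMap_curve hs ht.le
  have hqcurve := P.dist_normalMap_curve hs (ht.trans hlt).le
  refine eq_of_dist_add_dist_eq_of_dist_eq (p := P.normalMap (s, q)) (m := P.normalMap (s, t))
    (dist_pos.1 (by linarith)) ?_ ?_ ?_ <;> linarith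

lemma snd_eq_of_normalMap_eq {P' : BoundaryPatch K} (hp : p ∈ P.nearestSet)
    (hq : q ∈ P'.nearestSet) (h : P.normalMap p = P'.normalMap q) : p.2 = q.2 := by
  rw [← hp.2.2, ← hq.2.2, h]

lemma curve_eq_of_normalMap_eq {P' : BoundaryPatch K} (hp : p ∈ P.reachSet)
    (hq : q ∈ P'.reachSet) (h : P.normalMap p = P'.normalMap q) :
    P'.curve q.1 = P.curve p.1 :=
  P.eq_curve_of_dist_normalMap_le hp (P'.mapsTo_curve hq.1) <| by
    rw [h, P'.dist_normalMap_curve hq.1 hq.2.1.le, P.snd_eq_of_normalMap_eq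
      (P.reachSet_subset_nearestSet hp) (P'.reachSet_subset_nearestSet hq) h]

lemma injOn_normalMap_reachSet : InjOn P.normalMap P.reachSet := fun _ hp _ hq h =>
  Prod.ext (P.injOn_curve hp.1 hq.1 (P.curve_eq_of_normalMap_eq hp hq h).symm)
    (P.snd_eq_of_normalMap_eq (P.reachSet_subset_nearestSet hp) (P.reachSet_subset_nearestSet hq) h)

lemma volume_nearestSet_sdiff_reachSet : volume (P.nearestSet \ P.reachSet) = 0 := by
  rw [Measure.volume_eq_prod, Measure.measure_prod_null
    (P.measurableSet_nearestSet.diff P.measurableSet_reachSet)]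
  refine .of_forall fun s => Subsingleton.measure_zero (fun t ht t' ht' => ?_) _
  have hnotlt : ∀ {t t'}, (s, t) ∈ P.nearestSet \ P.reachSet → (s, t') ∈ P.nearestSet → ¬t < t' :=
    fun h h' hlt => by
      obtain ⟨q, htq, hqt'⟩ := exists_rat_btwn hlt
      have hq := P.mem_nearestSet_of_le (h.1.2.1.trans htq) hqt'.le h'
      exact h.2 ⟨h.1.1, h.1.2.1, q, htq, hq.2.2⟩
  exact le_antisymm (not_lt.1 (hnotlt ht' ht.1)) (not_lt.1 (hnotlt ht ht'.1))

/-- The speed of the parallel curve at distance `t`, which is also the Jacobian of the normal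
coordinates. -/
def speed (p : ℝ × ℝ) : ℝ≥0∞ := ‖deriv P.curve p.1 + p.2 • deriv P.normal p.1‖ₑ

/-- The length of the part of the parallel curve at distance `t` given by `reachSet`. -/
def parallelLength (t : ℝ) : ℝ≥0∞ := ∫⁻ s in {s | (s, t) ∈ P.reachSet}, P.speed (s, t)

/-- The total absolute curvature of the arc. -/
def totalCurvature : ℝ≥0∞ := ∫⁻ s in P.domain, ‖deriv P.normal s‖ₑ

lemma measurable_speed : Measurable P.speed :=
  (((measurable_deriv _).comp measurable_fst).add
    (measurable_snd.smul ((measurable_deriv _).comp measurable_fst))).enorm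

lemma measurableSet_reachSet_slice (t : ℝ) : MeasurableSet {s | (s, t) ∈ P.reachSet} :=
  (measurable_id.prodMk measurable_const) P.measurableSet_reachSet

lemma parallelLength_eq_lintegral_indicator (t : ℝ) :
    P.parallelLength t = ∫⁻ s, P.reachSet.indicator P.speed (s, t) := by
  rw [parallelLength, ← lintegral_indicator (P.measurableSet_reachSet_slice t)]
  rfl

lemma measurable_parallelLength : Measurable P.parallelLength := by
  simp only [funext P.parallelLength_eq_lintegral_indicator]
  exact (P.measurable_speed.indicator P.measurableSet_reachSet).lintegral_prod_left'

lemma hasDerivAt_normalMap (s t : ℝ) :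
    HasDerivAt (fun s => P.normalMap (s, t)) (deriv P.curve s + t • deriv P.normal s) s :=
  ((P.contDiff_curve.differentiable one_ne_zero).differentiableAt.hasDerivAt).add
    ((P.contDiff_normal.differentiable one_ne_zero).differentiableAt.hasDerivAt.const_smul t)

lemma hasFDerivAt_coordE_normalMap (p : ℝ × ℝ) :
    HasFDerivAt (fun p => coordE (P.normalMap p))
      (frameMap (deriv P.curve p.1 + p.2 • deriv P.normal p.1) (P.normal p.1)) p := by
  have hcurve := (P.contDiff_curve.differentiable one_ne_zero
    p.1).hasDerivAt.hasFDerivAt.comp p hasFDerivAt_fst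
  have hnormal := (P.contDiff_normal.differentiable one_ne_zero
    p.1).hasDerivAt.hasFDerivAt.comp p hasFDerivAt_fst
  refine (coordE.hasFDerivAt.comp p (hcurve.add (hasFDerivAt_snd.smul hnormal))).congr_fderiv ?_
  ext <;> simp [frameMap_apply]

end BoundaryPatch

lemma abs_det2_eq_norm_of_inner_eq_zero {v u : E2} (hu : ‖u‖ = 1) (hvu : inner ℝ v u = 0) :
    |det2 v u| = ‖v‖ := by
  have hv : ‖v‖ ^ 2 = v 0 ^ 2 + v 1 ^ 2 := by rw [norm_E2, sq_sqrt (by positivity)]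
  have hu' : ‖u‖ ^ 2 = u 0 ^ 2 + u 1 ^ 2 := by rw [norm_E2, sq_sqrt (by positivity)]
  rw [hu] at hu'
  rw [inner_E2] at hvu
  rw [← abs_of_nonneg (norm_nonneg v), ← sq_eq_sq_iff_abs_eq_abs, hv, det2]
  linear_combination (-(v 0 ^ 2 + v 1 ^ 2)) * hu' - (v 0 * u 0 + v 1 * u 1) * hvu

namespace BoundaryPatch

variable {K : Set E2} (P : BoundaryPatch K) {p : ℝ × ℝ} {t : ℝ} {T : Set ℝ}

lemma ofReal_abs_det_frameMap_eq_speed (hp : p.1 ∈ P.domain) :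
    ENNReal.ofReal |(frameMap (deriv P.curve p.1 + p.2 • deriv P.normal p.1)
      (P.normal p.1)).det| = P.speed p := by
  rw [det_frameMap, abs_det2_eq_norm_of_inner_eq_zero (P.norm_normal _ hp), speed, ofReal_norm]
  rw [inner_add_left, inner_smul_left, P.inner_deriv_curve_normal _ hp,
    P.inner_deriv_normal_normal _ hp, mul_zero, add_zero]

lemma measurableSet_image_normalMap (hT : MeasurableSet T) :
    MeasurableSet (P.normalMap '' (P.reachSet ∩ Prod.snd ⁻¹' T)) :=
  (P.measurableSet_reachSet.inter (measurable_snd hT)).image_of_measurable_injOn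
    P.continuous_normalMap.measurable (P.injOn_normalMap_reachSet.mono inter_subset_left)

lemma volume_image_normalMap_reachSet (hT : MeasurableSet T) :
    volume (P.normalMap '' (P.reachSet ∩ Prod.snd ⁻¹' T)) = ∫⁻ t in T, P.parallelLength t := by
  have hm := P.measurableSet_reachSet.inter (measurable_snd hT)
  have hchange := lintegral_abs_det_fderiv_eq_addHaar_image (volume : Measure (ℝ × ℝ)) hm
    (fun p _ => (P.hasFDerivAt_coordE_normalMap p).hasFDerivWithinAt)
    (coordE.injective.comp_injOn (P.injOn_normalMap_reachSet.mono inter_subset_left))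
  calc volume (P.normalMap '' (P.reachSet ∩ Prod.snd ⁻¹' T))
      = ∫⁻ p in P.reachSet ∩ Prod.snd ⁻¹' T, P.speed p := by
        rw [← volume_coordE_image, image_image, ← hchange]
        exact setLIntegral_congr_fun hm fun p hp => P.ofReal_abs_det_frameMap_eq_speed hp.1.1
    _ = ∫⁻ p in univ ×ˢ T, P.reachSet.indicator P.speed p := by
        rw [setLIntegral_indicator P.measurableSet_reachSet, univ_prod]
    _ = ∫⁻ t in T, P.parallelLength t := by
        simp only [P.parallelLength_eq_lintegral_indicator]
        rw [Measure.volume_eq_prod, setLIntegral_prod_symm _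
          (P.measurable_speed.indicator P.measurableSet_reachSet).aemeasurable]
        simp only [Measure.restrict_univ]

lemma volume_image_normalMap_nearestSet_sdiff_reachSet :
    volume (P.normalMap '' (P.nearestSet \ P.reachSet)) = 0 := by
  rw [← volume_coordE_image, image_image]
  exact addHaar_image_eq_zero_of_differentiableOn_of_addHaar_eq_zero volume
    (fun p _ => (P.hasFDerivAt_coordE_normalMap p).differentiableAt.differentiableWithinAt)
    P.volume_nearestSet_sdiff_reachSet

lemma image_normalMap_inter_preimage_singleton (R : Set (ℝ × ℝ)) (t : ℝ) :
    P.normalMap '' (R ∩ Prod.snd ⁻¹' {t}) = (fun s => P.normalMap (s, t)) '' {s | (s, t) ∈ R} := by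
  ext x
  constructor
  · rintro ⟨⟨s, _⟩, ⟨hs, rfl⟩, rfl⟩
    exact ⟨s, hs, rfl⟩
  · rintro ⟨s, hs, rfl⟩
    exact ⟨(s, t), ⟨hs, rfl⟩, rfl⟩

lemma volume_domain_ne_top : volume P.domain ≠ ⊤ :=
  P.isBounded_domain.measure_lt_top.ne

lemma hausdorffMeasure_image_normalMap_reachSet (t : ℝ) :
    μH[1] (P.normalMap '' (P.reachSet ∩ Prod.snd ⁻¹' {t})) = P.parallelLength t := by
  rw [image_normalMap_inter_preimage_singleton]
  refine hausdorffMeasure_image_eq_setLIntegral_enorm (P.measurableSet_reachSet_slice t)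
    (measure_ne_top_of_subset (fun s hs => hs.1) P.volume_domain_ne_top)
    (fun s hs s' hs' h => congrArg Prod.fst (P.injOn_normalMap_reachSet hs hs' h))
    ((measurable_deriv _).add ((measurable_deriv _).const_smul t))
    fun s _ => (P.hasDerivAt_normalMap s t).hasDerivWithinAt

lemma ae_hausdorffMeasure_image_normalMap_eq_zero :
    ∀ᵐ t : ℝ, μH[1] (P.normalMap '' ((P.nearestSet \ P.reachSet) ∩ Prod.snd ⁻¹' {t})) = 0 := by
  have hswap : volume (Prod.swap ⁻¹' (P.nearestSet \ P.reachSet)) = 0 := by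
    rw [← P.volume_nearestSet_sdiff_reachSet]
    exact Measure.measurePreserving_swap.measure_preimage
      (P.measurableSet_nearestSet.diff P.measurableSet_reachSet).nullMeasurableSet
  filter_upwards [Measure.measure_ae_null_of_prod_null hswap] with t ht
  rw [image_normalMap_inter_preimage_singleton]
  exact hausdorffMeasure_image_eq_zero_of_hasDerivWithinAt ht
    fun s _ => (P.hasDerivAt_normalMap s t).hasDerivWithinAt

lemma hausdorffMeasure_arc : μH[1] P.arc = ∫⁻ s in P.domain, ‖deriv P.curve s‖ₑ :=
  hausdorffMeasure_image_eq_setLIntegral_enorm P.measurableSet_domain P.volume_domain_ne_top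
    P.injOn_curve (measurable_deriv _) fun s _ =>
      (P.contDiff_curve.differentiable one_ne_zero s).hasDerivAt.hasDerivWithinAt

lemma measurableSet_arc : MeasurableSet P.arc :=
  P.measurableSet_domain.image_of_measurable_injOn P.contDiff_curve.continuous.measurable
    P.injOn_curve

lemma setLIntegral_enorm_deriv_lt_top {f : ℝ → E2} (hf : ContDiff ℝ 1 f) :
    ∫⁻ s in P.domain, ‖deriv f s‖ₑ < ⊤ :=
  ((hf.continuous_deriv le_rfl).continuousOn.integrableOn_compact
    P.isBounded_domain.isCompact_closure).mono_set subset_closure |>.hasFiniteIntegral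

lemma hausdorffMeasure_arc_lt_top : μH[1] P.arc < ⊤ :=
  P.hausdorffMeasure_arc ▸ P.setLIntegral_enorm_deriv_lt_top P.contDiff_curve

lemma totalCurvature_lt_top : P.totalCurvature < ⊤ :=
  P.setLIntegral_enorm_deriv_lt_top P.contDiff_normal

lemma parallelLength_le (t : ℝ) :
    P.parallelLength t ≤ μH[1] P.arc + ‖t‖ₑ * P.totalCurvature := by
  rw [hausdorffMeasure_arc, totalCurvature, ← lintegral_const_mul _ (measurable_deriv _).enorm,
    ← lintegral_add_left (measurable_deriv _).enorm]
  refine (lintegral_mono_set fun s hs => hs.1).trans (lintegral_mono fun s => ?_)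
  exact (enorm_add_le _ _).trans_eq (by rw [enorm_smul])

end BoundaryPatch

/-- A family of patches with disjoint arcs which together contain, for each point off `K`, a
nearest point of `K`. -/
structure BoundaryAtlas (ι : Type*) (K : Set E2) where
  patch : ι → BoundaryPatch K
  pairwise_disjoint_arc : Pairwise fun j k => Disjoint (patch j).arc (patch k).arc
  exists_dist_eq_infDist : ∀ x, 0 < Metric.infDist x K →
    ∃ k, ∃ z ∈ (patch k).arc, dist x z = Metric.infDist x K

namespace BoundaryAtlas

variable {ι : Type*} {K : Set E2} (A : BoundaryAtlas ι K) {T : Set ℝ}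

/-- The union of the arcs of an atlas. -/
def support : Set E2 := ⋃ k, (A.patch k).arc

lemma setOf_infDist_mem_eq (hT : T ⊆ Ioi 0) :
    {x | Metric.infDist x K ∈ T} =
      (⋃ k, (A.patch k).normalMap '' ((A.patch k).reachSet ∩ Prod.snd ⁻¹' T)) ∪
      ⋃ k, (A.patch k).normalMap ''
        (((A.patch k).nearestSet \ (A.patch k).reachSet) ∩ Prod.snd ⁻¹' T) := by
  have hunion : ∀ P : BoundaryPatch K, P.normalMap '' (P.nearestSet ∩ Prod.snd ⁻¹' T) =
      P.normalMap '' (P.reachSet ∩ Prod.snd ⁻¹' T) ∪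
        P.normalMap '' ((P.nearestSet \ P.reachSet) ∩ Prod.snd ⁻¹' T) := fun P => by
    rw [← image_union, ← union_inter_distrib_right,
      union_sdiff_cancel P.reachSet_subset_nearestSet]
  rw [← iUnion_union_distrib]
  simp only [← hunion]
  ext x
  simp only [mem_ofPred_eq, mem_iUnion]
  constructor
  · intro hx
    obtain ⟨k, _, ⟨s, hs, rfl⟩, hz⟩ := A.exists_dist_eq_infDist x (hT hx)
    have hxs := (A.patch k).eq_curve_add_smul_normal s hs x hz
    exact ⟨k, (s, Metric.infDist x K), ⟨⟨hs, hT hx, congrArg (Metric.infDist · K) hxs.symm⟩, hx⟩,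
      hxs.symm⟩
  · rintro ⟨k, p, ⟨hp, hpT⟩, rfl⟩
    exact hp.2.2.symm ▸ hpT

lemma pairwise_disjoint_image_normalMap (T : Set ℝ) :
    Pairwise fun j k =>
      Disjoint ((A.patch j).normalMap '' ((A.patch j).reachSet ∩ Prod.snd ⁻¹' T))
        ((A.patch k).normalMap '' ((A.patch k).reachSet ∩ Prod.snd ⁻¹' T)) := by
  refine fun j k hjk => disjoint_left.2 ?_
  rintro _ ⟨p, ⟨hp, -⟩, rfl⟩ ⟨q, ⟨hq, -⟩, hqp⟩
  refine disjoint_left.1 (A.pairwise_disjoint_arc hjk) ⟨p.1, hp.1, rfl⟩ ⟨q.1, hq.1, ?_⟩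
  exact (A.patch j).curve_eq_of_normalMap_eq hp hq hqp.symm

lemma hausdorffMeasure_support_lt_top [Finite ι] : μH[1] A.support < ⊤ := by
  cases nonempty_fintype ι
  exact (measure_iUnion_fintype_le _ _).trans_lt
    (ENNReal.sum_lt_top.2 fun k _ => (A.patch k).hausdorffMeasure_arc_lt_top)

variable [Fintype ι]

/-- The length of the part of the parallel curve at distance `t` given by the sets `reachSet`. -/
def parallelLength (t : ℝ) : ℝ≥0∞ := ∑ k, (A.patch k).parallelLength t

/-- The total absolute curvature of the arcs of an atlas. -/
def totalCurvature : ℝ≥0∞ := ∑ k, (A.patch k).totalCurvature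

lemma measurable_parallelLength : Measurable A.parallelLength :=
  Finset.measurable_fun_sum _ fun k _ => (A.patch k).measurable_parallelLength

lemma measure_setOf_infDist_mem (hT : MeasurableSet T) (hT0 : T ⊆ Ioi 0) {μ : Measure E2}
    (hμ : ∀ k, μ ((A.patch k).normalMap ''
      (((A.patch k).nearestSet \ (A.patch k).reachSet) ∩ Prod.snd ⁻¹' T)) = 0) :
    μ {x | Metric.infDist x K ∈ T} =
      ∑ k, μ ((A.patch k).normalMap '' ((A.patch k).reachSet ∩ Prod.snd ⁻¹' T)) := by
  rw [A.setOf_infDist_mem_eq hT0, measure_congr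
      (union_ae_eq_left_of_ae_eq_empty (ae_eq_empty.2 (measure_iUnion_null hμ))),
    measure_iUnion (A.pairwise_disjoint_image_normalMap T)
      fun k => (A.patch k).measurableSet_image_normalMap hT, tsum_fintype]

theorem volume_setOf_infDist_mem (hT : MeasurableSet T) (hT0 : T ⊆ Ioi 0) :
    volume {x | Metric.infDist x K ∈ T} = ∫⁻ t in T, A.parallelLength t := by
  rw [A.measure_setOf_infDist_mem hT hT0 fun k => measure_mono_null (image_mono inter_subset_left)
    (A.patch k).volume_image_normalMap_nearestSet_sdiff_reachSet]
  simp only [(A.patch _).volume_image_normalMap_reachSet hT, parallelLength]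
  rw [lintegral_finsetSum _ fun k _ => (A.patch k).measurable_parallelLength]

theorem ae_hausdorffMeasure_setOf_infDist_eq :
    ∀ᵐ t : ℝ, 0 < t → μH[1] {x | Metric.infDist x K = t} = A.parallelLength t := by
  filter_upwards [ae_all_iff.2 fun k => (A.patch k).ae_hausdorffMeasure_image_normalMap_eq_zero]
    with t hnull ht
  refine (A.measure_setOf_infDist_mem (measurableSet_singleton t)
    (singleton_subset_iff.2 ht) hnull).trans (Finset.sum_congr rfl fun k _ => ?_)
  exact (A.patch k).hausdorffMeasure_image_normalMap_reachSet t

lemma hausdorffMeasure_support : μH[1] A.support = ∑ k, μH[1] (A.patch k).arc := by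
  rw [support, measure_iUnion A.pairwise_disjoint_arc fun k => (A.patch k).measurableSet_arc,
    tsum_fintype]

lemma totalCurvature_lt_top : A.totalCurvature < ⊤ :=
  ENNReal.sum_lt_top.2 fun k _ => (A.patch k).totalCurvature_lt_top

lemma parallelLength_le (t : ℝ) :
    A.parallelLength t ≤ μH[1] A.support + ‖t‖ₑ * A.totalCurvature := by
  rw [hausdorffMeasure_support, totalCurvature, Finset.mul_sum, ← Finset.sum_add_distrib]
  exact Finset.sum_le_sum fun k _ => (A.patch k).parallelLength_le t

end BoundaryAtlas

lemma measurableSet_disjointed {α : Type*} [MeasurableSpace α] {n : ℕ} {V : Fin n → Set α}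
    (hV : ∀ k, MeasurableSet (V k)) (k : Fin n) : MeasurableSet (disjointed V k) :=
  disjointedRec (fun _ _ h => h.diff (hV _)) (hV k)

lemma exists_boundaryAtlas_support_eq {K Γ : Set E2} (hΓ : IsCompact Γ)
    (hnearest : ∀ x, 0 < Metric.infDist x K → ∃ z ∈ Γ, dist x z = Metric.infDist x K)
    (hpatch : ∀ p ∈ Γ, ∃ (P : BoundaryPatch K) (W : Set E2),
      IsOpen W ∧ p ∈ W ∧ Γ ∩ W ⊆ P.arc) :
    ∃ (n : ℕ) (A : BoundaryAtlas (Fin n) K), A.support = Γ := by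
  choose P W hW using hpatch
  obtain ⟨F, hF⟩ := hΓ.elim_nhds_subcover' W fun p hp => (hW p hp).1.mem_nhds (hW p hp).2.1
  let e := F.equivFin.symm
  let V : Fin F.card → Set E2 := fun k => W (e k).1 (e k).1.2
  have hmeas : ∀ k, MeasurableSet (disjointed V k) :=
    measurableSet_disjointed fun k => (hW _ (e k).1.2).1.measurableSet
  let R : Fin F.card → BoundaryPatch K := fun k =>
    (P (e k).1 (e k).1.2).restrict (hΓ.measurableSet.inter (hmeas k))
  have harc : ∀ k, (R k).arc = Γ ∩ disjointed V k := fun k => by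
    rw [BoundaryPatch.arc_restrict, inter_eq_right]
    exact (inter_subset_inter_right _ (disjointed_subset V k)).trans (hW _ _).2.2
  have hcover : ⋃ k, (R k).arc = Γ := by
    simp only [harc]
    rw [← inter_iUnion, iUnion_disjointed, inter_eq_left]
    intro x hx
    obtain ⟨p, hp, hxp⟩ := mem_iUnion₂.1 (hF hx)
    obtain ⟨k, hk⟩ := e.surjective ⟨p, hp⟩
    obtain rfl : (e k).1 = p := congrArg Subtype.val hk
    exact mem_iUnion.2 ⟨k, hxp⟩
  refine ⟨F.card, ⟨R, fun j k hjk => ?_, fun x hx => ?_⟩, hcover⟩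
  · simp only [harc]
    exact (disjoint_disjointed V hjk).mono inter_subset_right inter_subset_right
  · obtain ⟨z, hz, hxz⟩ := hnearest x hx
    rw [← hcover] at hz
    obtain ⟨k, hk⟩ := mem_iUnion.1 hz
    exact ⟨k, z, hk, hxz⟩

/-! ### Regular boundaries -/

section Normal

variable {F : Type*} [NormedAddCommGroup F]

lemma eventually_add_smul_lt_of_fderiv_neg [NormedSpace ℝ F] {f : F → ℝ} {f' : F →L[ℝ] ℝ} {z w : F}
    (hf : HasFDerivAt f f' z) (hw : f' w < 0) : ∀ᶠ e : ℝ in 𝓝[>] 0, f (z + e • w) < f z := by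
  have hslope := (hasDerivAt_iff_tendsto_slope.1 (hf.hasLineDerivAt w)).mono_left
    (nhdsGT_le_nhdsNE 0)
  filter_upwards [hslope.eventually_lt_const hw, self_mem_nhdsWithin] with e hlt he
  rw [slope_def_field, zero_smul, add_zero, sub_zero, div_neg_iff] at hlt
  exact sub_neg.1 (hlt.resolve_left fun h => h.2.not_gt he).1

lemma eventually_add_smul_mem [NormedSpace ℝ F] {U : Set F} {z : F} (hU : U ∈ 𝓝 z) (w : F) :
    ∀ᶠ e : ℝ in 𝓝[>] 0, z + e • w ∈ U := by
  have hcont : Continuous fun e : ℝ => z + e • w := by fun_prop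
  exact nhdsWithin_le_nhds (hcont.continuousAt.preimage_mem_nhds (by simpa using hU))

variable [InnerProductSpace ℝ F]

lemma inner_nonpos_of_eventually_norm_le_norm_sub_smul {v w : F}
    (h : ∀ᶠ e : ℝ in 𝓝[>] 0, ‖v‖ ≤ ‖v - e • w‖) : inner ℝ v w ≤ 0 := by
  have hle : ∀ᶠ e : ℝ in 𝓝[>] 0, inner ℝ v w ≤ e * ‖w‖ ^ 2 / 2 := by
    filter_upwards [h, self_mem_nhdsWithin] with e hnorm he
    have hsq := pow_le_pow_left₀ (norm_nonneg _) hnorm 2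
    rw [norm_sub_sq_real, inner_smul_right, norm_smul, mul_pow, Real.norm_eq_abs, sq_abs] at hsq
    refine le_of_mul_le_mul_left ?_ (mem_Ioi.1 he)
    linarith
  have hlim : Filter.Tendsto (fun e : ℝ => e * ‖w‖ ^ 2 / 2) (𝓝[>] 0) (𝓝 0) :=
    tendsto_nhdsWithin_of_tendsto_nhds
      (Continuous.tendsto' (by fun_prop) 0 0 (by rw [zero_mul, zero_div]))
  exact ge_of_tendsto hlim hle

lemma eq_norm_smul_normalize_of_forall_inner_nonpos {v D : F} (hD : D ≠ 0)
    (h : ∀ w, inner ℝ D w < 0 → inner ℝ v w ≤ 0) : v = ‖v‖ • NormedSpace.normalize D := by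
  obtain rfl | hv := eq_or_ne v 0
  · simp
  have hDpos := norm_pos_iff.2 hD
  have hvpos := norm_pos_iff.2 hv
  have hcauchy := real_inner_le_norm v D
  have hδ : ∀ δ > 0, ‖v‖ * (‖v‖ * ‖D‖ - inner ℝ v D) ≤ δ * inner ℝ v D := fun δ hδ => by
    have hw := h (‖D‖ • v - (‖v‖ + δ) • D) ?_
    · rw [inner_sub_right, inner_smul_right, inner_smul_right, real_inner_self_eq_norm_sq] at hw
      linarith
    · rw [inner_sub_right, inner_smul_right, inner_smul_right, real_inner_self_eq_norm_sq,
        real_inner_comm]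
      nlinarith [mul_nonneg hDpos.le (sub_nonneg.2 hcauchy), mul_pos hδ (pow_pos hDpos 2)]
  have hlim : Filter.Tendsto (fun δ : ℝ => δ * inner ℝ v D) (𝓝[>] 0) (𝓝 0) :=
    tendsto_nhdsWithin_of_tendsto_nhds
      (Continuous.tendsto' (by fun_prop) 0 0 (by rw [zero_mul]))
  have hle := ge_of_tendsto hlim (eventually_mem_nhdsWithin.mono hδ)
  have heq : inner ℝ v D = ‖v‖ * ‖D‖ :=
    le_antisymm hcauchy (sub_nonpos.1 (nonpos_of_mul_nonpos_right hle hvpos))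
  rw [NormedSpace.normalize, smul_comm, ← inner_eq_norm_mul_iff_real.1 heq, smul_smul,
    inv_mul_cancel₀ hDpos.ne', one_smul]

lemma contDiffAt_normalize {n : WithTop ℕ∞} {x : F} (hx : x ≠ 0) :
    ContDiffAt ℝ n NormedSpace.normalize x :=
  ((contDiffAt_norm ℝ hx).inv (norm_ne_zero_iff.2 hx)).smul contDiffAt_id

end Normal

lemma notMem_of_dist_eq_infDist {E : Type*} [NormedAddCommGroup E] [NormedSpace ℝ E] {Ω : Set E}
    (hΩ : IsOpen Ω) {x z : E} (hx : 0 < Metric.infDist x Ω) (hz : dist x z = Metric.infDist x Ω) :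
    z ∉ Ω := fun hzΩ => by
  obtain ⟨e, hmem, he0, he1⟩ := ((eventually_add_smul_mem (hΩ.mem_nhds hzΩ) (x - z)).and
    (Ioo_mem_nhdsGT one_pos)).exists
  have hle := Metric.infDist_le_dist_of_mem (x := x) hmem
  have hsub : x - (z + e • (x - z)) = (1 - e) • (x - z) := by module
  rw [dist_eq_norm, hsub, norm_smul, Real.norm_eq_abs, abs_of_pos (sub_pos.2 he1),
    ← dist_eq_norm, hz] at hle
  nlinarith

lemma mem_frontier_of_dist_eq_infDist {E : Type*} [NormedAddCommGroup E] [NormedSpace ℝ E]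
    {Ω : Set E} (hΩ : IsOpen Ω) {x z : E} (hx : 0 < Metric.infDist x Ω) (hzΩ : z ∈ closure Ω)
    (hz : dist x z = Metric.infDist x Ω) : z ∈ frontier Ω :=
  hΩ.frontier_eq ▸ ⟨hzΩ, notMem_of_dist_eq_infDist hΩ hx hz⟩

/-- `f` is a `C^n` function defining `Ω` in the open set `U`: it has no critical point in `U`, and
is negative there exactly on `Ω`. -/
structure IsDefiningFunctionOn {E : Type*} [NormedAddCommGroup E] [NormedSpace ℝ E]
    (n : WithTop ℕ∞) (f : E → ℝ) (Ω U : Set E) : Prop where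
  isOpen : IsOpen U
  contDiff : ContDiff ℝ n f
  fderiv_ne_zero : ∀ y ∈ U, fderiv ℝ f y ≠ 0
  inter_eq : Ω ∩ U = {y | y ∈ U ∧ f y < 0}

/-- The boundary of `Ω` is locally the regular zero set of a `C^n` function which is negative
inside and nonnegative outside `Ω`. -/
def HasContDiffBoundary {E : Type*} [NormedAddCommGroup E] [NormedSpace ℝ E]
    (n : WithTop ℕ∞) (Ω : Set E) : Prop :=
  ∀ x ∈ frontier Ω, ∃ (U : Set E) (f : E → ℝ), x ∈ U ∧ IsDefiningFunctionOn n f Ω U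

namespace IsDefiningFunctionOn

lemma eq_zero_of_mem_frontier {E : Type*} [NormedAddCommGroup E] [NormedSpace ℝ E]
    {n : WithTop ℕ∞} {f : E → ℝ} {Ω U : Set E} (h : IsDefiningFunctionOn n f Ω U) (hΩ : IsOpen Ω)
    {y : E} (hy : y ∈ frontier Ω) (hyU : y ∈ U) : f y = 0 := by
  rw [hΩ.frontier_eq] at hy
  have hneg : ∀ {z}, z ∈ Ω ∩ U ↔ z ∈ U ∧ f z < 0 := fun {z} => h.inter_eq ▸ Iff.rfl
  refine le_antisymm ?_ (not_lt.1 fun hlt => hy.2 (hneg.2 ⟨hyU, hlt⟩).1)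
  have hmem : y ∈ closure (U ∩ Ω) := h.isOpen.inter_closure ⟨hyU, hy.1⟩
  rw [inter_comm] at hmem
  exact closure_minimal (fun z hz => (hneg.1 hz).2.le)
    (isClosed_le h.contDiff.continuous continuous_const) hmem

variable {F : Type*} [NormedAddCommGroup F] [InnerProductSpace ℝ F] [CompleteSpace F]
  {n : WithTop ℕ∞} {f : F → ℝ} {Ω U : Set F}

lemma gradient_ne_zero (h : IsDefiningFunctionOn n f Ω U) {y : F} (hy : y ∈ U) :
    gradient f y ≠ 0 := fun h0 =>
  h.fderiv_ne_zero y hy (by rw [← toDual_gradient, h0, map_zero])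

lemma eq_add_infDist_smul_normalize_gradient (h : IsDefiningFunctionOn n f Ω U) (hn : n ≠ 0)
    {x z : F} (hzU : z ∈ U) (hfz : f z = 0) (hz : dist x z = Metric.infDist x Ω) :
    x = z + Metric.infDist x Ω • NormedSpace.normalize (gradient f z) := by
  have hnorm : ‖x - z‖ = Metric.infDist x Ω := by rw [← hz, dist_eq_norm]
  have hcone : ∀ w, inner ℝ (gradient f z) w < 0 → inner ℝ (x - z) w ≤ 0 := fun w hw => by
    refine inner_nonpos_of_eventually_norm_le_norm_sub_smul ?_
    rw [inner_gradient_left] at hw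
    filter_upwards [eventually_add_smul_mem (h.isOpen.mem_nhds hzU) w,
      eventually_add_smul_lt_of_fderiv_neg (h.contDiff.differentiable hn z).hasFDerivAt hw]
      with e heU he
    have hmem : z + e • w ∈ Ω ∩ U := h.inter_eq ▸ ⟨heU, he.trans_eq hfz⟩
    rw [hnorm, sub_sub, ← dist_eq_norm]
    exact Metric.infDist_le_dist_of_mem hmem.1
  rw [← hnorm, ← eq_norm_smul_normalize_of_forall_inner_nonpos (h.gradient_ne_zero hzU) hcone,
    add_sub_cancel]

end IsDefiningFunctionOn

lemma contDiff_gradient {F : Type*} [NormedAddCommGroup F] [InnerProductSpace ℝ F]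
    [CompleteSpace F] {m n : WithTop ℕ∞} {f : F → ℝ} (hf : ContDiff ℝ n f) (hmn : m + 1 ≤ n) :
    ContDiff ℝ m (gradient f) :=
  (InnerProductSpace.toDual ℝ F).symm.contDiff.comp (hf.fderiv_right hmn)

lemma inner_deriv_self_eq_zero_of_eventually_norm_eq {F : Type*} [NormedAddCommGroup F]
    [InnerProductSpace ℝ F] {ν : ℝ → F} {s c : ℝ} (hν : DifferentiableAt ℝ ν s)
    (h : ∀ᶠ t in 𝓝 s, ‖ν t‖ = c) : inner ℝ (deriv ν s) (ν s) = 0 := by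
  have hsq : HasDerivAt (fun t => ‖ν t‖ ^ 2) 0 s :=
    (hasDerivAt_const s (c ^ 2)).congr_of_eventuallyEq (h.mono fun t ht => by simp only [ht])
  have := hν.hasDerivAt.norm_sq.unique hsq
  rw [real_inner_comm]
  linarith

lemma inner_deriv_gradient_eq_zero_of_eventually_eq {F : Type*} [NormedAddCommGroup F]
    [InnerProductSpace ℝ F] [CompleteSpace F] {f : F → ℝ} {γ : ℝ → F} {s c : ℝ}
    (hf : DifferentiableAt ℝ f (γ s)) (hγ : DifferentiableAt ℝ γ s)
    (h : ∀ᶠ t in 𝓝 s, f (γ t) = c) : inner ℝ (deriv γ s) (gradient f (γ s)) = 0 := by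
  rw [real_inner_comm, inner_gradient_left]
  exact (hf.hasFDerivAt.comp_hasDerivAt s hγ.hasDerivAt).unique
    ((hasDerivAt_const s c).congr_of_eventuallyEq h)

lemma exists_contDiff_eventuallyEq {E E' : Type*} [NormedAddCommGroup E] [NormedSpace ℝ E]
    [HasContDiffBump E] [NormedAddCommGroup E'] [NormedSpace ℝ E'] {n : ℕ} {g : E → E'} {x₀ : E}
    (hg : ContDiffAt ℝ n g x₀) : ∃ G : E → E', ContDiff ℝ n G ∧ G =ᶠ[𝓝 x₀] g := by
  obtain ⟨r, hr, hball⟩ := Metric.nhds_basis_closedBall.eventually_iff.1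
    (hg.eventually (by simp))
  let b : ContDiffBump x₀ := ⟨r / 2, r, half_pos hr, half_lt_self hr⟩
  refine ⟨fun x => b x • g x, contDiff_iff_contDiffAt.2 fun x => ?_, ?_⟩
  · by_cases hx : x ∈ Metric.closedBall x₀ r
    · exact b.contDiffAt.smul (hball hx)
    · have hzero : (b : E → ℝ) =ᶠ[𝓝 x] 0 :=
        notMem_tsupport_iff_eventuallyEq.1 (by rwa [b.tsupport_eq])
      exact (contDiffAt_const (c := (0 : E'))).congr_of_eventuallyEq
        (hzero.mono fun y hy => by simp only [hy, Pi.zero_apply, zero_smul])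
  · filter_upwards [b.eventuallyEq_one] with x hx
    rw [hx, Pi.one_apply, one_smul]

section LevelCurve

variable {E : Type*} [NormedAddCommGroup E] [NormedSpace ℝ E] [FiniteDimensional ℝ E]

lemma exists_isCompl_ker_of_finrank_eq_two (hE : Module.finrank ℝ E = 2) {f' : E →L[ℝ] ℝ}
    (hf' : f' ≠ 0) : ∃ ℓ : E →L[ℝ] ℝ, ℓ.range = ⊤ ∧ IsCompl f'.ker ℓ.ker := by
  obtain ⟨C, hC⟩ := f'.ker.exists_isCompl
  have hf'₀ : f'.toLinearMap ≠ 0 := mod_cast hf'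
  have hker : Module.finrank ℝ f'.ker = Module.finrank ℝ ℝ := by
    have hrank := Module.Dual.finrank_ker_add_one_of_ne_zero hf'₀
    rw [Module.finrank_self]
    omega
  let e := LinearEquiv.ofFinrankEq f'.ker ℝ hker
  refine ⟨(e.toLinearMap ∘ₗ f'.ker.projectionOnto C hC).toContinuousLinearMap, ?_, ?_⟩
  · simp [LinearMap.range_comp]
  · simpa [LinearMap.ker_comp] using hC

lemma exists_levelCurve (hE : Module.finrank ℝ E = 2) {n : WithTop ℕ∞} (hn : n ≠ 0) {f : E → ℝ}
    {p : E} (hf : ContDiffAt ℝ n f p) (hf' : fderiv ℝ f p ≠ 0) (hfp : f p = 0) :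
    ∃ (γ : ℝ → E) (ℓ : E →L[ℝ] ℝ), ContDiffAt ℝ n γ (ℓ p) ∧ γ (ℓ p) = p ∧
      (∀ᶠ s in 𝓝 (ℓ p), f (γ s) = 0 ∧ ℓ (γ s) = s) ∧ ∀ᶠ y in 𝓝 p, f y = 0 → γ (ℓ y) = y := by
  obtain ⟨ℓ, hℓ, hcompl⟩ := exists_isCompl_ker_of_finrank_eq_two hE hf'
  have := FiniteDimensional.complete ℝ E
  let φ : ImplicitFunctionData ℝ E ℝ ℝ :=
    { leftFun := f
      leftDeriv := fderiv ℝ f p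
      rightFun := ℓ
      rightDeriv := ℓ
      pt := p
      hasStrictFDerivAt_leftFun := hf.hasStrictFDerivAt hn
      hasStrictFDerivAt_rightFun := ℓ.hasStrictFDerivAt
      range_leftDeriv := Module.Dual.range_eq_top_of_ne_zero (mod_cast hf')
      range_rightDeriv := hℓ
      isCompl_ker := hcompl }
  have hpt : φ.prodFun φ.pt = (0, ℓ p) := Prod.ext hfp rfl
  have hslice : Continuous fun s : ℝ => ((0 : ℝ), s) := by fun_prop
  refine ⟨φ.implicitFunction 0, ℓ, ?_, ?_, ?_, ?_⟩
  · have hφ := φ.contDiffAt_implicitFunction hf ℓ.contDiff.contDiffAt hn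
    rw [hpt] at hφ
    exact hφ.comp _ (contDiffAt_const.prodMk contDiffAt_id)
  · exact (congrArg (φ.implicitFunction · (ℓ p)) hfp.symm).trans
      φ.implicitFunction_apply_image.self_of_nhds
  · have hφ := φ.prodFun_implicitFunction
    rw [hpt] at hφ
    exact (hslice.continuousAt.eventually hφ).mono fun s hs => Prod.ext_iff.1 hs
  · exact φ.implicitFunction_apply_image.mono fun y hy hfy =>
      (congrArg (φ.implicitFunction · (ℓ y)) hfy.symm).trans hy

end LevelCurve

namespace IsDefiningFunctionOn

variable {f : E2 → ℝ} {Ω U : Set E2} {p : E2}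

lemma exists_curve_normal (h : IsDefiningFunctionOn 2 f Ω U) (hpU : p ∈ U) (hfp : f p = 0) :
    ∃ (γ ν : ℝ → E2) (ℓ : E2 →L[ℝ] ℝ), ContDiff ℝ 1 γ ∧ ContDiff ℝ 1 ν ∧
      (∀ᶠ s in 𝓝 (ℓ p), γ s ∈ U ∧ f (γ s) = 0 ∧ ℓ (γ s) = s ∧
        ν s = NormedSpace.normalize (gradient f (γ s))) ∧
      ∀ᶠ y in 𝓝 p, f y = 0 → γ (ℓ y) = y := by
  obtain ⟨γ₀, ℓ, hγ₀, hγ₀p, hlevel, hγ₀ℓ⟩ := exists_levelCurve finrank_euclideanSpace_fin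
    one_ne_zero (h.contDiff.of_le one_le_two).contDiffAt (h.fderiv_ne_zero p hpU) hfp
  obtain ⟨γ, hγ, hγγ₀⟩ := exists_contDiff_eventuallyEq (n := 1) hγ₀
  have hγp : γ (ℓ p) = p := hγγ₀.self_of_nhds.trans hγ₀p
  have hγU : ∀ᶠ s in 𝓝 (ℓ p), γ s ∈ U :=
    hγ.continuous.continuousAt.preimage_mem_nhds (h.isOpen.mem_nhds (by rwa [hγp]))
  have hnormal : ContDiffAt ℝ 1 (fun s => NormedSpace.normalize (gradient f (γ s))) (ℓ p) :=
    ContDiffAt.comp (g := NormedSpace.normalize) (f := fun s => gradient f (γ s)) (ℓ p)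
      (contDiffAt_normalize (h.gradient_ne_zero hγU.self_of_nhds))
      ((contDiff_gradient h.contDiff one_add_one_eq_two.le).comp hγ).contDiffAt
  obtain ⟨ν, hν, hνγ⟩ := exists_contDiff_eventuallyEq (n := 1) hnormal
  refine ⟨γ, ν, ℓ, hγ, hν, ?_, ?_⟩
  · filter_upwards [hγU, hγγ₀, hlevel, hνγ] with s hsU hs hs₀ hsν
    exact ⟨hsU, by rw [hs, hs₀.1], by rw [hs, hs₀.2], hsν⟩
  · filter_upwards [hγ₀ℓ, ℓ.continuous.continuousAt.eventually hγγ₀] with y hy hyγ hfy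
    rw [hyγ, hy hfy]

lemma exists_boundaryPatch (h : IsDefiningFunctionOn 2 f Ω U) (hΩ : IsOpen Ω)
    (hp : p ∈ frontier Ω) (hpU : p ∈ U) : ∃ (P : BoundaryPatch (closure Ω)) (W : Set E2),
      IsOpen W ∧ p ∈ W ∧ frontier Ω ∩ W ⊆ P.arc := by
  have hfrontier : ∀ y ∈ frontier Ω, y ∈ U → f y = 0 := fun y => h.eq_zero_of_mem_frontier hΩ
  obtain ⟨γ, ν, ℓ, hγ, hν, hlocal, hγℓ⟩ := h.exists_curve_normal hpU (hfrontier p hp hpU)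
  obtain ⟨ε, hε, hball⟩ := Metric.eventually_nhds_iff_ball.1 hlocal
  set I := Metric.ball (ℓ p) ε
  have hI : ∀ s ∈ I, I ∈ 𝓝 s := fun s => Metric.isOpen_ball.mem_nhds
  have hν₁ : ∀ s ∈ I, ‖ν s‖ = 1 := fun s hs => by
    rw [(hball s hs).2.2.2]
    exact NormedSpace.norm_normalize_eq_one_iff.2 (h.gradient_ne_zero (hball s hs).1)
  have hγ' := hγ.differentiable one_ne_zero
  let P : BoundaryPatch (closure Ω) :=
    { domain := I ∩ γ ⁻¹' frontier Ω
      curve := γ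
      normal := ν
      measurableSet_domain := measurableSet_ball.inter
        (hγ.continuous.measurable isClosed_frontier.measurableSet)
      isBounded_domain := Metric.isBounded_ball.subset inter_subset_left
      contDiff_curve := hγ
      contDiff_normal := hν
      mapsTo_curve := fun s hs => frontier_subset_closure hs.2
      injOn_curve := fun s hs t ht hst => by
        rw [← (hball s hs.1).2.2.1, hst, (hball t ht.1).2.2.1]
      norm_normal := fun s hs => hν₁ s hs.1
      inner_deriv_curve_normal := fun s hs => by
        rw [(hball s hs.1).2.2.2, NormedSpace.normalize, inner_smul_right,
          inner_deriv_gradient_eq_zero_of_eventually_eq (h.contDiff.differentiable two_ne_zero _)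
            (hγ' s) (Filter.mem_of_superset (hI s hs.1) fun t ht => (hball t ht).2.1), mul_zero]
      inner_deriv_normal_normal := fun s hs =>
        inner_deriv_self_eq_zero_of_eventually_norm_eq (hν.differentiable one_ne_zero s)
          (Filter.mem_of_superset (hI s hs.1) hν₁)
      eq_curve_add_smul_normal := fun s hs x hx => by
        rw [Metric.infDist_closure] at hx ⊢
        rw [(hball s hs.1).2.2.2]
        exact h.eq_add_infDist_smul_normalize_gradient two_ne_zero (hball s hs.1).1
          (hball s hs.1).2.1 hx }
  obtain ⟨V, hVγ, hV, hpV⟩ := eventually_nhds_iff.1 hγℓ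
  refine ⟨P, U ∩ V ∩ ℓ ⁻¹' I,
    (h.isOpen.inter hV).inter (Metric.isOpen_ball.preimage ℓ.continuous),
    ⟨⟨hpU, hpV⟩, Metric.mem_ball_self hε⟩, ?_⟩
  rintro y ⟨hy, ⟨hyU, hyV⟩, hyI⟩
  have hγy := hVγ y hyV (hfrontier y hy hyU)
  exact ⟨ℓ y, ⟨hyI, by rwa [mem_preimage, hγy]⟩, hγy⟩

end IsDefiningFunctionOn

lemma deriv_le_of_forall_sub_le {F : ℝ → ℝ} {r L C B D : ℝ} (hr : 0 < r) (hF : HasDerivAt F D r)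
    (hstep : ∀ h > 0, ∀ n : ℕ, F ((n + 1) * h) - F (n * h) ≤ F h - F 0 + B * (n * h) * h)
    (hzero : ∀ h > 0, F h - F 0 ≤ h * (L + h * C)) : D ≤ L + B * r := by
  set h : ℕ → ℝ := fun n => r / (n + 1)
  have hpos : ∀ n, 0 < h n := fun n => by positivity
  have hh : Filter.Tendsto h Filter.atTop (𝓝 0) := by
    have := (tendsto_one_div_add_atTop_nhds_zero_nat (𝕜 := ℝ)).const_mul r
    simpa only [mul_one_div, mul_zero] using this
  have hslope : Filter.Tendsto (fun n => (h n)⁻¹ • (F (r + h n) - F r)) Filter.atTop (𝓝 D) :=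
    (hasDerivAt_iff_tendsto_slope_zero.1 hF).comp
      (tendsto_nhdsWithin_iff.2 ⟨hh, Filter.Eventually.of_forall fun n => (hpos n).ne'⟩)
  have hbound : Filter.Tendsto (fun n => L + h n * C + B * r) Filter.atTop (𝓝 (L + B * r)) := by
    simpa only [zero_mul, add_zero] using ((hh.mul_const C).const_add L).add_const (B * r)
  refine le_of_tendsto_of_tendsto' hslope hbound fun n => ?_
  have hn : ((n + 1 : ℕ) : ℝ) * h n = r := by
    push_cast
    exact mul_div_cancel₀ r (by positivity)
  have hstep_n := hstep (h n) (hpos n) (n + 1)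
  rw [add_mul, hn, one_mul] at hstep_n
  rw [smul_eq_mul, inv_mul_le_iff₀ (hpos n)]
  linarith [hzero (h n) (hpos n)]

lemma cthickening_eq_union_setOf_infDist_mem_Ioc {X : Type*} [PseudoMetricSpace X] {K : Set X}
    {t : ℝ} (hK : IsClosed K) (hne : K.Nonempty) (ht : 0 ≤ t) :
    Metric.cthickening t K = K ∪ {x | Metric.infDist x K ∈ Ioc 0 t} := by
  ext x
  rw [Metric.mem_cthickening_iff, ENNReal.le_ofReal_iff_toReal_le (Metric.infEDist_ne_top hne) ht,
    mem_union, hK.mem_iff_infDist_zero hne]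
  change Metric.infDist x K ≤ t ↔ _ ∨ 0 < Metric.infDist x K ∧ Metric.infDist x K ≤ t
  rcases (Metric.infDist_nonneg : 0 ≤ Metric.infDist x K).eq_or_lt with hx | hx
  · simp only [← hx, ht, true_or]
  · simp only [hx, hx.ne', false_or, true_and]

namespace BoundaryAtlas

variable {ι : Type*} [Fintype ι] {K : Set E2} (A : BoundaryAtlas ι K) {T : Set ℝ} {r t : ℝ} {N : ℕ}

lemma parallelLength_lt_top (t : ℝ) : A.parallelLength t < ⊤ :=
  (A.parallelLength_le t).trans_lt (ENNReal.add_lt_top.2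
    ⟨A.hausdorffMeasure_support_lt_top, ENNReal.mul_lt_top enorm_lt_top A.totalCurvature_lt_top⟩)

lemma toReal_parallelLength_le (t : ℝ) :
    (A.parallelLength t).toReal ≤ (μH[1] A.support).toReal + |t| * A.totalCurvature.toReal := by
  have hcurv := ENNReal.mul_lt_top (enorm_lt_top (x := t)) A.totalCurvature_lt_top
  have hlen := A.hausdorffMeasure_support_lt_top
  refine (ENNReal.toReal_mono (ENNReal.add_lt_top.2 ⟨hlen, hcurv⟩).ne
    (A.parallelLength_le t)).trans_eq ?_
  rw [ENNReal.toReal_add hlen.ne hcurv.ne, ENNReal.toReal_mul, toReal_enorm, norm_eq_abs]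

lemma locallyIntegrable_toReal_parallelLength :
    LocallyIntegrable (fun t => (A.parallelLength t).toReal) := by
  have hbound : Continuous fun t : ℝ =>
      (μH[1] A.support).toReal + |t| * A.totalCurvature.toReal := by fun_prop
  refine (hbound.locallyIntegrable (μ := volume)).mono
    A.measurable_parallelLength.ennreal_toReal.aestronglyMeasurable
    (Filter.Eventually.of_forall fun t => ?_)
  rw [norm_of_nonneg ENNReal.toReal_nonneg]
  exact (A.toReal_parallelLength_le t).trans (le_abs_self _)

lemma volumeReal_setOf_infDist_mem (hT : MeasurableSet T) (hT0 : T ⊆ Ioi 0) :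
    volume.real {x | Metric.infDist x K ∈ T} = ∫ t in T, (A.parallelLength t).toReal := by
  rw [measureReal_def, A.volume_setOf_infDist_mem hT hT0,
    integral_toReal A.measurable_parallelLength.aemeasurable
      (Filter.Eventually.of_forall A.parallelLength_lt_top)]

lemma volumeReal_setOf_infDist_mem_Ioo (ht : 0 ≤ t) :
    volume.real {x | Metric.infDist x K ∈ Ioo 0 t} =
      ∫ s in 0..t, (A.parallelLength s).toReal := by
  rw [A.volumeReal_setOf_infDist_mem measurableSet_Ioo Ioo_subset_Ioi_self,
    intervalIntegral.integral_of_le ht, integral_Ioc_eq_integral_Ioo]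

lemma parallelArea_eq_add_integral (hK : IsCompact K) (hne : K.Nonempty) (ht : 0 ≤ t) :
    parallelArea K t = volume.real K + ∫ s in 0..t, (A.parallelLength s).toReal := by
  have hthick := cthickening_eq_union_setOf_infDist_mem_Ioc hK.isClosed hne ht
  have hdisj : Disjoint K {x | Metric.infDist x K ∈ Ioc 0 t} := disjoint_left.2 fun x hx hxt =>
    hxt.1.ne' (Metric.infDist_zero_of_mem hx)
  have hfin : volume {x | Metric.infDist x K ∈ Ioc 0 t} ≠ ⊤ :=
    ne_top_of_le_ne_top hK.cthickening.measure_lt_top.ne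
      (measure_mono (hthick.symm ▸ subset_union_right))
  rw [parallelArea, hthick, measureReal_union hdisj
      ((Metric.continuous_infDist_pt K).measurable measurableSet_Ioc) hK.measure_lt_top.ne hfin,
    A.volumeReal_setOf_infDist_mem measurableSet_Ioc Ioc_subset_Ioi_self,
    intervalIntegral.integral_of_le ht]

lemma integral_toReal_parallelLength_le (ht : 0 ≤ t) :
    ∫ s in 0..t, (A.parallelLength s).toReal ≤
      t * ((μH[1] A.support).toReal + t * A.totalCurvature.toReal) := by
  calc ∫ s in 0..t, (A.parallelLength s).toReal
      ≤ ∫ _ in 0..t, ((μH[1] A.support).toReal + t * A.totalCurvature.toReal) := by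
        refine intervalIntegral.integral_mono_on ht
          (intervalIntegrable_iff.2 <|
            (A.locallyIntegrable_toReal_parallelLength.integrableOn_isCompact
              isCompact_uIcc).mono_set uIoc_subset_uIcc)
          intervalIntegrable_const fun s hs => (A.toReal_parallelLength_le s).trans ?_
        rw [abs_of_nonneg hs.1]
        gcongr
        exact hs.2
    _ = t * ((μH[1] A.support).toReal + t * A.totalCurvature.toReal) := by
        rw [intervalIntegral.integral_const, sub_zero, smul_eq_mul]

lemma le_of_hasDerivAt_integral_parallelLength {D : ℝ} (hK : IsUnionOfContinua N K)
    (hne : K.Nonempty) (hr : 0 < r)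
    (hD : HasDerivAt (fun ρ => ∫ s in 0..ρ, (A.parallelLength s).toReal) D r) :
    D ≤ (μH[1] A.support).toReal + 2 * π * N * r := by
  have harea : ∀ t, 0 ≤ t →
      parallelArea K t = volume.real K + ∫ s in 0..t, (A.parallelLength s).toReal :=
    fun t => A.parallelArea_eq_add_integral hK.isCompact hne
  refine deriv_le_of_forall_sub_le (C := A.totalCurvature.toReal) hr hD
    (fun h hh n => ?_) fun h hh => ?_
  · have hstep := hK.parallelArea_succ_sub_le hh n
    rw [harea _ (by positivity), harea _ (by positivity), harea _ hh.le, harea _ le_rfl] at hstep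
    linarith
  · rw [intervalIntegral.integral_same, sub_zero]
    exact A.integral_toReal_parallelLength_le hh.le

end BoundaryAtlas

theorem BoundaryAtlas.ae_hasDerivAt_and_hausdorffMeasure_le {ι : Type*} [Finite ι] {K : Set E2}
    (A : BoundaryAtlas ι K) {N : ℕ} (hK : IsUnionOfContinua N K) (hne : K.Nonempty) :
    ∀ᵐ r : ℝ, 0 < r →
      HasDerivAt (fun ρ => (volume {x | Metric.infDist x K ∈ Ioo 0 ρ}).toReal)
        (μH[1] {x | Metric.infDist x K = r}).toReal r ∧
      (μH[1] {x | Metric.infDist x K = r}).toReal ≤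
        (μH[1] A.support).toReal + 2 * π * N * r := by
  cases nonempty_fintype ι
  filter_upwards [A.ae_hausdorffMeasure_setOf_infDist_eq,
    LocallyIntegrable.ae_hasDerivAt_integral A.locallyIntegrable_toReal_parallelLength]
    with r hlength hderiv hr
  rw [hlength hr]
  refine ⟨(hderiv 0).congr_of_eventuallyEq ?_,
    A.le_of_hasDerivAt_integral_parallelLength hK hne hr (hderiv 0)⟩
  filter_upwards [lt_mem_nhds hr] with ρ hρ
  exact A.volumeReal_setOf_infDist_mem_Ioo hρ.le

section OpenSet

variable {E : Type*} [NormedAddCommGroup E] [NormedSpace ℝ E] [ProperSpace E] {Ω : Set E}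

lemma exists_mem_frontier_dist_eq_infDist_closure {x : E} (hΩ : IsOpen Ω) (hne : Ω.Nonempty)
    (hx : 0 < Metric.infDist x (closure Ω)) :
    ∃ z ∈ frontier Ω, dist x z = Metric.infDist x (closure Ω) := by
  obtain ⟨z, hz, hxz⟩ := isClosed_closure.exists_infDist_eq_dist hne.closure x
  rw [Metric.infDist_closure] at hx hxz ⊢
  exact ⟨z, mem_frontier_of_dist_eq_infDist hΩ hx hz hxz.symm, hxz.symm⟩

lemma infDist_frontier_eq_infDist_closure {x : E} (hΩ : IsOpen Ω) (hne : Ω.Nonempty)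
    (hx : 0 < Metric.infDist x (closure Ω)) :
    Metric.infDist x (frontier Ω) = Metric.infDist x (closure Ω) := by
  obtain ⟨z, hz, hxz⟩ := exists_mem_frontier_dist_eq_infDist_closure hΩ hne hx
  exact le_antisymm (hxz ▸ Metric.infDist_le_dist_of_mem hz)
    (Metric.infDist_le_infDist_of_subset frontier_subset_closure ⟨z, hz⟩)

lemma setOf_notMem_closure_and_infDist_frontier_mem (hΩ : IsOpen Ω) (hne : Ω.Nonempty)
    (T : Set ℝ) : {x ∈ (closure Ω)ᶜ | Metric.infDist x (frontier Ω) ∈ T} =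
      {x | Metric.infDist x (closure Ω) ∈ Ioi 0 ∩ T} := by
  ext x
  have hpos : x ∈ (closure Ω)ᶜ ↔ 0 < Metric.infDist x (closure Ω) :=
    isClosed_closure.notMem_iff_infDist_pos hne.closure
  exact and_congr hpos Iff.rfl |>.trans <| and_congr_right fun hx => by
    rw [infDist_frontier_eq_infDist_closure hΩ hne hx]

end OpenSet

lemma exists_boundaryAtlas_support_eq_frontier {Ω : Set E2} (hop : IsOpen Ω)
    (hbd : Bornology.IsBounded Ω) (hne : Ω.Nonempty) (hsm : HasContDiffBoundary 2 Ω) :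
    ∃ (n : ℕ) (A : BoundaryAtlas (Fin n) (closure Ω)), A.support = frontier Ω := by
  refine exists_boundaryAtlas_support_eq
    (hbd.isCompact_closure.of_isClosed_subset isClosed_frontier frontier_subset_closure)
    (fun x => exists_mem_frontier_dist_eq_infDist_closure hop hne) fun p hp => ?_
  obtain ⟨U, f, hpU, hf⟩ := hsm p hp
  exact hf.exists_boundaryPatch hop hp hpU

lemma isUnionOfContinua_closure_iUnion {X : Type*} [PseudoMetricSpace X] [ProperSpace X] {N : ℕ}
    {S : Fin N → Set X} (hbd : Bornology.IsBounded (⋃ i, S i))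
    (hconn : ∀ i, IsPreconnected (S i)) : IsUnionOfContinua N (closure (⋃ i, S i)) :=
  ⟨fun i => closure (S i), fun i => (hbd.subset (subset_iUnion S i)).isCompact_closure,
    fun i => (hconn i).closure, closure_iUnion_of_finite S⟩

end ParallelSets

theorem statement10_general (Ω : Set E2) (hop : IsOpen Ω) (hbd : Bornology.IsBounded Ω)
    (hne : Ω.Nonempty) (hsm : HasContDiffBoundary 2 Ω) (N : ℕ) (Ωc : Fin N → Set E2)
    (hcconn : ∀ i, IsPreconnected (Ωc i)) (hunion : Ω = ⋃ i, Ωc i) :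
    ∀ᵐ r ∂(volume.restrict (Ioi (0 : ℝ))),
      HasDerivAt
        (fun ρ : ℝ => (volume {x ∈ (closure Ω)ᶜ | Metric.infDist x (frontier Ω) < ρ}).toReal)
        ((μH[1] {x ∈ (closure Ω)ᶜ | Metric.infDist x (frontier Ω) = r}).toReal) r ∧
      (μH[1] {x ∈ (closure Ω)ᶜ | Metric.infDist x (frontier Ω) = r}).toReal ≤
        (μH[1] (frontier Ω)).toReal + 2 * π * N * r := by
  have hcontinua : IsUnionOfContinua N (closure Ω) := by
    subst hunion
    exact isUnionOfContinua_closure_iUnion hbd hcconn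
  obtain ⟨n, A, hA⟩ := exists_boundaryAtlas_support_eq_frontier hop hbd hne hsm
  have hcollar : ∀ ρ : ℝ, {x ∈ (closure Ω)ᶜ | Metric.infDist x (frontier Ω) < ρ} =
      {x | Metric.infDist x (closure Ω) ∈ Ioo 0 ρ} := fun ρ =>
    setOf_notMem_closure_and_infDist_frontier_mem hop hne (Iio ρ)
  have hlevel : ∀ r : ℝ, 0 < r → {x ∈ (closure Ω)ᶜ | Metric.infDist x (frontier Ω) = r} =
      {x | Metric.infDist x (closure Ω) = r} := fun r hr =>
    (setOf_notMem_closure_and_infDist_frontier_mem hop hne {r}).trans <| by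
      rw [inter_eq_right.2 (singleton_subset_iff.2 (mem_Ioi.2 hr))]
      rfl
  rw [ae_restrict_iff' measurableSet_Ioi]
  filter_upwards [A.ae_hasDerivAt_and_hausdorffMeasure_le hcontinua hne.closure] with r h hr
  simpa only [hcollar, hlevel r hr, hA] using h hr

/-- Let `Ω ⊂ ℝ²` be a smooth bounded open set consisting of `N` disjoint simply connected
components, and let `A(r)` be the area of `{x ∈ Ω^ext : dist(x, ∂Ω) < r}`. Then for almost
every `r > 0`, `A'(r) = |{x ∈ Ω^ext : dist(x, ∂Ω) = r}|` (1-dimensional Hausdorff measure)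
and `A'(r) ≤ |∂Ω| + 2πNr`. -/
theorem statement10 (Ω : Set (EuclideanSpace ℝ (Fin 2)))
    (hop : IsOpen Ω) (hbd : Bornology.IsBounded Ω) (hne : Ω.Nonempty)
    (hsm : HasSmoothBoundary Ω)
    (N : ℕ) (hN : 0 < N) (Ωc : Fin N → Set (EuclideanSpace ℝ (Fin 2)))
    (hcop : ∀ i, IsOpen (Ωc i)) (hcne : ∀ i, (Ωc i).Nonempty)
    (hcconn : ∀ i, IsConnected (Ωc i)) (hcsc : ∀ i, SimplyConnectedSpace (Ωc i))
    (hdisj : ∀ i j, i ≠ j → closure (Ωc i) ∩ closure (Ωc j) = ∅)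
    (hunion : Ω = ⋃ i, Ωc i) :
    ∀ᵐ r ∂(volume.restrict (Ioi (0 : ℝ))),
      HasDerivAt
        (fun ρ : ℝ => (volume {x ∈ (closure Ω)ᶜ | Metric.infDist x (frontier Ω) < ρ}).toReal)
        ((μH[1] {x ∈ (closure Ω)ᶜ | Metric.infDist x (frontier Ω) = r}).toReal) r ∧
      (μH[1] {x ∈ (closure Ω)ᶜ | Metric.infDist x (frontier Ω) = r}).toReal ≤
        (μH[1] (frontier Ω)).toReal + 2 * π * N * r := by
  refine statement10_general Ω hop hbd hne (fun x hx => ?_) N Ωc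
    (fun i => (hcconn i).isPreconnected) hunion
  obtain ⟨U, f, hU, hxU, hf, hf', hΩU⟩ := hsm x hx
  exact ⟨U, f, hxU, hU, hf.of_le (by norm_cast), hf', hΩU⟩
end
end
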